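/- arXiv:1901.00587 — 5 statements merged into one kernel-verified Lean document; each statement's English description precedes it below -/
import Mathlib

section
/- Let n ≥ 3. Then every matrix in SL_n(ℤ) is a product of at most (3n² − n)/2 + 36 elementary matrices. In particular, SL_n(ℤ) is boundedly generated by the elementary matrices. -/
/-!
The bound follows the method of Carter and Keller.

*From `SL_n` to `SL_2`.* A column of a matrix in `SL_n(ℤ)`, `n ≥ 3`, is unimodular, and `ℤ`
satisfies the stable range condition: one addition makes the entries of the column other than the
first generate the unit ideal (`exists_unimodular_tail`). Then `n - 1` additions turn the first
entry into `1`, and `2 (n - 1)` more clear its column and its row, so `3 n - 2` transvections lead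
from `SL_n` to `SL_{n-1}` (`exists_reduction`). Down to `n = 2` this costs `(3 n² - n) / 2 - 5`, and
it remains to write a matrix `1 ⊕ A` with `A = (a b; c d)` in `SL_2(ℤ)` by at most 41 transvections
of `SL_3(ℤ)`; in fact 40 suffice (`elemProd_fin_two`).

*Powers.* By Cayley and Hamilton `A ^ k = x A + y` with `y² ≡ 1 (mod x)`, and the diagonal
entry `x a + y` is congruent to `a ^ k` modulo `b`. Write `x = x₁ x₂` with `y ≡ 1 (mod x₁)` and
`y ≡ -1 (mod x₂)`. A factor `s` of the upper right entry of a `2 × 2` block can be moved to the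
lower left entry by 6 transvections of `SL_3` when the upper left entry is `±1` modulo `s`
(`swindle_one`, `swindle_neg`). Moving `x₁` and `x₂` leaves a block whose first row is
`(x a + y, b)` up to signs; if `a ^ k ≡ ±1 (mod b)`, it is a sign matrix up to 3 transvections,
and a sign matrix of determinant one costs 4. So `A ^ k` costs at most 19 (`elemProd_pow`).

*Two coprime exponents.* By Dirichlet's theorem on primes in arithmetic progressions, one addition
turns `b` into a prime `p = 2 m + 1`, and a second one turns `c` into a prime `q = 2 l + 1`
with `q ≡ -1 (mod p - 1)`; the congruences are compatible because `p c ≡ -1 (mod a)`. Then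
`m ∣ l + 1`, so Euler's criterion gives `a ^ (l + 1) ≡ ±1 (mod p)` and `a ^ l ≡ ±1 (mod q)`. The
previous step applies to `A ^ (l + 1)` and to the transpose of `A ^ l`, and
`A = (A ^ l)⁻¹ A ^ (l + 1)` costs at most `2 + 2 * 19 = 40`.
-/

/-! ### Products of boundedly many transvections -/

/-- `ElemProd k M`: the matrix `M` is a product of at most `k` transvections. -/
inductive ElemProd {n : ℕ} : ℕ → Matrix (Fin n) (Fin n) ℤ → Prop
  | one (k : ℕ) : ElemProd k 1
  | step {k : ℕ} {M : Matrix (Fin n) (Fin n) ℤ} (i j : Fin n) (c : ℤ) (hij : i ≠ j)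
      (h : ElemProd k M) : ElemProd (k + 1) (Matrix.transvection i j c * M)

namespace ElemProd

variable {n : ℕ} {k l : ℕ} {M N : Matrix (Fin n) (Fin n) ℤ}

lemma mono (h : ElemProd k M) (hkl : k ≤ l) : ElemProd l M := by
  induction h generalizing l with
  | one k => exact one l
  | step i j c hij _ ih =>
    obtain ⟨l, rfl⟩ : ∃ l', l = l' + 1 := ⟨l - 1, by omega⟩
    exact step i j c hij (ih (by omega))

lemma mul (hM : ElemProd k M) (hN : ElemProd l N) : ElemProd (k + l) (M * N) := by
  induction hM with
  | one k => rw [one_mul]; exact hN.mono (by omega)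
  | @step k M i j c hij _ ih =>
    rw [mul_assoc, show k + 1 + l = k + l + 1 by omega]
    exact step i j c hij ih

lemma transv (i j : Fin n) (c : ℤ) (hij : i ≠ j) : ElemProd 1 (Matrix.transvection i j c) := by
  simpa using step i j c hij (one 0)

lemma transpose (hM : ElemProd k M) : ElemProd k M.transpose := by
  induction hM with
  | one k => rw [Matrix.transpose_one]; exact one k
  | @step k M i j c hij _ ih =>
    rw [Matrix.transpose_mul]
    refine ih.mul ?_
    have : (Matrix.transvection i j c).transpose = Matrix.transvection j i c := by
      simp [Matrix.transvection, Matrix.transpose_add, Matrix.transpose_single]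
    rw [this]
    exact transv j i c hij.symm

lemma exists_inv (hM : ElemProd k M) : ∃ N, ElemProd k N ∧ N * M = 1 := by
  induction hM with
  | one k => exact ⟨1, one k, mul_one 1⟩
  | @step k M i j c hij _ ih =>
    obtain ⟨N, hN, hNM⟩ := ih
    refine ⟨N * Matrix.transvection i j (-c), hN.mul (transv i j _ hij), ?_⟩
    rw [mul_assoc, ← mul_assoc (Matrix.transvection i j (-c)),
      Matrix.transvection_mul_transvection_same i j hij, neg_add_cancel,
      Matrix.transvection_zero, one_mul, hNM]

/-- The inverse of a product of `k` transvections is such a product. -/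
lemma of_mul_eq_one (hM : ElemProd k M) (h : M * N = 1) : ElemProd k N := by
  obtain ⟨N', hN', h'⟩ := hM.exists_inv
  rwa [← left_inv_eq_right_inv h' h]

lemma of_mul_left (hM : ElemProd k M) (h : ElemProd l (M * N)) : ElemProd (k + l) N := by
  obtain ⟨M', hM', h'⟩ := hM.exists_inv
  have := hM'.mul h
  rwa [← mul_assoc, h', one_mul] at this

lemma of_mul_right (hM : ElemProd k M) (h : ElemProd l (N * M)) : ElemProd (k + l) N := by
  obtain ⟨M', hM', h'⟩ := hM.exists_inv
  have := h.mul hM'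
  rw [mul_assoc, mul_eq_one_comm.mp h', mul_one] at this
  exact this.mono (by omega)

lemma exists_list {M : Matrix.SpecialLinearGroup (Fin n) ℤ}
    (hM : ElemProd k (M : Matrix (Fin n) (Fin n) ℤ)) :
    ∃ L : List (Matrix.SpecialLinearGroup (Fin n) ℤ),
      L.length ≤ k ∧ (∀ E ∈ L, ∃ (i j : Fin n) (c : ℤ), i ≠ j ∧
        (E : Matrix (Fin n) (Fin n) ℤ) = Matrix.transvection i j c) ∧ L.prod = M := by
  generalize hA : (M : Matrix (Fin n) (Fin n) ℤ) = A at hM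
  induction hM generalizing M with
  | one k =>
    refine ⟨[], by simp, by simp, ?_⟩
    apply Subtype.ext
    rw [hA]
    simp
  | @step k A i j c hij _ ih =>
    let T (c : ℤ) : Matrix.SpecialLinearGroup (Fin n) ℤ :=
      ⟨Matrix.transvection i j c, Matrix.det_transvection_of_ne i j hij c⟩
    have hT : T (-c) * T c = 1 := by
      apply Subtype.ext
      change Matrix.transvection i j (-c) * Matrix.transvection i j c = 1
      rw [Matrix.transvection_mul_transvection_same i j hij, neg_add_cancel,
        Matrix.transvection_zero]
    obtain ⟨L, hL, hE, hP⟩ := @ih (T (-c) * M) (by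
      rw [Matrix.SpecialLinearGroup.coe_mul, hA, ← mul_assoc]
      change Matrix.transvection i j (-c) * Matrix.transvection i j c * A = A
      rw [Matrix.transvection_mul_transvection_same i j hij, neg_add_cancel,
        Matrix.transvection_zero, one_mul])
    refine ⟨T c :: L, by simpa using hL, ?_, ?_⟩
    · intro E hE'
      rcases List.mem_cons.mp hE' with rfl | h
      · exact ⟨i, j, c, hij, rfl⟩
      · exact hE E h
    · rw [List.prod_cons, hP, ← mul_assoc, mul_eq_one_comm.mp hT, one_mul]

end ElemProd

/-! ### Moving factors of the off-diagonal entries in `SL_3` -/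

lemma transv01 (c : ℤ) : Matrix.transvection (0 : Fin 3) 1 c = !![1, c, 0; 0, 1, 0; 0, 0, 1] := by
  ext i j; fin_cases i <;> fin_cases j <;> simp [Matrix.transvection]
lemma transv02 (c : ℤ) : Matrix.transvection (0 : Fin 3) 2 c = !![1, 0, c; 0, 1, 0; 0, 0, 1] := by
  ext i j; fin_cases i <;> fin_cases j <;> simp [Matrix.transvection]
lemma transv12 (c : ℤ) : Matrix.transvection (1 : Fin 3) 2 c = !![1, 0, 0; 0, 1, c; 0, 0, 1] := by
  ext i j; fin_cases i <;> fin_cases j <;> simp [Matrix.transvection]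
lemma transv10 (c : ℤ) : Matrix.transvection (1 : Fin 3) 0 c = !![1, 0, 0; c, 1, 0; 0, 0, 1] := by
  ext i j; fin_cases i <;> fin_cases j <;> simp [Matrix.transvection]
lemma transv20 (c : ℤ) : Matrix.transvection (2 : Fin 3) 0 c = !![1, 0, 0; 0, 1, 0; c, 0, 1] := by
  ext i j; fin_cases i <;> fin_cases j <;> simp [Matrix.transvection]
lemma transv21 (c : ℤ) : Matrix.transvection (2 : Fin 3) 1 c = !![1, 0, 0; 0, 1, 0; 0, c, 1] := by
  ext i j; fin_cases i <;> fin_cases j <;> simp [Matrix.transvection]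

/-- Moves the factor `s` of the upper right entry of a `2 × 2` block across the diagonal. -/
lemma swindle_one {k : ℕ} {s t β γ δ : ℤ}
    (h : ElemProd k !![1 + s * t, 0, -β; 0, 1, 0; -(s * γ), 0, δ]) :
    ElemProd (k + 6) !![1, 0, 0; 0, 1 + s * t, s * β; 0, γ, δ] := by
  have e : (!![1, 0, 0; 0, 1 + s * t, s * β; 0, γ, δ] : Matrix (Fin 3) (Fin 3) ℤ) =
      Matrix.transvection 1 0 (-s) * Matrix.transvection 2 1 γ * Matrix.transvection 0 1 (-t) *
      !![1 + s * t, 0, -β; 0, 1, 0; -(s * γ), 0, δ] *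
      (Matrix.transvection 1 0 s * Matrix.transvection 0 2 β * Matrix.transvection 0 1 t) := by
    simp only [transv01, transv02, transv10, transv21]
    ext i j; fin_cases i <;> fin_cases j <;> simp [Matrix.mul_apply, Fin.sum_univ_three] <;> ring
  rw [e]
  have T := fun (i j : Fin 3) (hij : i ≠ j) (c : ℤ) => ElemProd.transv i j c hij
  refine ((((T 1 0 (by decide) _).mul (T 2 1 (by decide) _)).mul (T 0 1 (by decide) _)).mul h).mul
    (((T 1 0 (by decide) _).mul (T 0 2 (by decide) _)).mul (T 0 1 (by decide) _)) |>.mono (by omega)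

/-- The variant of `swindle_one` for a diagonal entry congruent to `-1`, with the block in rows
`0, 2`. -/
lemma swindle_neg {k : ℕ} {s t β γ δ : ℤ}
    (h : ElemProd k !![-1, 0, 0; 0, 1 - s * t, -β; 0, s * γ, δ]) :
    ElemProd (k + 6) !![-1 + s * t, 0, s * β; 0, 1, 0; γ, 0, δ] := by
  have e : (!![-1 + s * t, 0, s * β; 0, 1, 0; γ, 0, δ] : Matrix (Fin 3) (Fin 3) ℤ) =
      Matrix.transvection 0 1 (-s) * Matrix.transvection 2 0 (-γ) * Matrix.transvection 1 0 t *
      !![-1, 0, 0; 0, 1 - s * t, -β; 0, s * γ, δ] *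
      (Matrix.transvection 0 1 (-s) * Matrix.transvection 1 2 β * Matrix.transvection 1 0 t) := by
    simp only [transv01, transv12, transv10, transv20]
    ext i j; fin_cases i <;> fin_cases j <;> simp [Matrix.mul_apply, Fin.sum_univ_three] <;> ring
  rw [e]
  have T := fun (i j : Fin 3) (hij : i ≠ j) (c : ℤ) => ElemProd.transv i j c hij
  refine ((((T 0 1 (by decide) _).mul (T 2 0 (by decide) _)).mul (T 1 0 (by decide) _)).mul h).mul
    (((T 0 1 (by decide) _).mul (T 1 2 (by decide) _)).mul (T 1 0 (by decide) _)) |>.mono (by omega)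

/-- A sign matrix `diag(-1, θ, -θ)` is the square of a product of two transvections. -/
lemma elemProd_sign {θ : ℤ} (hθ : θ = 1 ∨ θ = -1) :
    ElemProd 4 !![-1, 0, 0; 0, θ, 0; 0, 0, -θ] := by
  have T := fun (i j : Fin 3) (hij : i ≠ j) (c : ℤ) => ElemProd.transv i j c hij
  rcases hθ with rfl | rfl
  · have e : (!![-1, 0, 0; 0, 1, 0; 0, 0, -1] : Matrix (Fin 3) (Fin 3) ℤ) =
        Matrix.transvection 2 0 (-1) * Matrix.transvection 0 2 2 *
        (Matrix.transvection 2 0 (-1) * Matrix.transvection 0 2 2) := by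
      simp only [transv20, transv02]
      decide
    rw [e]
    exact ((T 2 0 (by decide) _).mul (T 0 2 (by decide) _)).mul
      ((T 2 0 (by decide) _).mul (T 0 2 (by decide) _))
  · have e : (!![-1, 0, 0; 0, -1, 0; 0, 0, - -1] : Matrix (Fin 3) (Fin 3) ℤ) =
        Matrix.transvection 1 0 (-1) * Matrix.transvection 0 1 2 *
        (Matrix.transvection 1 0 (-1) * Matrix.transvection 0 1 2) := by
      simp only [transv10, transv01]
      decide
    rw [e]
    exact ((T 1 0 (by decide) _).mul (T 0 1 (by decide) _)).mul
      ((T 1 0 (by decide) _).mul (T 0 1 (by decide) _))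

/-- A block whose first diagonal entry is `±1` modulo the entry to its right. -/
lemma elemProd_of_congr {θ b u γ δ : ℤ} (hθ : θ = 1 ∨ θ = -1)
    (hdet : (θ + b * u) * δ - b * γ = -1) :
    ElemProd 7 !![-1, 0, 0; 0, θ + b * u, b; 0, γ, δ] := by
  have T := fun (i j : Fin 3) (hij : i ≠ j) (c : ℤ) => ElemProd.transv i j c hij
  have e : (!![-1, 0, 0; 0, θ + b * u, b; 0, γ, δ] : Matrix (Fin 3) (Fin 3) ℤ) =
      Matrix.transvection 2 1 (θ * (γ - δ * u)) * !![-1, 0, 0; 0, θ, 0; 0, 0, -θ] *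
      (Matrix.transvection 1 2 (θ * b) * Matrix.transvection 2 1 u) := by
    simp only [transv21, transv12]
    rcases hθ with rfl | rfl <;>
    ext i j <;> fin_cases i <;> fin_cases j <;> simp [Matrix.mul_apply, Fin.sum_univ_three] <;>
      first | ring1 | linear_combination hdet | linear_combination -hdet |
        linear_combination -u * hdet | linear_combination u * hdet
  rw [e]
  exact ((T 2 1 (by decide) _).mul (elemProd_sign hθ)).mul
    ((T 1 2 (by decide) _).mul (T 2 1 (by decide) _))

/-! ### Powers of a matrix of `SL_2` -/

/-- Coordinates of a power of `A` in the basis `A, 1`, by the theorem of Cayley and Hamilton. -/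
lemma exists_pow_eq {a b c d : ℤ} (hdet : a * d - b * c = 1) (k : ℕ) :
    ∃ x y : ℤ, (!![a, b; c, d] : Matrix (Fin 2) (Fin 2) ℤ) ^ k =
        !![x * a + y, x * b; x * c, x * d + y] ∧
      y ^ 2 + x * y * (a + d) + x ^ 2 = 1 ∧ b ∣ x * a + y - a ^ k := by
  induction k with
  | zero => exact ⟨0, 1, by simp [Matrix.one_fin_two], by ring, by simp⟩
  | succ k ih =>
    obtain ⟨x, y, hp, hq, u, hu⟩ := ih
    refine ⟨x * (a + d) + y, -x, ?_, by linear_combination hq, u * a + x * c, ?_⟩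
    · rw [pow_succ, hp, Matrix.mul_fin_two]
      ext i j
      fin_cases i <;> fin_cases j <;> simp
      · linear_combination -x * hdet
      · ring
      · ring
      · linear_combination -x * hdet
    · rw [pow_succ]
      linear_combination a * hu + x * hdet

/-- If `a ^ k ≡ ±1 (mod b)` then the `k`-th power of `A` costs at most 19 transvections. -/
lemma elemProd_pow {a b c d : ℤ} (hdet : a * d - b * c = 1) (k : ℕ) {ε : ℤ}
    (hε : ε = 1 ∨ ε = -1) (hk : b ∣ a ^ k - ε) {p q r s : ℤ}
    (hpow : (!![a, b; c, d] : Matrix (Fin 2) (Fin 2) ℤ) ^ k = !![p, q; r, s]) :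
    ElemProd 19 !![1, 0, 0; 0, p, q; 0, r, s] := by
  obtain ⟨x, y, hA, hxy, hb⟩ := exists_pow_eq hdet k
  rw [hA] at hpow
  have h00 := congrFun (congrFun hpow 0) 0
  have h01 := congrFun (congrFun hpow 0) 1
  have h10 := congrFun (congrFun hpow 1) 0
  have h11 := congrFun (congrFun hpow 1) 1
  simp only [Matrix.of_apply, Matrix.cons_val', Matrix.cons_val_zero, Matrix.cons_val_one,
    Matrix.cons_val_fin_one] at h00 h01 h10 h11
  subst h00 h01 h10 h11
  -- The determinant condition makes `y ^ 2 ≡ 1 (mod x)`, which splits `x` into two factors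
  -- modulo which `y` is `1` and `-1` respectively.
  obtain ⟨x₁, x₂, ⟨t₁, h₁⟩, ⟨t₂, h₂⟩, rfl⟩ := exists_dvd_and_dvd_of_dvd_mul
    (show x ∣ (y - 1) * (y + 1) from ⟨-(y * (a + d)) - x, by linear_combination hxy⟩)
  obtain ⟨u, hu⟩ : b ∣ x₁ * x₂ * a + y - ε := by
    have := dvd_add hb hk
    rwa [sub_add_sub_cancel] at this
  have e₁ : x₁ * x₂ * a + y = 1 + x₁ * (x₂ * a + t₁) := by linear_combination h₁
  have e₂ : x₁ * x₂ * a + y = -1 + x₂ * (x₁ * a + t₂) := by linear_combination h₂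
  have e₃ : 1 - x₂ * (x₁ * a + t₂) = -ε + b * -u := by linear_combination e₂ - hu
  have key := elemProd_of_congr (θ := -ε) (b := b) (u := -u) (γ := x₂ * -(x₁ * (x₁ * x₂ * c)))
    (δ := x₁ * x₂ * d + y) (by rcases hε with rfl | rfl <;> simp) (by
      rw [← e₃]
      linear_combination (x₁ * x₂ * d + y) * e₂ - hxy - (x₁ * x₂) ^ 2 * hdet)
  rw [← e₃] at key
  have k₁ := swindle_neg (s := x₂) (t := x₁ * a + t₂) (β := -b) (γ := -(x₁ * (x₁ * x₂ * c)))
    (δ := x₁ * x₂ * d + y) (by rw [neg_neg]; exact key)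
  rw [← e₂, e₁] at k₁
  have k₂ := swindle_one (s := x₁) (t := x₂ * a + t₁) (β := x₂ * b) (γ := x₁ * x₂ * c)
    (δ := x₁ * x₂ * d + y) (by rw [← mul_neg]; exact k₁)
  rw [← e₁, ← mul_assoc] at k₂
  exact k₂

/-! ### Stabilization -/

/-- The block matrix `1 ⊕ M`. -/
def embed {n : ℕ} (M : Matrix (Fin n) (Fin n) ℤ) : Matrix (Fin (n + 1)) (Fin (n + 1)) ℤ :=
  Matrix.of fun i j => Fin.cases (Fin.cases 1 (fun _ => 0) j)
    (fun i' => Fin.cases 0 (fun j' => M i' j') j) i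

section embed

variable {n : ℕ} (M N : Matrix (Fin n) (Fin n) ℤ)

@[simp] lemma embed_zero_zero : embed M 0 0 = 1 := rfl
@[simp] lemma embed_zero_succ (j : Fin n) : embed M 0 j.succ = 0 := rfl
@[simp] lemma embed_succ_zero (i : Fin n) : embed M i.succ 0 = 0 := rfl
@[simp] lemma embed_succ_succ (i j : Fin n) : embed M i.succ j.succ = M i j := rfl

lemma embed_one : embed (1 : Matrix (Fin n) (Fin n) ℤ) = 1 := by
  ext i j
  cases i using Fin.cases <;> cases j using Fin.cases <;>
    simp [Matrix.one_apply, Fin.succ_ne_zero, (Fin.succ_ne_zero _).symm]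

lemma embed_mul : embed (M * N) = embed M * embed N := by
  ext i j
  cases i using Fin.cases <;> cases j using Fin.cases <;>
    simp [Matrix.mul_apply, Fin.sum_univ_succ]

lemma embed_transvection (i j : Fin n) (c : ℤ) :
    embed (Matrix.transvection i j c) = Matrix.transvection i.succ j.succ c := by
  ext i' j'
  cases i' using Fin.cases <;> cases j' using Fin.cases <;>
    simp [Matrix.transvection, Matrix.one_apply, Matrix.single_apply, Fin.succ_ne_zero,
      (Fin.succ_ne_zero _).symm]

lemma det_embed : (embed M).det = M.det := by
  rw [Matrix.det_succ_row_zero, Fin.sum_univ_succ]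
  simp only [embed_zero_succ, mul_zero, zero_mul, Finset.sum_const_zero, add_zero,
    embed_zero_zero]
  simp
  rfl

lemma ElemProd.embed {k : ℕ} {M : Matrix (Fin n) (Fin n) ℤ} (h : ElemProd k M) :
    ElemProd k (embed M) := by
  induction h with
  | one k => rw [embed_one]; exact one k
  | @step k M i j c hij _ ih =>
    rw [embed_mul, embed_transvection]
    exact step _ _ c (by simpa using hij) ih

lemma ElemProd.det_eq_one {k : ℕ} {M : Matrix (Fin n) (Fin n) ℤ} (h : ElemProd k M) :
    M.det = 1 := by
  induction h with
  | one k => exact Matrix.det_one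
  | @step k M i j c hij _ ih => rw [Matrix.det_mul, ih, Matrix.det_transvection_of_ne i j hij, one_mul]

end embed

lemma embed_fin_two (a b c d : ℤ) :
    embed !![a, b; c, d] = !![1, 0, 0; 0, a, b; 0, c, d] := by
  ext i j
  fin_cases i <;> fin_cases j <;> rfl

/-! ### Matrices of `SL_2` inside `SL_3` -/

/-- Euler's criterion modulo an odd prime `2 m + 1`. -/
lemma exists_sign_dvd_pow_sub {m : ℕ} (hp : (2 * m + 1).Prime) {a : ℤ}
    (ha : IsCoprime a ((2 * m + 1 : ℕ) : ℤ)) (j : ℕ) :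
    ∃ ε : ℤ, (ε = 1 ∨ ε = -1) ∧ ((2 * m + 1 : ℕ) : ℤ) ∣ a ^ (m * j) - ε := by
  have : Fact (2 * m + 1).Prime := ⟨hp⟩
  have h0 : (a : ZMod (2 * m + 1)) ≠ 0 := by
    intro h
    rw [ZMod.intCast_zmod_eq_zero_iff_dvd] at h
    exact (Nat.prime_iff_prime_int.mp hp).not_isUnit (ha.isUnit_of_dvd' h dvd_rfl)
  have h1 := ZMod.pow_div_two_eq_neg_one_or_one (2 * m + 1) h0
  rw [show (2 * m + 1) / 2 = m by omega] at h1
  have h2 : (a : ZMod (2 * m + 1)) ^ (m * j) = 1 ∨ (a : ZMod (2 * m + 1)) ^ (m * j) = -1 := by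
    rw [pow_mul]
    rcases h1 with h | h
    · rw [h, one_pow]; exact Or.inl rfl
    · rw [h]; exact neg_one_pow_eq_or _ j
  rcases h2 with h | h
  · refine ⟨1, Or.inl rfl, ?_⟩
    rw [← ZMod.intCast_zmod_eq_zero_iff_dvd]
    push_cast
    rw [h, sub_self]
  · refine ⟨-1, Or.inr rfl, ?_⟩
    rw [← ZMod.intCast_zmod_eq_zero_iff_dvd]
    push_cast
    rw [h, sub_self]

/-- The case of off-diagonal entries `2 m + 1` and `2 l + 1` that are prime, with `m ∣ l + 1`.
Then `A = (A ^ l)⁻¹ * A ^ (l + 1)`, where `A ^ (l + 1)` is diagonal up to sign modulo the upper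
right entry and `A ^ l` modulo the lower left one. -/
lemma elemProd_of_primes {a d : ℤ} {m l j : ℕ} (hp : (2 * m + 1).Prime) (hq : (2 * l + 1).Prime)
    (hml : l + 1 = m * j)
    (hdet : a * d - ((2 * m + 1 : ℕ) : ℤ) * ((2 * l + 1 : ℕ) : ℤ) = 1) :
    ElemProd 38 (embed !![a, ((2 * m + 1 : ℕ) : ℤ); ((2 * l + 1 : ℕ) : ℤ), d]) := by
  generalize hb : ((2 * m + 1 : ℕ) : ℤ) = b at *
  generalize hc : ((2 * l + 1 : ℕ) : ℤ) = c at *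
  obtain ⟨ε₁, hε₁, h₁⟩ := exists_sign_dvd_pow_sub hp (a := a)
    (by rw [hb]; exact ⟨d, -c, by linear_combination hdet⟩) j
  obtain ⟨ε₂, hε₂, h₂⟩ := exists_sign_dvd_pow_sub hq (a := a)
    (by rw [hc]; exact ⟨d, -b, by linear_combination hdet⟩) 1
  rw [hb, ← hml] at h₁
  rw [hc, mul_one] at h₂
  have k₁ := elemProd_pow hdet (l + 1) hε₁ h₁ (Matrix.eta_fin_two _)
  have hT : (!![a, c; b, d] : Matrix (Fin 2) (Fin 2) ℤ) ^ l = (!![a, b; c, d] ^ l).transpose := by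
    rw [Matrix.transpose_pow]
    congr 1
    ext i j; fin_cases i <;> fin_cases j <;> rfl
  have k₂ := (elemProd_pow (a := a) (b := c) (c := b) (d := d) (by linear_combination hdet) l
    hε₂ h₂ (hT.trans (Matrix.eta_fin_two _))).transpose
  have k₂' : ElemProd 19 (embed (!![a, b; c, d] ^ l)) := by
    rw [Matrix.eta_fin_two (!![a, b; c, d] ^ l), embed_fin_two]
    convert k₂ using 1
    ext i j; fin_cases i <;> fin_cases j <;> rfl
  refine k₂'.of_mul_left (l := 19) ?_
  rw [← embed_mul, ← pow_succ, Matrix.eta_fin_two (!![a, b; c, d] ^ (l + 1)), embed_fin_two]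
  exact k₁

/-- **Dirichlet's theorem** for an integer modulus, in additive form. -/
lemma exists_prime_gt_eq_add_mul {a b : ℤ} (hb : b ≠ 0) (h : IsCoprime a b) (N : ℕ) :
    ∃ p : ℕ, N < p ∧ p.Prime ∧ ∃ t : ℤ, (p : ℤ) = a + b * t := by
  obtain ⟨p, hN, hp, hmod⟩ := Nat.forall_exists_prime_gt_and_zmodEq N (q := b.natAbs) (a := a)
    (by simpa using hb) (by rcases Int.natAbs_eq b with e | e <;> rw [e] at h <;> simpa [IsCoprime.neg_right_iff] using h)
  obtain ⟨t, ht⟩ := Int.natAbs_dvd.mp hmod.symm.dvd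
  exact ⟨p, hN, hp, t, by linear_combination ht⟩

/-- A matrix of `SL_2(ℤ)`, stabilized to `SL_3(ℤ)`, costs at most 40 transvections. -/
lemma elemProd_fin_two {a b c d : ℤ} (hdet : a * d - b * c = 1) :
    ElemProd 40 (embed !![a, b; c, d]) := by
  have T := fun (i j : Fin 3) (hij : i ≠ j) (c : ℤ) => ElemProd.transv i j c hij
  by_cases ha : a = 0
  · subst ha
    have hb : b ^ 2 = 1 := by
      have : IsUnit b := IsUnit.of_mul_eq_one (-c) (by linear_combination hdet)
      rcases Int.isUnit_iff.mp this with rfl | rfl <;> norm_num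
    have e : (!![1, 0, 0; 0, 0, b; 0, c, d] : Matrix (Fin 3) (Fin 3) ℤ) = Matrix.transvection 2 1 (c + b * d) *
        Matrix.transvection 1 2 b * Matrix.transvection 2 1 (-b) := by
      simp only [transv21, transv12]
      ext i j
      fin_cases i <;> fin_cases j <;> simp [Matrix.mul_apply, Fin.sum_univ_three]
      · linear_combination hb
      · linear_combination -b * hdet + d * b * hb
      · linear_combination hdet - d * hb
    rw [embed_fin_two]
    change @ElemProd 3 40 !![1, 0, 0; 0, 0, b; 0, c, d]
    rw [e]
    exact (((T 2 1 (by decide) _).mul (T 1 2 (by decide) _)).mul (T 2 1 (by decide) _)).mono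
      (by norm_num)
  -- Adding a multiple of the first column makes the upper right entry a prime `p`.
  obtain ⟨p, hp2, hp, t, ht⟩ := exists_prime_gt_eq_add_mul ha
    (show IsCoprime b a from ⟨-c, d, by linear_combination hdet⟩) 2
  have hp' : (p : ℤ) - 1 ≠ 0 := by omega
  have hdet' : a * (d + c * t) - p * c = 1 := by rw [ht]; linear_combination hdet
  -- Since `p * c ≡ -1 (mod a)`, the congruences `z ≡ c (mod a)` and `z ≡ -1 (mod p - 1)` are
  -- compatible.
  obtain ⟨w, hw⟩ : (Int.gcd a (p - 1) : ℤ) ∣ c + 1 := by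
    have h₁ : (Int.gcd a (p - 1) : ℤ) ∣ a * (d + c * t) := Dvd.dvd.mul_right (Int.gcd_dvd_left ..) _
    have h₂ : (Int.gcd a (p - 1) : ℤ) ∣ (p - 1) * c := Dvd.dvd.mul_right (Int.gcd_dvd_right ..) _
    have := dvd_sub h₁ h₂
    rwa [show a * (d + c * t) - (p - 1) * c = c + 1 by linear_combination hdet'] at this
  have hbez := Int.gcd_eq_gcd_ab a (p - 1)
  set u := Int.gcdA a (p - 1)
  set v := Int.gcdB a (p - 1)
  obtain ⟨q, hq2, hq, s, hs⟩ := exists_prime_gt_eq_add_mul (a := c - a * u * w)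
    (mul_ne_zero ha hp') (IsCoprime.mul_right
      (show IsCoprime (c - a * u * w) a from
        ⟨-p, d + c * t - u * w * p, by linear_combination hdet'⟩)
      ⟨-1, v * w, by rw [hbez] at hw; linear_combination -hw⟩) 2
  obtain ⟨m, rfl⟩ : ∃ m, p = 2 * m + 1 := (hp.eq_two_or_odd'.resolve_left (by omega))
  obtain ⟨l, rfl⟩ : ∃ l, q = 2 * l + 1 := (hq.eq_two_or_odd'.resolve_left (by omega))
  obtain ⟨j, hj⟩ : m ∣ l + 1 := by
    have : (m : ℤ) ∣ ((l + 1 : ℕ) : ℤ) := by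
      refine ⟨v * w + a * s, ?_⟩
      rw [hbez] at hw
      push_cast at hs hw ⊢
      have : (2 : ℤ) * (l + 1) = 2 * (m * (v * w + a * s)) := by linear_combination hs + hw
      linarith
    exact_mod_cast this
  set r := -(u * w) + ((2 * m + 1 : ℕ) - 1) * s with hr
  have hqr : ((2 * l + 1 : ℕ) : ℤ) = c + r * a := by rw [hs, hr]; ring
  have key := elemProd_of_primes (a := a) (d := d + c * t + r * (2 * m + 1 : ℕ)) hp hq hj
    (by rw [hqr]; linear_combination hdet')
  rw [embed_fin_two] at key ⊢
  change @ElemProd 3 38 _ at key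
  have e : (!![1, 0, 0; 0, a, ((2 * m + 1 : ℕ) : ℤ); 0, ((2 * l + 1 : ℕ) : ℤ),
      d + c * t + r * (2 * m + 1 : ℕ)] : Matrix (Fin 3) (Fin 3) ℤ) =
      Matrix.transvection 2 1 r *
        (!![1, 0, 0; 0, a, b; 0, c, d] * Matrix.transvection 1 2 t) := by
    simp only [transv21, transv12, hqr, ht]
    ext i j
    fin_cases i <;> fin_cases j <;> simp [Matrix.mul_apply, Fin.sum_univ_three] <;> ring
  rw [e] at key
  exact (ElemProd.of_mul_right (T 1 2 (by decide) t)
    (ElemProd.of_mul_left (T 2 1 (by decide) r) key)).mono (by norm_num)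

/-! ### Reduction from `SL_n` to `SL_2` -/

/-- One addition makes a multiple shift coprime to `g`: the stable range condition for `ℤ`. -/
lemma exists_isCoprime_add_mul {x y g α β γ : ℤ} (hg : g ≠ 0) (h : α * x + β * y + γ * g = 1) :
    ∃ t, IsCoprime (x + t * y) g := by
  by_cases hy : y = 0
  · subst hy
    exact ⟨0, α, γ, by linear_combination h⟩
  have he : Int.gcd x y ≠ 0 := by simp [hy]
  obtain ⟨e, x', y', he0, hco, hx, hy'⟩ := Int.exists_gcd_one' (Nat.pos_of_ne_zero he)
  subst hx hy'
  obtain ⟨p, hp, hpp, t, ht⟩ := exists_prime_gt_eq_add_mul (left_ne_zero_of_mul hy)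
    (Int.isCoprime_iff_gcd_eq_one.mpr hco) g.natAbs
  refine ⟨t, ?_⟩
  rw [show x' * e + t * (y' * e) = p * e by rw [ht]; ring]
  refine IsCoprime.mul_left ?_ ⟨α * x' + β * y', γ, by linear_combination h⟩
  rw [Int.isCoprime_iff_gcd_eq_one, Int.gcd_comm]
  have : Nat.Coprime g.natAbs p :=
    Nat.Coprime.symm ((Nat.Prime.coprime_iff_not_dvd hpp).mpr fun hd =>
      absurd (Nat.le_of_dvd (Int.natAbs_pos.mpr hg) hd) (by omega))
  simpa [Int.gcd] using this

/-- A unimodular column `v` of length at least 3 can be shortened: after adding a multiple of its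
first entry to one other entry, all entries but the first still generate the unit ideal. -/
lemma exists_unimodular_tail {n : ℕ} (v w : Fin (n + 3) → ℤ) (h : ∑ i, w i * v i = 1) :
    ∃ (i : Fin (n + 2)) (t : ℤ) (c : Fin (n + 2) → ℤ),
      ∑ k, c k * (v k.succ + if k = i then t * v 0 else 0) = 1 := by
  let u : Fin (n + 1) → ℤ := fun k => v k.succ.succ
  obtain ⟨g, hg⟩ := IsPrincipalIdealRing.principal (Ideal.span (Set.range u))
  have hgu : ∀ k, g ∣ u k := fun k => by
    have : u k ∈ Ideal.span (Set.range u) := Ideal.subset_span ⟨k, rfl⟩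
    rw [hg] at this
    exact Ideal.mem_span_singleton.mp this
  obtain ⟨f, hf⟩ : ∃ f : Fin (n + 1) → ℤ, ∑ k, f k * u k = g := by
    have : g ∈ Ideal.span (Set.range u) := by
      rw [hg]; exact Ideal.mem_span_singleton_self g
    exact Ideal.mem_span_range_iff_exists_fun.mp this
  obtain ⟨γ, hγ⟩ : g ∣ ∑ k : Fin (n + 1), w k.succ.succ * u k :=
    Finset.dvd_sum fun k _ => (hgu k).mul_left _
  rw [Fin.sum_univ_succ, Fin.sum_univ_succ] at h
  change w 0 * v 0 + (w (Fin.succ 0) * v (Fin.succ 0) + ∑ k : Fin (n + 1), w k.succ.succ * u k) = 1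
    at h
  rw [hγ] at h
  by_cases hg0 : g = 0
  · refine ⟨Fin.succ 0, 1, Fin.cons (w (Fin.succ 0)) (Fin.cons (w 0) 0), ?_⟩
    have hu : v (Fin.succ (Fin.succ 0)) = 0 := by
      have := hgu 0
      rwa [hg0, zero_dvd_iff] at this
    rw [Fin.sum_univ_succ, Fin.sum_univ_succ]
    simp only [Fin.cons_zero, Fin.cons_succ, Pi.zero_apply, zero_mul, Finset.sum_const_zero, hu,
      (Fin.succ_ne_zero _).symm, if_true, if_false]
    rw [hg0] at h
    linear_combination h
  · obtain ⟨t, α, β, hab⟩ := exists_isCoprime_add_mul (x := v (Fin.succ 0)) (y := v 0) hg0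
      (α := w (Fin.succ 0)) (β := w 0) (γ := γ) (by linear_combination h)
    refine ⟨0, t, Fin.cons α (fun k => β * f k), ?_⟩
    rw [Fin.sum_univ_succ]
    simp only [Fin.cons_zero, Fin.cons_succ, Fin.succ_ne_zero, if_true, if_false, add_zero,
      mul_assoc, ← Finset.mul_sum]
    rw [← hf] at hab
    exact hab

/-- The matrix obtained from the identity by replacing the first row by `(1, r)`. -/
def rowMatrix {n : ℕ} (r : Fin n → ℤ) : Matrix (Fin (n + 1)) (Fin (n + 1)) ℤ :=
  Matrix.of fun i j => Fin.cases (Fin.cases 1 r j)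
    (fun i' => Fin.cases 0 (fun j' => if i' = j' then 1 else 0) j) i

section rowMatrix

variable {n : ℕ} (r : Fin n → ℤ)

@[simp] lemma rowMatrix_zero_zero : rowMatrix r 0 0 = 1 := rfl
@[simp] lemma rowMatrix_zero_succ (j : Fin n) : rowMatrix r 0 j.succ = r j := rfl
@[simp] lemma rowMatrix_succ_zero (i : Fin n) : rowMatrix r i.succ 0 = 0 := rfl
@[simp] lemma rowMatrix_succ_succ (i j : Fin n) :
    rowMatrix r i.succ j.succ = if i = j then 1 else 0 := rfl

lemma elemProd_rowMatrix : ElemProd n (rowMatrix r) := by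
  have key : ∀ s : Finset (Fin n), ElemProd s.card (rowMatrix fun i => if i ∈ s then r i else 0) := by
    intro s
    induction s using Finset.induction_on with
    | empty =>
      have : (rowMatrix fun i => if i ∈ (∅ : Finset (Fin n)) then r i else 0) = 1 := by
        ext i j
        cases i using Fin.cases <;> cases j using Fin.cases <;>
          simp [Matrix.one_apply, Fin.succ_ne_zero, (Fin.succ_ne_zero _).symm]
      rw [this]
      exact ElemProd.one _
    | insert a s has ih =>
      rw [Finset.card_insert_of_notMem has]
      convert ElemProd.step 0 a.succ (r a) (Fin.succ_ne_zero a).symm ih using 1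
      ext i j
      cases i using Fin.cases <;> cases j using Fin.cases
      · simp
      · rename_i j
        by_cases hj : a = j
        · subst hj; simp [has]
        · simp [hj, Ne.symm hj]
      · simp [Fin.succ_ne_zero]
      · simp [Fin.succ_ne_zero]
  simpa using key Finset.univ

end rowMatrix

/-- One step of the reduction of `SL_n` to `SL_2`. -/
lemma exists_reduction {n : ℕ} {M : Matrix (Fin (n + 3)) (Fin (n + 3)) ℤ} (hM : M.det = 1) :
    ∃ N : Matrix (Fin (n + 2)) (Fin (n + 2)) ℤ, N.det = 1 ∧
      ∀ k, ElemProd k (embed N) → ElemProd (k + (3 * n + 7)) M := by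
  obtain ⟨i₀, t, c, hc⟩ := exists_unimodular_tail (fun i => M i 0) (fun i => M.adjugate 0 i) (by
    have := congrFun (congrFun M.adjugate_mul 0) 0
    simpa [Matrix.mul_apply, hM] using this)
  have hi₀ : i₀.succ ≠ 0 := Fin.succ_ne_zero i₀
  set M₁ := Matrix.transvection i₀.succ 0 t * M with hM₁
  have hM₁c : ∑ k, c k * M₁ k.succ 0 = 1 := by
    rw [← hc]
    refine Finset.sum_congr rfl fun k _ => ?_
    by_cases hk : k = i₀
    · subst hk; simp [hM₁]
    · simp [hM₁, hk]
  set R := rowMatrix fun k => (1 - M₁ 0 0) * c k with hR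
  set M₂ := R * M₁ with hM₂
  have h00 : M₂ 0 0 = 1 := by
    rw [hM₂, Matrix.mul_apply, Fin.sum_univ_succ, hR]
    simp only [rowMatrix_zero_zero, rowMatrix_zero_succ, mul_assoc, ← Finset.mul_sum, hM₁c]
    ring
  let r : Fin (n + 2) → ℤ := fun j => M₂ 0 j.succ
  let w : Fin (n + 2) → ℤ := fun i => M₂ i.succ 0
  let N : Matrix (Fin (n + 2)) (Fin (n + 2)) ℤ := Matrix.of fun i j => M₂ i.succ j.succ - w i * r j
  have hfac : M₂ = (rowMatrix w).transpose * embed N * rowMatrix r := by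
    ext i j
    cases i using Fin.cases <;> cases j using Fin.cases <;>
      simp [Matrix.mul_apply, Fin.sum_univ_succ, h00, N, r, w]
  have hdet₂ : M₂.det = 1 := by
    rw [hM₂, hM₁, Matrix.det_mul, Matrix.det_mul, hM, (elemProd_rowMatrix _).det_eq_one,
      Matrix.det_transvection_of_ne _ _ hi₀]
    norm_num
  refine ⟨N, ?_, fun k hk => ?_⟩
  · rw [hfac, Matrix.det_mul, Matrix.det_mul, Matrix.det_transpose,
      (elemProd_rowMatrix _).det_eq_one, (elemProd_rowMatrix _).det_eq_one, det_embed] at hdet₂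
    simpa using hdet₂
  · have h₂ : ElemProd (n + 2 + k + (n + 2)) M₂ := by
      rw [hfac]
      exact ((elemProd_rowMatrix w).transpose.mul hk).mul (elemProd_rowMatrix r)
    exact (ElemProd.of_mul_left (ElemProd.transv _ _ t hi₀)
      (ElemProd.of_mul_left (elemProd_rowMatrix _) h₂)).mono (by omega)

lemma elemProd_of_det_eq_one (n : ℕ) {M : Matrix (Fin (n + 3)) (Fin (n + 3)) ℤ} (hM : M.det = 1) :
    ElemProd ((3 * (n + 3) ^ 2 - (n + 3)) / 2 + 36) M := by
  have hcost : ∀ n : ℕ, 2 * ((3 * (n + 3) ^ 2 - (n + 3)) / 2) + (n + 3) = 3 * (n + 3) ^ 2 := by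
    intro n
    have h1 : 3 * (n + 3) ^ 2 - (n + 3) = (n + 3) * (3 * n + 8) := by
      rw [Nat.sub_eq_iff_eq_add (by nlinarith)]; ring
    have h2 : 2 ∣ (n + 3) * (3 * n + 8) := by
      rcases Nat.even_or_odd' n with ⟨m, rfl | rfl⟩
      · exact ⟨(2 * m + 3) * (3 * m + 4), by ring⟩
      · exact ⟨(m + 2) * (3 * (2 * m + 1) + 8), by ring⟩
    rw [h1, Nat.mul_div_cancel' h2]
    ring
  induction n with
  | zero =>
    obtain ⟨N, hN, h⟩ := exists_reduction hM
    rw [Matrix.eta_fin_two N] at h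
    rw [Matrix.det_fin_two] at hN
    exact (h 40 (elemProd_fin_two hN)).mono (by norm_num)
  | succ n ih =>
    obtain ⟨N, hN, h⟩ := exists_reduction hM
    refine (h _ (ih hN).embed).mono ?_
    have h1 := hcost n
    have h2 := hcost (n + 1)
    have h3 : 3 * (n + 1 + 3) ^ 2 = 3 * (n + 3) ^ 2 + 6 * n + 21 := by ring
    omega


/-- An elementary matrix (transvection) in `SL_n(R)`: a matrix that differs from the
identity matrix in at most one off-diagonal entry. -/
def IsElementary {n : ℕ} {R : Type*} [CommRing R]
    (E : Matrix.SpecialLinearGroup (Fin n) R) : Prop :=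
  ∃ (i j : Fin n) (c : R), i ≠ j ∧
    (E : Matrix (Fin n) (Fin n) R) = Matrix.transvection i j c

/-- (Carter–Keller) Let `n ≥ 3`.  Every matrix in `SL_n(ℤ)` is a product of at most
`(3n² - n)/2 + 36` elementary matrices; in particular, `SL_n(ℤ)` is boundedly generated
by the elementary matrices. -/
theorem sl_n_int_bounded_elementary_generation (n : ℕ) (hn : 3 ≤ n) :
    (∀ M : Matrix.SpecialLinearGroup (Fin n) ℤ,
      ∃ L : List (Matrix.SpecialLinearGroup (Fin n) ℤ),
        L.length ≤ (3 * n ^ 2 - n) / 2 + 36 ∧ (∀ E ∈ L, IsElementary E) ∧ L.prod = M) ∧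
    (∃ ν : ℕ, 0 < ν ∧ ∀ M : Matrix.SpecialLinearGroup (Fin n) ℤ,
      ∃ L : List (Matrix.SpecialLinearGroup (Fin n) ℤ),
        L.length ≤ ν ∧ (∀ E ∈ L, IsElementary E) ∧ L.prod = M) := by
  -- The second part follows from the first since the bound does not depend on the matrix.
  suffices h : ∀ M : Matrix.SpecialLinearGroup (Fin n) ℤ,
      ∃ L : List (Matrix.SpecialLinearGroup (Fin n) ℤ),
        L.length ≤ (3 * n ^ 2 - n) / 2 + 36 ∧ (∀ E ∈ L, IsElementary E) ∧ L.prod = M from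
    ⟨h, _, Nat.succ_pos _, h⟩
  intro M
  obtain ⟨n, rfl⟩ : ∃ n', n = n' + 3 := ⟨n - 3, by omega⟩
  exact (elemProd_of_det_eq_one n M.det_coe).exists_list
end

section
/- Let n ≥ 3. Then every matrix in SL_n(ℤ) is a product of at most (3n² − n)/2 + 25 elementary matrices. In particular, every matrix in SL_3(ℤ) is a product of at most 37 elementary matrices. -/
section

open Matrix

/-! ### Products of a bounded number of transvections -/

/-- `IsProd k M` says that `M` is a product of at most `k` transvections. -/
def IsProd {ι : Type*} [DecidableEq ι] [Fintype ι] (k : ℕ) (M : Matrix ι ι ℤ) : Prop :=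
  ∃ L : List (TransvectionStruct ι ℤ), L.length ≤ k ∧
    (L.map TransvectionStruct.toMatrix).prod = M

namespace IsProd

variable {ι κ : Type*} [DecidableEq ι] [Fintype ι] [DecidableEq κ] [Fintype κ]

theorem mono {k l : ℕ} {M : Matrix ι ι ℤ} (h : IsProd k M) (hkl : k ≤ l) : IsProd l M := by
  obtain ⟨L, hL, hM⟩ := h
  exact ⟨L, hL.trans hkl, hM⟩

theorem one : IsProd 0 (1 : Matrix ι ι ℤ) := ⟨[], by simp, by simp⟩

theorem mul {k l : ℕ} {M N : Matrix ι ι ℤ} (hM : IsProd k M) (hN : IsProd l N) :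
    IsProd (k + l) (M * N) := by
  obtain ⟨L, hL, rfl⟩ := hM
  obtain ⟨L', hL', rfl⟩ := hN
  exact ⟨L ++ L', by simp; omega, by simp⟩

theorem trans {i j : ι} (h : i ≠ j) (c : ℤ) : IsProd 1 (transvection i j c) :=
  ⟨[⟨i, j, h, c⟩], by simp, by simp⟩

theorem transpose {k : ℕ} {M : Matrix ι ι ℤ} (h : IsProd k M) : IsProd k Mᵀ := by
  obtain ⟨L, hL, rfl⟩ := h
  refine ⟨(L.map fun t => ⟨t.j, t.i, t.hij.symm, t.c⟩).reverse, by simpa using hL, ?_⟩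
  rw [Matrix.transpose_list_prod, List.map_reverse, List.map_map, List.map_map]
  congr 3
  funext t
  simp [TransvectionStruct.toMatrix, transvection]

theorem reindex {k : ℕ} {M : Matrix ι ι ℤ} (e : ι ≃ κ) (h : IsProd k M) :
    IsProd k (Matrix.reindex e e M) := by
  obtain ⟨L, hL, rfl⟩ := h
  refine ⟨L.map (TransvectionStruct.reindexEquiv e), by simpa using hL, ?_⟩
  rw [List.map_map, TransvectionStruct.toMatrix_reindexEquiv_prod]
  rfl

theorem sumInl {k : ℕ} {M : Matrix ι ι ℤ} (h : IsProd k M) :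
    IsProd k (fromBlocks M 0 0 (1 : Matrix κ κ ℤ)) := by
  obtain ⟨L, hL, rfl⟩ := h
  refine ⟨L.map (TransvectionStruct.sumInl κ), by simpa using hL, ?_⟩
  rw [List.map_map]
  simpa using TransvectionStruct.sumInl_toMatrix_prod_mul (p := κ) 1 L 1

theorem stepL {k : ℕ} {M : Matrix ι ι ℤ} (i j : ι) (c : ℤ) (N : Matrix ι ι ℤ) (h : i ≠ j)
    (e : transvection i j c * M = N) (hN : IsProd k N) : IsProd (k + 1) M := by
  have : M = transvection i j (-c) * N := by
    rw [← e, ← mul_assoc, transvection_mul_transvection_same _ _ h]; simp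
  rw [this, add_comm]
  exact (trans h _).mul hN

theorem _root_.transvection_mul_diagonal_sign (i j : ι) (c : ℤ) (d : ι → ℤ)
    (hd : ∀ i, d i * d i = 1) :
    transvection i j c * diagonal d = diagonal d * transvection i j (d i * c * d j) := by
  ext a b
  simp only [transvection, Matrix.add_apply, Matrix.mul_diagonal,
    Matrix.diagonal_mul, Matrix.single_apply, Matrix.one_apply]
  have := hd i
  split_ifs <;> grind

/-- Conjugation by a diagonal matrix of signs sends transvections to transvections. -/
theorem conj_sign {k : ℕ} {M : Matrix ι ι ℤ} (d : ι → ℤ) (hd : ∀ i, d i * d i = 1)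
    (h : IsProd k M) : IsProd k (diagonal d * M * diagonal d) := by
  have hD : diagonal d * diagonal d = 1 := by simp [hd]
  obtain ⟨L, hL, rfl⟩ := h
  refine ⟨L.map fun t => ⟨t.i, t.j, t.hij, d t.i * t.c * d t.j⟩, by simpa using hL, ?_⟩
  clear hL
  induction L with
  | nil => simp [hd]
  | cons t L ih =>
    simp only [List.map_cons, List.prod_cons, ih]
    have := transvection_mul_diagonal_sign t.i t.j t.c d hd
    simp only [TransvectionStruct.toMatrix]
    calc _ = diagonal d * (diagonal d * transvection t.i t.j (d t.i * t.c * d t.j)) * diagonal d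
          * (List.map TransvectionStruct.toMatrix L).prod * diagonal d := by
          simp only [← mul_assoc, hD, one_mul]
      _ = _ := by
        rw [← this]
        simp only [mul_assoc]
        rw [← mul_assoc (diagonal d) (diagonal d), hD, one_mul]

/-- A column operation may be performed in front of a diagonal matrix of signs. -/
theorem stepR {k : ℕ} {M : Matrix ι ι ℤ} {d : ι → ℤ} (hd : ∀ i, d i * d i = 1) (i j : ι) (c : ℤ)
    (N : Matrix ι ι ℤ) (h : i ≠ j) (e : M * transvection i j c = N)
    (hN : IsProd k (N * diagonal d)) : IsProd (k + 1) (M * diagonal d) := by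
  have h1 : M = N * transvection i j (-c) := by
    rw [← e, mul_assoc, transvection_mul_transvection_same _ _ h]; simp
  rw [h1, mul_assoc, transvection_mul_diagonal_sign _ _ _ _ hd, ← mul_assoc]
  exact hN.mul (trans h _)

theorem stepL' {k : ℕ} {M : Matrix ι ι ℤ} {d : ι → ℤ} (i j : ι) (c : ℤ)
    (N : Matrix ι ι ℤ) (h : i ≠ j) (e : transvection i j c * M = N)
    (hN : IsProd k (N * diagonal d)) : IsProd (k + 1) (M * diagonal d) :=
  stepL i j c _ h (by rw [← e, mul_assoc]) hN

end IsProd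

/-! ### The thirteen step factorization -/

theorem fin_three_ext {a b c d e f g h i a' b' c' d' e' f' g' h' i' : ℤ}
    (h1 : a = a') (h2 : b = b') (h3 : c = c') (h4 : d = d') (h5 : e = e') (h6 : f = f')
    (h7 : g = g') (h8 : h = h') (h9 : i = i') :
    !![a, b, c; d, e, f; g, h, i] = !![a', b', c'; d', e', f'; g', h', i'] := by
  subst_vars; rfl

theorem transvection_01 (c : ℤ) :
    transvection (n := Fin 3) 0 1 c = !![1, c, 0; 0, 1, 0; 0, 0, 1] := by
  ext i j; fin_cases i <;> fin_cases j <;> simp [transvection, Matrix.single]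

theorem transvection_02 (c : ℤ) :
    transvection (n := Fin 3) 0 2 c = !![1, 0, c; 0, 1, 0; 0, 0, 1] := by
  ext i j; fin_cases i <;> fin_cases j <;> simp [transvection, Matrix.single]

theorem transvection_10 (c : ℤ) :
    transvection (n := Fin 3) 1 0 c = !![1, 0, 0; c, 1, 0; 0, 0, 1] := by
  ext i j; fin_cases i <;> fin_cases j <;> simp [transvection, Matrix.single]

theorem transvection_12 (c : ℤ) :
    transvection (n := Fin 3) 1 2 c = !![1, 0, 0; 0, 1, c; 0, 0, 1] := by
  ext i j; fin_cases i <;> fin_cases j <;> simp [transvection, Matrix.single]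

theorem transvection_20 (c : ℤ) :
    transvection (n := Fin 3) 2 0 c = !![1, 0, 0; 0, 1, 0; c, 0, 1] := by
  ext i j; fin_cases i <;> fin_cases j <;> simp [transvection, Matrix.single]

theorem transvection_21 (c : ℤ) :
    transvection (n := Fin 3) 2 1 c = !![1, 0, 0; 0, 1, 0; 0, c, 1] := by
  ext i j; fin_cases i <;> fin_cases j <;> simp [transvection, Matrix.single]

/-- The factor `!![α, yzb; yzc, δ]` of a split power, times a diagonal matrix of signs, is a
product of `13` transvections. The congruences `α ≡ 1 (mod y)` and `α ≡ -1 (mod z)` let the third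
coordinate strip the factors `y` and `z` off the entry `yzb`; once `b` itself is exposed,
`α ≡ ε (mod b)` finishes the reduction up to the signs. -/
theorem core13 (α δ b c y z u v k ε : ℤ) (hu : α = 1 + y * u) (hv : α = -1 + z * v)
    (hk : α = ε + k * b) (hε : ε * ε = 1) (hdet : α * δ - (y * z * b) * (y * z * c) = 1) :
    IsProd 13 (!![α, y * z * b, 0; y * z * c, δ, 0; 0, 0, 1] * diagonal ![-ε, ε, -1]) := by
  have hd : ∀ i, ![-ε, ε, -1] i * ![-ε, ε, -1] i = 1 := by
    intro i; fin_cases i <;> simp [hε]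
  refine IsProd.stepL' 0 2 y
    !![α, y * z * b, y; y * z * c, δ, 0; 0, 0, 1]
    (by decide) ?_ ?_
  · rw [transvection_02, mul_fin_three]
    apply fin_three_ext <;> ring1
  refine IsProd.stepR hd 2 0 (-u)
    !![1, y * z * b, y; y * z * c, δ, 0; -u, 0, 1]
    (by decide) ?_ ?_
  · rw [transvection_20, mul_fin_three]
    apply fin_three_ext <;>
      first
      | ring1
      | linear_combination hu
  refine IsProd.stepR hd 2 1 (-(z * b))
    !![1, 0, y; y * z * c, δ, 0; -u, -(z * b), 1]
    (by decide) ?_ ?_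
  · rw [transvection_21, mul_fin_three]
    apply fin_three_ext <;> ring1
  refine IsProd.stepL' 1 0 (-(y * z * c))
    !![1, 0, y; 0, δ, -(y * y * z * c); -u, -(z * b), 1]
    (by decide) ?_ ?_
  · rw [transvection_10, mul_fin_three]
    apply fin_three_ext <;> ring1
  refine IsProd.stepR hd 0 2 (-y - v)
    !![1, 0, -v; 0, δ, -(y * y * z * c); -u, -(z * b), 1 + u * (y + v)]
    (by decide) ?_ ?_
  · rw [transvection_02, mul_fin_three]
    apply fin_three_ext <;> ring1
  refine IsProd.stepL' 2 0 (u + z)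
    !![1, 0, -v; 0, δ, -(y * y * z * c); z, -(z * b), -1]
    (by decide) ?_ ?_
  · rw [transvection_20, mul_fin_three]
    apply fin_three_ext <;>
      first
      | ring1
      | linear_combination hv - hu
  refine IsProd.stepR hd 0 1 b
    !![1, b, -v; 0, δ, -(y * y * z * c); z, 0, -1]
    (by decide) ?_ ?_
  · rw [transvection_01, mul_fin_three]
    apply fin_three_ext <;> ring1
  refine IsProd.stepR hd 2 0 z
    !![-α, b, -v; -(y * y * z * z * c), δ, -(y * y * z * c); 0, 0, -1]
    (by decide) ?_ ?_
  · rw [transvection_20, mul_fin_three]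
    apply fin_three_ext <;>
      first
      | ring1
      | linear_combination hv
  refine IsProd.stepL' 0 2 (-v)
    !![-α, b, 0; -(y * y * z * z * c), δ, -(y * y * z * c); 0, 0, -1]
    (by decide) ?_ ?_
  · rw [transvection_02, mul_fin_three]
    apply fin_three_ext <;> ring1
  refine IsProd.stepL' 1 2 (-(y * y * z * c))
    !![-α, b, 0; -(y * y * z * z * c), δ, 0; 0, 0, -1]
    (by decide) ?_ ?_
  · rw [transvection_12, mul_fin_three]
    apply fin_three_ext <;> ring1
  -- `w` is the lower left entry produced by the next column operation.
  obtain ⟨w, hw⟩ : ∃ w, w = -(y * y * z * z * c) + k * δ := ⟨_, rfl⟩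
  have hbw : b * w = 1 - ε * δ := by subst hw; linear_combination hdet - δ * hk
  refine IsProd.stepR hd 1 0 k
    !![-ε, b, 0; w, δ, 0; 0, 0, -1]
    (by decide) ?_ ?_
  · rw [transvection_10, mul_fin_three]
    apply fin_three_ext <;>
      first
      | ring1
      | linear_combination hk
      | linear_combination -hk
      | linear_combination -hw
  refine IsProd.stepR hd 0 1 (ε * b)
    !![-ε, 0, 0; w, ε, 0; 0, 0, -1]
    (by decide) ?_ ?_
  · rw [transvection_01, mul_fin_three]
    apply fin_three_ext <;>
      first
      | ring1
      | linear_combination -b * hε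
      | linear_combination ε * hbw - δ * hε
  refine IsProd.stepL' 1 0 (ε * w)
    !![-ε, 0, 0; 0, ε, 0; 0, 0, -1]
    (by decide) ?_ ?_
  · rw [transvection_10, mul_fin_three]
    apply fin_three_ext <;>
      first
      | ring1
      | linear_combination -w * hε
  have : (!![-ε, 0, 0; 0, ε, 0; 0, 0, -1] * diagonal ![-ε, ε, -1] :
      Matrix (Fin 3) (Fin 3) ℤ) = 1 := by
    ext i j; fin_cases i <;> fin_cases j <;> simp [Matrix.mul_apply, Fin.sum_univ_succ, hε]
  rw [this]
  exact IsProd.one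

/-! ### Powers of matrices of size two -/

theorem fin_two_ext {a b c d a' b' c' d' : ℤ} (h1 : a = a') (h2 : b = b') (h3 : c = c')
    (h4 : d = d') : !![a, b; c, d] = !![a', b'; c', d'] := by
  subst_vars; rfl

theorem diagonal_fin_three (a b c : ℤ) : diagonal ![a, b, c] = !![a, 0, 0; 0, b, 0; 0, 0, c] := by
  ext i j; fin_cases i <;> fin_cases j <;> rfl

/-- By Cayley-Hamilton, `Aⁿ = s + r A`, with `det (s + r A) = 1` written out; the diagonal entries
of `Aⁿ` are `a ^ n` and `d ^ n` modulo `b * c`. -/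
theorem pow_lin {a b c d : ℤ} (hdet : a * d - b * c = 1) (n : ℕ) :
    ∃ s r m m' : ℤ, s ^ 2 + s * r * (a + d) + r ^ 2 = 1 ∧
      !![a, b; c, d] ^ n = !![s + r * a, r * b; r * c, s + r * d] ∧
      s + r * a = a ^ n + m * (b * c) ∧ s + r * d = d ^ n + m' * (b * c) := by
  induction n with
  | zero => exact ⟨1, 0, 0, 0, by ring, by simp [Matrix.one_fin_two], by simp, by simp⟩
  | succ n ih =>
    obtain ⟨s, r, m, m', h1, h2, h3, h4⟩ := ih
    refine ⟨-r, s + r * (a + d), a * m + r, d * m' + r, ?_, ?_, ?_, ?_⟩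
    · linear_combination h1
    · rw [pow_succ, h2, mul_fin_two]
      apply fin_two_ext <;>
        first | ring1 | linear_combination r * hdet | linear_combination (-r) * hdet
    · linear_combination a * h3 + r * hdet
    · linear_combination d * h4 + r * hdet

/-- A power of a matrix `A` of determinant `1` has the form `Aⁿ = x + yz A` with `x ≡ 1 (mod y)` and
`x ≡ -1 (mod z)`. Its diagonal entries are `a ^ n` and `d ^ n` modulo `b * c`. -/
theorem pow_split {a b c d : ℤ} (hdet : a * d - b * c = 1) (n : ℕ) :
    ∃ x y z u v m m' : ℤ, x = 1 + y * u ∧ x = -1 + z * v ∧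
      !![a, b; c, d] ^ n = !![x + y * z * a, y * z * b; y * z * c, x + y * z * d] ∧
      x + y * z * a = a ^ n + m * (b * c) ∧ x + y * z * d = d ^ n + m' * (b * c) := by
  suffices h : ∃ x y z u v : ℤ, x = 1 + y * u ∧ x = -1 + z * v ∧
      !![a, b; c, d] ^ n = !![x + y * z * a, y * z * b; y * z * c, x + y * z * d] by
    obtain ⟨x, y, z, u, v, h1, h2, h3⟩ := h
    obtain ⟨s, r, m, m', -, h4, h5, h6⟩ := pow_lin hdet n
    have e := h3.symm.trans h4
    have e1 : x + y * z * a = s + r * a := by simpa using congrFun (congrFun e 0) 0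
    have e2 : x + y * z * d = s + r * d := by simpa using congrFun (congrFun e 1) 1
    exact ⟨x, y, z, u, v, m, m', h1, h2, h3, e1.trans h5, e2.trans h6⟩
  obtain ⟨k, rfl | rfl⟩ := Nat.even_or_odd' n
  · obtain ⟨s, r, -, -, h1, h2, -, -⟩ := pow_lin hdet k
    -- `(s + r A)² = (s² - r²) + r (2 s + r tr A) A`, and `s² + s r tr A + r² = 1`.
    refine ⟨s ^ 2 - r ^ 2, r, 2 * s + r * (a + d), -(s * (a + d) + 2 * r), s, ?_, ?_, ?_⟩
    · linear_combination h1
    · linear_combination -h1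
    · rw [two_mul, pow_add, h2, mul_fin_two]
      apply fin_two_ext <;>
        first | ring1 | linear_combination r ^ 2 * hdet | linear_combination (-(r ^ 2)) * hdet
  -- With `A ^ (k + 1) = -r + ρ A`, `ρ = s + r tr A`, the coefficient of `A` in the product of
  -- `A ^ k` and `A ^ (k + 1)` factors as `ρ ^ 2 - r ^ 2`.
  · obtain ⟨s, r, -, -, h1, h2, -, -⟩ := pow_lin hdet k
    refine ⟨-r * (2 * s + r * (a + d)), s + r * (a + d) + r, s + r * (a + d) - r,
      -(r + s), s - r, ?_, ?_, ?_⟩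
    · linear_combination h1
    · linear_combination -h1
    · rw [two_mul, pow_succ, pow_add, h2, mul_fin_two, mul_fin_two]
      apply fin_two_ext
      · linear_combination (-2 * r * s - r ^ 2 * (2 * a + d)) * hdet
      · linear_combination (-(r ^ 2) * b) * hdet
      · linear_combination (-(r ^ 2) * c) * hdet
      · linear_combination (-2 * r * s - r ^ 2 * (a + 2 * d)) * hdet

/-- For primes `p` and `q` off the diagonal with `2 (p - 1) ∣ q + 1`, write
`A = Aⁿ * (A⁻¹) ^ (n - 1)` with `n = (q + 1) / 2`. Then `p - 1 ∣ n` gives `a ^ n ≡ 1 (mod p)`,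
while `2 (n - 1) = q - 1` gives `d ^ (n - 1) ≡ ±1 (mod q)`. Hence `core13` applies to both powers,
and the diagonal signs on the right of the first factor cancel those on the left of the second. -/
theorem core26 {a d : ℤ} {p q w : ℕ} (hp : p.Prime) (hq : q.Prime)
    (hdet : a * d - (p : ℤ) * q = 1) (hw : q + 1 = 2 * ((p - 1) * w)) :
    IsProd 26 !![a, (p : ℤ), 0; (q : ℤ), d, 0; 0, 0, 1] := by
  set n := (p - 1) * w with hn
  obtain ⟨N, hN⟩ : ∃ N, n = N + 1 := ⟨n - 1, by omega⟩
  have hN2 : q - 1 = N * 2 := by omega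
  have hap : IsCoprime a p := ⟨d, -q, by linear_combination hdet⟩
  have hdq : IsCoprime d q := ⟨a, -p, by linear_combination hdet⟩
  have h1 : (p : ℤ) ∣ a ^ n - 1 := by
    have := (Int.ModEq.pow_card_sub_one_eq_one hp hap).pow w
    rw [← pow_mul, one_pow] at this
    exact this.symm.dvd
  have h2 : ∃ ε : ℤ, (ε = 1 ∨ ε = -1) ∧ (q : ℤ) ∣ d ^ N - ε := by
    have := (Int.ModEq.pow_card_sub_one_eq_one hq hdq).symm.dvd
    rw [hN2, pow_mul, show (d ^ N) ^ 2 - 1 = (d ^ N - 1) * (d ^ N - -1) by ring] at this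
    rcases (Nat.prime_iff_prime_int.mp hq).dvd_or_dvd this with h | h
    · exact ⟨1, .inl rfl, h⟩
    · exact ⟨-1, .inr rfl, h⟩
  have hinv : !![a, (p : ℤ); (q : ℤ), d] ^ n * !![d, -(p : ℤ); -(q : ℤ), a] ^ N
      = !![a, (p : ℤ); (q : ℤ), d] := by
    have hc : !![a, (p : ℤ); (q : ℤ), d] * !![d, -(p : ℤ); -(q : ℤ), a] = 1 := by
      rw [mul_fin_two, one_fin_two]
      apply fin_two_ext <;> first | ring1 | linear_combination hdet
    have hc' : !![d, -(p : ℤ); -(q : ℤ), a] * !![a, (p : ℤ); (q : ℤ), d] = 1 :=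
      mul_eq_one_comm.mp hc
    have hcomm : Commute !![a, (p : ℤ); (q : ℤ), d] !![d, -(p : ℤ); -(q : ℤ), a] :=
      hc.trans hc'.symm
    rw [hN, pow_succ', mul_assoc, ← hcomm.mul_pow, hc, one_pow, mul_one]
  obtain ⟨x, y, z, u, v, m, -, hu, hv, hA, hα, -⟩ := pow_split hdet n
  obtain ⟨x', y', z', u', v', m', -, hu', hv', hB, hα', -⟩ :=
    pow_split (a := d) (b := -p) (c := -q) (d := a) (by linear_combination hdet) N
  have dA := congrArg Matrix.det hA
  have dB := congrArg Matrix.det hB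
  rw [det_pow, det_fin_two_of, det_fin_two_of] at dA dB
  rw [hdet, one_pow] at dA
  rw [show d * a - -(p : ℤ) * -q = 1 by linear_combination hdet, one_pow] at dB
  obtain ⟨k, hk⟩ := h1
  obtain ⟨ε, hε, k', hk'⟩ := h2
  have first := core13 (x + y * z * a) (x + y * z * d) p q y z (u + z * a) (v + y * a)
    (k + m * q) 1 (by linear_combination hu) (by linear_combination hv)
    (by linear_combination hα + hk) (by ring) dA.symm
  have second : IsProd 13 (diagonal ![-1, 1, -1] *
      !![x' + y' * z' * d, y' * z' * -p, 0; y' * z' * -q, x' + y' * z' * a, 0; 0, 0, 1]) := by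
    rcases hε with rfl | rfl
    -- Transposition moves the signs `(-1, 1, -1)` to the left.
    · have := (core13 (x' + y' * z' * d) (x' + y' * z' * a) (-q) (-p) y' z'
        (u' + z' * d) (v' + y' * d) (-k' - m' * p) 1 (by linear_combination hu')
        (by linear_combination hv') (by linear_combination hα' + hk') (by ring)
        (by linear_combination -dB)).transpose
      rw [transpose_mul, diagonal_transpose] at this
      convert this using 1
      congr 1
      ext i j; fin_cases i <;> fin_cases j <;> rfl
    -- Here `core13` is applied with the diagonal entries exchanged; its first entry is also
    -- `≡ -1 (mod q)` as the inverse of the other one. Its signs `(1, -1, -1)` become `(-1, 1, -1)`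
    -- after exchanging the first two indices, and conjugation moves them to the left.
    · have := (core13 (x' + y' * z' * a) (x' + y' * z' * d) (-q) (-p) y' z'
        (u' + z' * a) (v' + y' * a)
        (-(x' + y' * z' * a) * (k' + m' * p) + (y' * z') ^ 2 * p) (-1)
        (by linear_combination hu')
        (by linear_combination hv')
        (by linear_combination (x' + y' * z' * a) * (hα' + hk') + dB) (by ring)
        (by linear_combination -dB)).reindex (Equiv.swap 0 1)
      have := this.conj_sign ![-1, 1, -1] (by intro i; fin_cases i <;> simp)
      convert this using 1
      simp only [diagonal_fin_three, mul_fin_three]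
      have hsw : ∀ a b c d e f g h i : ℤ, Matrix.reindex (Equiv.swap 0 1) (Equiv.swap 0 1)
          !![a, b, c; d, e, f; g, h, i] = !![e, d, f; b, a, c; h, g, i] := by
        intros
        ext i j; fin_cases i <;> fin_cases j <;> rfl
      rw [hsw, mul_fin_three, mul_fin_three]
      apply fin_three_ext <;> ring1
  have key := first.mul second
  convert key using 1
  rw [hA, hB, mul_fin_two] at hinv
  have hD : diagonal ![-1, 1, -1] * diagonal ![-1, 1, -1] = (1 : Matrix (Fin 3) (Fin 3) ℤ) := by
    rw [diagonal_mul_diagonal, ← diagonal_one]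
    congr 1
    ext i; fin_cases i <;> rfl
  rw [mul_assoc, ← mul_assoc (diagonal _) (diagonal _), hD, one_mul, mul_fin_three]
  have e00 := congrFun (congrFun hinv 0) 0
  have e01 := congrFun (congrFun hinv 0) 1
  have e10 := congrFun (congrFun hinv 1) 0
  have e11 := congrFun (congrFun hinv 1) 1
  simp only [of_apply, cons_val', cons_val_zero, cons_val_one, cons_val_fin_one] at e00 e01 e10 e11
  apply fin_three_ext <;> linarith

/-! ### Matrices of size two -/

/-- Dirichlet's theorem, for a modulus of arbitrary sign. -/
theorem exists_prime_dvd_sub {a r : ℤ} (ha : a ≠ 0) (h : IsCoprime r a) :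
    ∃ p : ℕ, p.Prime ∧ a ∣ p - r := by
  obtain ⟨p, -, hp, h⟩ := Nat.forall_exists_prime_gt_and_zmodEq 0 (q := a.natAbs) (a := r)
    (by simpa using ha) (by simpa [IsCoprime.abs_right_iff] using h)
  exact ⟨p, hp, by simpa using h.symm.dvd⟩

/-- With `a` odd, two transvections replace `b` by a prime `p ≡ b (mod a)` and `c` by a prime
`q ≡ c (mod a)` with `q ≡ -1 (mod 2 (p - 1))`. The two congruences for `q` are compatible because
`b * c ≡ -1 (mod a)`, so that `c ≡ -1` modulo `gcd a (p - 1)`. -/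
theorem core28 {a b c d : ℤ} (hdet : a * d - b * c = 1) (ha : Odd a) :
    IsProd 28 !![a, b, 0; c, d, 0; 0, 0, 1] := by
  have ha0 : a ≠ 0 := by rintro rfl; simp at ha
  obtain ⟨p, hp, t, ht⟩ := exists_prime_dvd_sub (r := b) ha0 ⟨-c, d, by linear_combination hdet⟩
  obtain ⟨s, w, q, hq, hs, hw⟩ : ∃ s : ℤ, ∃ w q : ℕ, q.Prime ∧ (q : ℤ) = c + a * s ∧
      q + 1 = 2 * ((p - 1) * w) := by
    have hp2 := hp.two_le
    obtain ⟨P, hP⟩ : ∃ P : ℕ, p = P + 1 := ⟨p - 1, by omega⟩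
    have hP' : (p : ℤ) = P + 1 := by simp [hP]
    set M : ℤ := 2 * P with hM
    have hM0 : M ≠ 0 := by omega
    obtain ⟨s, t', hg⟩ : ∃ s t' : ℤ, (Int.gcd a M : ℤ) = a * s + M * t' :=
      ⟨_, _, Int.gcd_eq_gcd_ab a M⟩
    have hga : (Int.gcd a M : ℤ) ∣ a := Int.gcd_dvd_left ..
    have hgM : (Int.gcd a M : ℤ) ∣ M := Int.gcd_dvd_right ..
    have hgP : (Int.gcd a M : ℤ) ∣ P := by
      refine IsCoprime.dvd_of_dvd_mul_left ?_ hgM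
      obtain ⟨e, he⟩ := ha
      exact IsCoprime.of_isCoprime_of_dvd_left ⟨1, -e, by linear_combination he⟩ hga
    obtain ⟨e, he⟩ : (Int.gcd a M : ℤ) ∣ c + 1 := by
      have : c + 1 = a * (d + t * c) - P * c := by linear_combination c * ht - hdet - c * hP'
      rw [this]
      exact dvd_sub (hga.mul_right _) (hgP.mul_right _)
    rw [hg] at he
    have hco : IsCoprime (c - a * s * e) (a * M) := by
      refine IsCoprime.mul_right ⟨-b, d - b * s * e, by linear_combination hdet⟩
        ⟨-1, t' * e, by linear_combination -he⟩
    obtain ⟨q, hq, f, hf⟩ := exists_prime_dvd_sub (mul_ne_zero ha0 hM0) hco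
    obtain ⟨W, hW⟩ : ∃ W : ℤ, (q : ℤ) + 1 = M * W :=
      ⟨t' * e + a * f, by linear_combination hf + he⟩
    have hW0 : 0 ≤ W := by
      by_contra! hneg
      have : 0 < M := by omega
      nlinarith
    lift W to ℕ using hW0
    refine ⟨M * f - s * e, W, q, hq, by linear_combination hf, ?_⟩
    have : p - 1 = P := by omega
    rw [this]
    zify
    rw [hW, hM]; ring
  have h := core26 (a := a) (d := d + t * c + s * p) hp hq
    (by linear_combination hdet + c * (- ht) - p * hs) hw
  have e : !![a, b, 0; c, d, 0; 0, 0, 1] = transvection 1 0 (-s) *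
      !![a, (p : ℤ), 0; (q : ℤ), d + t * c + s * p, 0; 0, 0, 1] * transvection 0 1 (-t) := by
    rw [transvection_10, transvection_01, mul_fin_three, mul_fin_three]
    apply fin_three_ext <;>
      first
      | ring1
      | linear_combination -ht
      | linear_combination -hs
      | linear_combination t * hs
  rw [e]
  exact ((IsProd.trans (by decide) _).mul h).mul (IsProd.trans (by decide) _)

/-- If `a` is even, then `c` is odd, and adding the second row to the first makes `a` odd. -/
theorem core29 {a b c d : ℤ} (hdet : a * d - b * c = 1) :
    IsProd 29 !![a, b, 0; c, d, 0; 0, 0, 1] := by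
  rcases Int.even_or_odd a with ha | ha
  · have hc : Odd c := by
      by_contra hc
      rw [Int.not_odd_iff_even] at hc
      have : Even (a * d - b * c) := (ha.mul_right _).sub (hc.mul_left _)
      rw [hdet] at this
      exact absurd this (by decide)
    refine IsProd.stepL 0 1 1 !![a + c, b + d, 0; c, d, 0; 0, 0, 1] (by decide) ?_
      (core28 (by linear_combination hdet) (ha.add_odd hc))
    rw [transvection_01, mul_fin_three]
    apply fin_three_ext <;> ring1
  · exact (core28 hdet ha).mono (by norm_num)

/-! ### Reduction of the size -/

theorem IsProd.lower {k : ℕ} (C : Matrix (Fin 1) (Fin k) ℤ) :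
    IsProd k (fromBlocks 1 0 C 1) := by
  suffices h : ∀ s : Finset (Fin k),
      IsProd s.card (fromBlocks 1 0 (of fun _ j => if j ∈ s then C 0 j else 0) 1 :
        Matrix (Fin k ⊕ Fin 1) (Fin k ⊕ Fin 1) ℤ) by
    have h' := h Finset.univ
    rw [Finset.card_univ, Fintype.card_fin] at h'
    convert h' using 2
    ext i j
    fin_cases i
    simp
  intro s
  induction s using Finset.induction_on with
  | empty =>
    rw [Finset.card_empty]
    have h0 : (of fun _ j => if j ∈ (∅ : Finset (Fin k)) then C 0 j else 0) =
        (0 : Matrix (Fin 1) (Fin k) ℤ) := by ext; simp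
    rw [h0, fromBlocks_one]
    exact IsProd.one
  | insert a s ha ih =>
    rw [Finset.card_insert_of_notMem ha, add_comm]
    convert (IsProd.trans (i := .inr 0) (j := .inl a) (by simp) (C 0 a)).mul ih
    have : transvection (.inr 0) (.inl a) (C 0 a) =
        (fromBlocks 1 0 (single 0 a (C 0 a)) 1 : Matrix (Fin k ⊕ Fin 1) (Fin k ⊕ Fin 1) ℤ) := by
      rw [transvection, ← fromBlocks_one]
      ext (i | i) (j | j) <;> simp [single_apply, one_apply]
    rw [this, fromBlocks_multiply]
    congr 1 <;> try simp
    ext i j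
    fin_cases i
    by_cases h : a = j
    · subst h; simp [ha]
    · simp [h, Ne.symm h]

theorem IsProd.upper {k : ℕ} (B : Matrix (Fin k) (Fin 1) ℤ) :
    IsProd k (fromBlocks 1 B 0 1) := by
  simpa [fromBlocks_transpose] using (IsProd.lower Bᵀ).transpose

/-- The stable range condition for `ℤ`: one may take for `t` the product of the primes dividing `g`
but not `a`. -/
theorem exists_isCoprime_add_mul_s3 {a b g u v w : ℤ} (hg : g ≠ 0) (h : u * a + v * b + w * g = 1) :
    ∃ t, IsCoprime (a + t * b) g := by
  classical
  set S : Finset ℕ := {p ∈ g.natAbs.primeFactors | ¬ (p : ℤ) ∣ a} with hS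
  refine ⟨((∏ p ∈ S, p : ℕ) : ℤ), isCoprime_of_prime_dvd (by simp [hg]) ?_⟩
  intro z hz h1 h2
  have hp : z.natAbs.Prime := Int.prime_iff_natAbs_prime.mp hz
  have hp' : Prime (z.natAbs : ℤ) := Nat.prime_iff_prime_int.mp hp
  rw [← Int.natAbs_dvd] at h1 h2
  obtain ⟨p, hpz⟩ : ∃ p : ℕ, p = z.natAbs := ⟨_, rfl⟩
  rw [← hpz] at hp hp' h1 h2
  clear hpz
  by_cases ha : (p : ℤ) ∣ a
  · rcases hp'.dvd_or_dvd ((dvd_add_right ha).mp h1) with h3 | h3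
    · rw [Int.natCast_dvd_natCast, hp.prime.dvd_finsetProd_iff] at h3
      obtain ⟨q, hq, hpq⟩ := h3
      rw [hS, Finset.mem_filter] at hq
      rw [(Nat.prime_dvd_prime_iff_eq hp (Nat.prime_of_mem_primeFactors hq.1)).mp hpq] at ha
      exact hq.2 ha
    · apply hp'.not_dvd_one
      rw [← h]
      exact dvd_add (dvd_add (ha.mul_left _) (h3.mul_left _)) (h2.mul_left _)
  · have hm : p ∈ S := by
      rw [hS, Finset.mem_filter, Nat.mem_primeFactors]
      exact ⟨⟨hp, Int.natCast_dvd.mp h2, by simpa using hg⟩, ha⟩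
    have h3 : (p : ℤ) ∣ ((∏ p ∈ S, p : ℕ) : ℤ) :=
      Int.natCast_dvd_natCast.mpr (Finset.dvd_prod_of_mem _ hm)
    exact ha ((dvd_add_left (h3.mul_right b)).mp h1)

/-- If the column with entries `B` and, below them, `D` is unimodular, then one row operation adding
a multiple of the last entry to another one makes the upper part `B` alone unimodular. -/
theorem exists_unimodular_add {m : ℕ} (B u : Fin (m + 2) → ℤ) (D w : ℤ)
    (h : ∑ i, u i * B i + w * D = 1) :
    ∃ (i : Fin (m + 2)) (t : ℤ) (c : Fin (m + 2) → ℤ),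
      ∑ j, c j * (B j + if j = i then t * D else 0) = 1 := by
  obtain ⟨g, hg⟩ := IsPrincipalIdealRing.principal (Ideal.span (Set.range fun j => B (Fin.succ j)))
  change _ = Ideal.span {g} at hg
  have h1 : ∀ j : Fin (m + 1), g ∣ B j.succ := fun j => by
    rw [← Ideal.mem_span_singleton, ← hg]
    exact Ideal.subset_span ⟨j, rfl⟩
  obtain ⟨c, hc⟩ : ∃ c : Fin (m + 1) → ℤ, ∑ j, c j * B j.succ = g := by
    rw [← Ideal.mem_span_range_iff_exists_fun, hg]
    exact Ideal.mem_span_singleton_self g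
  rw [Fin.sum_univ_succ] at h
  by_cases hg0 : g = 0
  -- The only nonzero entries are `B 0` and `D`: copy `D` into another place.
  · have h2 : ∀ j : Fin (m + 1), B j.succ = 0 := fun j => by simpa [hg0] using h1 j
    refine ⟨Fin.succ 0, 1, Fin.cons (u 0) (Fin.cons w 0), ?_⟩
    rw [Fin.sum_univ_succ, Fin.sum_univ_succ]
    have h3 : B 1 = 0 := h2 0
    simp [h2, h3] at h ⊢
    simpa [Fin.ext_iff] using h
  -- Otherwise make `B 0` coprime to the gcd `g` of the other entries of `B`.
  · obtain ⟨e, he⟩ : g ∣ ∑ i : Fin (m + 1), u i.succ * B i.succ :=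
      Finset.dvd_sum fun j _ => (h1 j).mul_left _
    obtain ⟨t, x, y, hxy⟩ := exists_isCoprime_add_mul_s3 (a := B 0) (b := D) (u := u 0) (v := w)
      (w := e) hg0 (by linear_combination h - he)
    refine ⟨0, t, Fin.cons x (fun j => y * c j), ?_⟩
    rw [Fin.sum_univ_succ]
    simp [mul_assoc, ← Finset.mul_sum, hc]
    linear_combination hxy

/-- If the upper part `B` of the last column is unimodular, adding rows to the last one turns the
corner into `1`, which then clears the last column and the last row. -/
theorem fromBlocks_eq_of_mul_eq_one {k : ℕ} (A : Matrix (Fin k) (Fin k) ℤ)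
    (B : Matrix (Fin k) (Fin 1) ℤ) (C C₀ : Matrix (Fin 1) (Fin k) ℤ) (D : Matrix (Fin 1) (Fin 1) ℤ)
    (h : C₀ * B = 1) : ∃ A' X Y, fromBlocks A B C D =
      fromBlocks 1 0 X 1 * fromBlocks 1 B 0 1 * fromBlocks A' 0 0 1 * fromBlocks 1 0 Y 1 := by
  obtain ⟨E, hE⟩ : ∃ E : Matrix (Fin 1) (Fin k) ℤ, E * B = 1 - D :=
    ⟨(1 - D) * C₀, by rw [Matrix.mul_assoc, h, Matrix.mul_one]⟩
  refine ⟨A - B * (E * A + C), -E, E * A + C, ?_⟩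
  simp only [fromBlocks_multiply, Matrix.mul_zero, Matrix.mul_one,
    Matrix.one_mul, add_zero, zero_add, Matrix.neg_mul, hE]
  congr 1
  · abel
  · rw [Matrix.mul_sub, ← Matrix.mul_assoc, hE]
    simp only [Matrix.add_mul, Matrix.sub_mul, Matrix.neg_mul, Matrix.one_mul]
    abel
  · abel

/-- The reduction from size `k + 1` to size `k` costs `3 k + 1` transvections: one to make the upper
part of the last column unimodular, and `k` for each of the triangular factors. -/
theorem reduce {k : ℕ} (hk : 2 ≤ k) (M : Matrix (Fin k ⊕ Fin 1) (Fin k ⊕ Fin 1) ℤ)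
    (hM : M.det = 1) : ∃ A : Matrix (Fin k) (Fin k) ℤ, A.det = 1 ∧
      ∀ l, IsProd l (fromBlocks A 0 0 (1 : Matrix (Fin 1) (Fin 1) ℤ)) →
        IsProd (l + (3 * k + 1)) M := by
  obtain ⟨m, rfl⟩ : ∃ m, k = m + 2 := ⟨k - 2, by omega⟩
  have hN : (M.adjugate * M) (.inr 0) (.inr 0) = 1 := by simp [adjugate_mul, hM]
  rw [Matrix.mul_apply, Fintype.sum_sum_type] at hN
  rw [Fintype.sum_unique (ι := Fin 1)] at hN
  obtain ⟨i, t, c, hc⟩ := exists_unimodular_add (fun j => M (.inl j) (.inr 0)) _ _ _ hN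
  have hM' : M = transvection (.inl i) (.inr 0) (-t) * (transvection (.inl i) (.inr 0) t * M) := by
    rw [← mul_assoc, transvection_mul_transvection_same _ _ (by simp)]
    simp
  generalize hN' : transvection (.inl i) (.inr 0) t * M = N at hM'
  have hNdet : N.det = 1 := by
    rw [← hN', det_mul, hM, det_transvection_of_ne _ _ (by simp), mul_one]
  obtain ⟨A, X, Y, h⟩ := fromBlocks_eq_of_mul_eq_one N.toBlocks₁₁ N.toBlocks₁₂ N.toBlocks₂₁
    (of fun _ j => c j) N.toBlocks₂₂ (by
      ext a b
      rw [Subsingleton.elim a 0, Subsingleton.elim b 0, ← hN', Matrix.mul_apply]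
      simp only [one_apply_eq]
      rw [← hc]
      refine Finset.sum_congr rfl fun j _ => ?_
      congr 1
      by_cases hj : j = i
      · subst hj; simp [toBlocks₁₂]
      · simp [toBlocks₁₂, hj])
  rw [fromBlocks_toBlocks] at h
  refine ⟨A, ?_, fun l hl => ?_⟩
  · simpa [hNdet] using (congrArg det h).symm
  · rw [hM', h]
    refine ((IsProd.trans (by simp) _).mul ((((IsProd.lower X).mul (IsProd.upper _)).mul
      hl).mul (IsProd.lower Y))).mono (by omega)

theorem isProd_of_det : ∀ n : ℕ, 3 ≤ n → ∀ M : Matrix (Fin n) (Fin n) ℤ, M.det = 1 →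
    IsProd ((3 * n ^ 2 - n) / 2 + 25) M := by
  have hsum : ∀ (k l : ℕ), 2 ≤ k → (∀ A : Matrix (Fin k) (Fin k) ℤ, A.det = 1 →
      IsProd l (Matrix.reindex finSumFinEquiv finSumFinEquiv
        (fromBlocks A 0 0 (1 : Matrix (Fin 1) (Fin 1) ℤ)))) →
      ∀ M : Matrix (Fin (k + 1)) (Fin (k + 1)) ℤ, M.det = 1 → IsProd (l + (3 * k + 1)) M := by
    intro k l hk h M hM
    obtain ⟨A, hA, hr⟩ := reduce hk
      (Matrix.reindex finSumFinEquiv.symm finSumFinEquiv.symm M) (by simpa using hM)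
    have h1 := (h A hA).reindex finSumFinEquiv.symm
    have h2 := (hr l (by simpa using h1)).reindex finSumFinEquiv
    simpa using h2
  intro n hn
  induction n, hn using Nat.le_induction with
  | base =>
    -- `37 = 30 + 7`, and `core29` leaves one spare transvection.
    refine hsum 2 30 le_rfl fun A hA => ?_
    rw [det_fin_two] at hA
    convert (core29 hA).mono (show 29 ≤ 30 by norm_num)
    ext i j; fin_cases i <;> fin_cases j <;> rfl
  | succ n hn ih =>
    intro M hM
    convert hsum n _ (by omega) (fun A hA => (ih A hA).sumInl.reindex _) M hM using 1
    have h1 : n ≤ 3 * n ^ 2 := by nlinarith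
    have h2 : 3 * (n + 1) ^ 2 - (n + 1) = 3 * n ^ 2 - n + 2 * (3 * n + 1) := by
      zify [h1, show n + 1 ≤ 3 * (n + 1) ^ 2 by nlinarith]; ring
    omega

theorem exists_list_of_isProd {n k : ℕ} (M : Matrix.SpecialLinearGroup (Fin n) ℤ)
    (h : IsProd k (M : Matrix (Fin n) (Fin n) ℤ)) :
    ∃ L : List (Matrix.SpecialLinearGroup (Fin n) ℤ),
        L.length ≤ k ∧ (∀ E ∈ L, IsElementary E) ∧ L.prod = M := by
  obtain ⟨L, hL, hM⟩ := h
  let f : TransvectionStruct (Fin n) ℤ → Matrix.SpecialLinearGroup (Fin n) ℤ :=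
    fun t => ⟨t.toMatrix, t.det⟩
  refine ⟨L.map f, by simpa using hL, ?_, Subtype.ext ?_⟩
  · intro E hE
    obtain ⟨t, -, rfl⟩ := List.mem_map.mp hE
    exact ⟨t.i, t.j, t.c, t.hij, rfl⟩
  · rw [← hM]
    clear hM hL
    induction L with
    | nil => rfl
    | cons t L ih =>
      rw [List.map_cons, List.map_cons, List.prod_cons, List.prod_cons, ← ih]
      rfl

end

/-- Let `n ≥ 3`.  Every matrix in `SL_n(ℤ)` is a product of at most `(3n² - n)/2 + 25`
elementary matrices; in particular, every matrix in `SL_3(ℤ)` is a product of at most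
`37` elementary matrices. -/
theorem sl_n_int_improved_bounded_elementary_generation :
    (∀ n : ℕ, 3 ≤ n → ∀ M : Matrix.SpecialLinearGroup (Fin n) ℤ,
      ∃ L : List (Matrix.SpecialLinearGroup (Fin n) ℤ),
        L.length ≤ (3 * n ^ 2 - n) / 2 + 25 ∧ (∀ E ∈ L, IsElementary E) ∧ L.prod = M) ∧
    (∀ M : Matrix.SpecialLinearGroup (Fin 3) ℤ,
      ∃ L : List (Matrix.SpecialLinearGroup (Fin 3) ℤ),
        L.length ≤ 37 ∧ (∀ E ∈ L, IsElementary E) ∧ L.prod = M) := by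
  have h := fun (n : ℕ) (hn : 3 ≤ n) (M : Matrix.SpecialLinearGroup (Fin n) ℤ) =>
    exists_list_of_isProd M (isProd_of_det n hn M M.det_coe)
  exact ⟨h, h 3 le_rfl⟩
end

section
/- For every n ≥ 2, the group SL_n(ℂ[X]) is not boundedly generated by the elementary matrices: there is no positive integer ν such that every matrix in SL_n(ℂ[X]) is a product of at most ν elementary matrices. -/
noncomputable section

namespace ElementaryWords

/-! ### Derivations of `ℂ` -/

section Derivations
open Polynomial

/-- Derivations extend uniquely along formally étale maps; only existence is needed. -/
theorem derivation_extend {R S T : Type*} [CommRing R] [CommRing S] [CommRing T]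
    [Algebra R S] [Algebra R T] [Algebra S T] [IsScalarTower R S T] [Algebra.FormallyEtale S T]
    (d : Derivation R S T) :
    ∃ D : Derivation R T T, ∀ s, D (algebraMap S T s) = d s := by
  let e := KaehlerDifferential.tensorKaehlerEquivOfFormallyEtale R S T
  let φ : Ω[T⁄R] →ₗ[T] T := (d.liftKaehlerDifferential.liftBaseChange T) ∘ₗ e.symm.toLinearMap
  refine ⟨φ.compDer (KaehlerDifferential.D R T), fun s => ?_⟩
  have := KaehlerDifferential.tensorKaehlerEquivOfFormallyEtale_symm_D_algebraMap R S T s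
  change (d.liftKaehlerDifferential.liftBaseChange T)
    (e.symm (KaehlerDifferential.D R T (algebraMap S T s))) = d s
  rw [this]
  simp

/-- In characteristic zero, an algebraic extension of `ℤ[xᵢ]` is a separable extension of a
localization of it. -/
theorem formallyEtale_mvPolynomial {ι K : Type*} [Field K] [CharZero K]
    [Algebra (MvPolynomial ι ℤ) K] [FaithfulSMul (MvPolynomial ι ℤ) K]
    [Algebra.IsAlgebraic (MvPolynomial ι ℤ) K] :
    Algebra.FormallyEtale (MvPolynomial ι ℤ) K := by
  let F := FractionRing (MvPolynomial ι ℤ)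
  let _ : Algebra F K := FractionRing.liftAlgebra _ K
  have : IsScalarTower (MvPolynomial ι ℤ) F K := inferInstance
  have : Algebra.IsAlgebraic F K :=
    (IsFractionRing.comap_isAlgebraic_iff (A := MvPolynomial ι ℤ) (K := F) (C := K)).mp inferInstance
  have : CharZero F := charZero_of_injective_algebraMap (FaithfulSMul.algebraMap_injective (MvPolynomial ι ℤ) F)
  have : Algebra.FormallyEtale (MvPolynomial ι ℤ) F :=
    Algebra.FormallyEtale.of_isLocalization (nonZeroDivisors _)
  have : Algebra.FormallyEtale F K := Algebra.FormallyEtale.of_isSeparable F K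
  exact Algebra.FormallyEtale.comp _ F K

/-- Infinitely many elements of a transcendence basis of `ℂ` are available; the partial derivatives
with respect to them extend to `ℂ`. -/
theorem exists_dual_derivations (N : ℕ) :
    ∃ (t : Fin N → ℂ) (D : Fin N → Derivation ℤ ℂ ℂ),
      ∀ p q, D p (t q) = if p = q then 1 else 0 := by
  obtain ⟨s, hs⟩ := exists_isTranscendenceBasis ℤ ℂ
  have hinf : Infinite s := by
    by_contra h
    rw [not_infinite_iff_finite] at h
    have h1 := IsAlgClosed.cardinal_le_max_transcendence_basis _ hs
    have h2 : Cardinal.mk s ≤ Cardinal.aleph0 := Cardinal.mk_le_aleph0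
    simp only [Cardinal.lift_id, Cardinal.mk_complex, Cardinal.mk_denumerable] at h1
    have h3 := Cardinal.aleph0_lt_continuum
    exact absurd (h1.trans (by simp [h2])) (not_le.mpr h3)
  let _ : Algebra (MvPolynomial s ℤ) ℂ := (MvPolynomial.aeval (R := ℤ) (Subtype.val : s → ℂ)).toAlgebra
  have hinj : Function.Injective (algebraMap (MvPolynomial s ℤ) ℂ) := hs.1
  have : FaithfulSMul (MvPolynomial s ℤ) ℂ := (faithfulSMul_iff_algebraMap_injective _ _).mpr hinj
  have : IsScalarTower ℤ (MvPolynomial s ℤ) ℂ := inferInstance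
  have : Algebra.IsAlgebraic (MvPolynomial s ℤ) ℂ := by
    have := hs.isAlgebraic
    exact this.of_ringHom_of_comp_eq hs.1.aevalEquiv (RingHom.id ℂ) hs.1.aevalEquiv.surjective
      Function.injective_id rfl
  have := formallyEtale_mvPolynomial (ι := s) (K := ℂ)
  let v : Fin N ↪ s := Fin.valEmbedding.trans (Infinite.natEmbedding s)
  have key : ∀ p : Fin N, ∃ D : Derivation ℤ ℂ ℂ, ∀ x : s, D x = if v p = x then 1 else 0 := by
    intro p
    obtain ⟨D, hD⟩ := derivation_extend
      (MvPolynomial.mkDerivation ℤ (fun x : s => if v p = x then (1 : ℂ) else 0))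
    refine ⟨D, fun x => ?_⟩
    have := hD (MvPolynomial.X x)
    rw [MvPolynomial.mkDerivation_X] at this
    rw [← this]
    congr 1
    exact (MvPolynomial.aeval_X _ _).symm
  choose D hD using key
  exact ⟨fun q => v q, D, fun p q => by rw [hD]; simp⟩

/-! ### Regularity at infinity -/

variable {k : Type*} [CommRing k] [Algebra k ℂ]

/-- The derivation of `ℂ[X]` applying `d` to every coefficient; it kills `X`. -/
def coeffDer (d : Derivation k ℂ ℂ) : Derivation k ℂ[X] ℂ[X] :=
  (PolynomialModule.equivPolynomialSelf (R := ℂ)).toLinearMap.compDer d.mapCoeffs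

theorem coeffDer_coeff (d : Derivation k ℂ ℂ) (f : ℂ[X]) (i : ℕ) :
    (coeffDer d f).coeff i = d (f.coeff i) := rfl

theorem coeffDer_C (d : Derivation k ℂ ℂ) (a : ℂ) : coeffDer d (C a) = C (d a) := by
  ext i; rw [coeffDer_coeff, coeff_C, coeff_C]; split_ifs <;> simp

theorem coeffDer_X (d : Derivation k ℂ ℂ) : coeffDer d X = 0 := by
  ext i; rw [coeffDer_coeff, coeff_X]; split_ifs <;> simp

/-- Evaluation at a constant of `d` intertwines the coefficientwise derivation with `d`. -/
theorem eval_coeffDer (d : Derivation k ℂ ℂ) {x : ℂ} (hx : d x = 0) (f : ℂ[X]) :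
    (coeffDer d f).eval x = d (f.eval x) := by
  induction f using Polynomial.induction_on' with
  | add p q hp hq => simp [hp, hq]
  | monomial n a =>
    rw [← C_mul_X_pow_eq_monomial]
    simp only [Derivation.leibniz, Derivation.leibniz_pow, coeffDer_C, coeffDer_X, smul_zero, smul_eq_mul,
      eval_mul, eval_C, eval_pow, eval_X, eval_add, eval_zero, hx, mul_zero]

theorem natDegree_coeffDer_le (d : Derivation k ℂ ℂ) (f : ℂ[X]) :
    (coeffDer d f).natDegree ≤ f.natDegree := by
  rw [natDegree_le_iff_coeff_eq_zero]
  intro i hi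
  rw [coeffDer_coeff, coeff_eq_zero_of_natDegree_lt hi, map_zero]

/-- The subring of rational functions regular at infinity, i.e. the valuation ring of the degree
valuation. -/
abbrev regInfty : Subring (RatFunc ℂ) := by
  classical exact (RatFunc.inftyValuation ℂ).integer

theorem val_poly (f : ℂ[X]) (hf : f ≠ 0) [DecidableEq (RatFunc ℂ)] :
    RatFunc.inftyValuation ℂ (algebraMap ℂ[X] (RatFunc ℂ) f) = WithZero.exp (f.natDegree : ℤ) :=
  RatFunc.inftyValuation.polynomial ℂ hf

theorem natDegree_eq_zero_of_mem {f : ℂ[X]} (h : algebraMap ℂ[X] (RatFunc ℂ) f ∈ regInfty) :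
    f.natDegree = 0 := by
  classical
  by_cases hf : f = 0
  · simp [hf]
  rw [regInfty, Valuation.mem_integer_iff, val_poly _ hf] at h
  have : WithZero.exp (f.natDegree : ℤ) ≤ WithZero.exp 0 := by rwa [WithZero.exp_zero]
  rw [WithZero.exp_le_exp] at this
  omega

/-- A coefficientwise derivation does not raise degrees, so its logarithmic derivatives are regular
at infinity. -/
theorem ratFunc_extend (d : Derivation k ℂ ℂ) : ∃ D : Derivation k (RatFunc ℂ) (RatFunc ℂ),
    (∀ f : ℂ[X], D (algebraMap _ _ f) = algebraMap _ _ (coeffDer d f)) ∧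
    ∀ a, D a / a ∈ regInfty := by
  classical
  have : Algebra.FormallyEtale ℂ[X] (RatFunc ℂ) :=
    Algebra.FormallyEtale.of_isLocalization (nonZeroDivisors _)
  obtain ⟨D, hD⟩ := derivation_extend (T := RatFunc ℂ)
    ((Algebra.linearMap ℂ[X] (RatFunc ℂ)).compDer (coeffDer d))
  have hD' : ∀ f : ℂ[X], D (algebraMap _ _ f) = algebraMap _ _ (coeffDer d f) := hD
  refine ⟨D, hD', fun a => ?_⟩
  have hpoly : ∀ f : ℂ[X], f ≠ 0 →
      D (algebraMap _ _ f) / algebraMap ℂ[X] (RatFunc ℂ) f ∈ regInfty := by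
    intro f hf
    rw [hD']
    by_cases hz : coeffDer d f = 0
    · simp [hz]
    rw [Valuation.mem_integer_iff, map_div₀, val_poly _ hf, val_poly _ hz, ← WithZero.exp_sub,
      ← WithZero.exp_zero, WithZero.exp_le_exp]
    have := natDegree_coeffDer_le d f
    omega
  obtain ⟨f, g, hg, rfl⟩ := IsFractionRing.div_surjective (A := ℂ[X]) a
  have hg : g ≠ 0 := nonZeroDivisors.ne_zero hg
  have hg' : algebraMap ℂ[X] (RatFunc ℂ) g ≠ 0 := by simpa using hg
  by_cases hf : f = 0
  · simp [hf]
  have hf' : algebraMap ℂ[X] (RatFunc ℂ) f ≠ 0 := by simpa using hf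
  have : D (algebraMap _ _ f / algebraMap _ _ g) / (algebraMap _ _ f / algebraMap _ _ g) =
      D (algebraMap _ _ f) / algebraMap ℂ[X] (RatFunc ℂ) f
        - D (algebraMap _ _ g) / algebraMap ℂ[X] (RatFunc ℂ) g := by
    rw [Derivation.leibniz_div]
    simp only [smul_eq_mul]
    field_simp
  rw [this]
  exact sub_mem (hpoly f hf) (hpoly g hg)

end Derivations

section Matrices
open Matrix

/-! ### The trace cocycle -/

section Cocycle
variable {k R : Type*} [CommRing k] [CommRing R] [Algebra k R] {n N : ℕ}

theorem map_mul_derivation (d : Derivation k R R) (A B : Matrix (Fin n) (Fin n) R) :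
    (A * B).map d = A.map d * B + A * B.map d := by
  ext i j
  simp only [map_apply, mul_apply, Matrix.add_apply, map_sum, Derivation.leibniz, smul_eq_mul,
    ← Finset.sum_add_distrib]
  exact Finset.sum_congr rfl fun _ _ => by ring

theorem map_one_derivation (d : Derivation k R R) :
    (1 : Matrix (Fin n) (Fin n) R).map d = 0 := by
  ext i j
  rw [map_apply, one_apply]
  split_ifs <;> simp

variable (D : Fin N → Derivation k R R)

/-- The matrix-valued 2-cocycle on `GL_n(R)` attached to derivations `D₁, …, D_N`, whose `(p, q)` entry
is `tr (g⁻¹ D_p(g) · D_q(h) h⁻¹)`. -/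
def cocycle (g h : GL (Fin n) R) : Matrix (Fin N) (Fin N) R :=
  of fun p q => trace (((g⁻¹ : GL (Fin n) R) : Matrix (Fin n) (Fin n) R) *
    (g : Matrix (Fin n) (Fin n) R).map (D p) *
    ((h : Matrix (Fin n) (Fin n) R).map (D q) * ((h⁻¹ : GL (Fin n) R) : Matrix (Fin n) (Fin n) R)))

theorem cocycle_of_left (g h : GL (Fin n) R) (hg : ∀ p, (g : Matrix (Fin n) (Fin n) R).map (D p) = 0) :
    cocycle D g h = 0 := by
  ext p q; simp [cocycle, hg]

theorem cocycle_of_right (g h : GL (Fin n) R) (hh : ∀ p, (h : Matrix (Fin n) (Fin n) R).map (D p) = 0) :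
    cocycle D g h = 0 := by
  ext p q; simp [cocycle, hh]

theorem cocycle_one_left (h : GL (Fin n) R) : cocycle D 1 h = 0 :=
  cocycle_of_left D _ _ fun _ => map_one_derivation _

theorem cocycle_one_right (h : GL (Fin n) R) : cocycle D h 1 = 0 :=
  cocycle_of_right D _ _ fun _ => map_one_derivation _

/-- The cocycle identity. -/
theorem cocycle_assoc (g h l : GL (Fin n) R) :
    cocycle D g h + cocycle D (g * h) l = cocycle D h l + cocycle D g (h * l) := by
  ext p q
  simp only [cocycle, Matrix.add_apply, of_apply, Units.val_mul, _root_.mul_inv_rev, map_mul_derivation]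
  set G := (g : Matrix (Fin n) (Fin n) R)
  set H := (h : Matrix (Fin n) (Fin n) R)
  set G' := ((g⁻¹ : GL (Fin n) R) : Matrix (Fin n) (Fin n) R)
  set H' := ((h⁻¹ : GL (Fin n) R) : Matrix (Fin n) (Fin n) R)
  set L := (l : Matrix (Fin n) (Fin n) R)
  set L' := ((l⁻¹ : GL (Fin n) R) : Matrix (Fin n) (Fin n) R)
  have hG : G' * G = 1 := g.inv_mul
  have hL : L * L' = 1 := l.mul_inv
  have e1 : H' * G' * (G.map (D p) * H + G * H.map (D p)) * (L.map (D q) * L') =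
      H' * (G' * G.map (D p) * (H * (L.map (D q) * L'))) + H' * H.map (D p) * (L.map (D q) * L') := by
    have : H' * G' * (G * H.map (D p)) = H' * (G' * G) * H.map (D p) := by noncomm_ring
    rw [mul_add, add_mul, this, hG]; noncomm_ring
  have e2 : G' * G.map (D p) * ((H.map (D q) * L + H * L.map (D q)) * (L' * H')) =
      G' * G.map (D p) * (H.map (D q) * H') + G' * G.map (D p) * (H * (L.map (D q) * L')) * H' := by
    have : H.map (D q) * L * (L' * H') = H.map (D q) * (L * L') * H' := by noncomm_ring
    rw [add_mul, this, hL]; noncomm_ring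
  rw [e1, e2, trace_add, trace_add, trace_mul_comm H', ← sub_eq_zero]
  ring

/-- The elementary matrix `1 + c eᵢⱼ` as an invertible matrix. -/
def elem (i j : Fin n) (hij : i ≠ j) (c : R) : GL (Fin n) R where
  val := transvection i j c
  inv := transvection i j (-c)
  val_inv := by simp [transvection_mul_transvection_same i j hij]
  inv_val := by simp [transvection_mul_transvection_same i j hij]

theorem elem_mul (i j : Fin n) (hij : i ≠ j) (c d : R) :
    elem i j hij c * elem i j hij d = elem i j hij (c + d) :=
  Units.ext (transvection_mul_transvection_same i j hij c d)

theorem elem_zero (i j : Fin n) (hij : i ≠ j) : elem i j hij (0 : R) = 1 :=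
  Units.ext (transvection_zero i j)

theorem elem_inv (i j : Fin n) (hij : i ≠ j) (c : R) :
    (elem i j hij c)⁻¹ = elem i j hij (-c) := by
  rw [inv_eq_iff_mul_eq_one, elem_mul, add_neg_cancel, elem_zero]

theorem elem_map (d : Derivation k R R) (i j : Fin n) (hij : i ≠ j) (c : R) :
    (elem i j hij c : Matrix (Fin n) (Fin n) R).map d = single i j (d c) := by
  change (transvection i j c).map d = _
  have := map_one_derivation (n := n) d
  ext a b
  have h1 := congrFun (congrFun this a) b
  simp only [map_apply, Matrix.zero_apply] at h1
  rw [map_apply, transvection, Matrix.add_apply, map_add, h1, zero_add, single_apply, single_apply]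
  split_ifs <;> simp

theorem map_elem {S : Type*} [CommRing S] (f : R →+* S) (i j : Fin n) (hij : i ≠ j) (c : R) :
    GeneralLinearGroup.map f (elem i j hij c) = elem i j hij (f c) := by
  ext a b
  change f (transvection i j c a b) = transvection i j (f c) a b
  rw [transvection, transvection, Matrix.add_apply, Matrix.add_apply, map_add, single_apply,
    single_apply, one_apply, one_apply]
  split_ifs <;> simp

/-- If the left argument is elementary, then the cocycle has rank at most one. This is the source of
the bound on the rank of the form of a short word. -/
theorem cocycle_elem_left (i j : Fin n) (hij : i ≠ j) (c : R) (h : GL (Fin n) R) :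
    cocycle D (elem i j hij c) h = vecMulVec (fun p => D p c) (fun q =>
      ((h : Matrix (Fin n) (Fin n) R).map (D q) *
        ((h⁻¹ : GL (Fin n) R) : Matrix (Fin n) (Fin n) R)) j i) := by
  ext p q
  have : (transvection i j (-c)) * single i j (D p c) = single i j (D p c) := by
    rw [transvection, add_mul, one_mul, single_mul_single_of_ne _ _ _ _ hij.symm, add_zero]
  rw [cocycle, of_apply, elem_map, elem_inv]
  change trace (transvection i j (-c) * _ * _) = _
  rw [this, trace_single_mul, vecMulVec_apply, smul_eq_mul]

/-- The form of a word `e₁ ⋯ e_m`, namely `∑ᵢ cocycle(eᵢ, eᵢ₊₁ ⋯ e_m)`: the central component of the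
product of the canonical lifts of the letters in the extension defined by the cocycle. -/
def wordForm : List (GL (Fin n) R) → Matrix (Fin N) (Fin N) R
  | [] => 0
  | e :: l => wordForm l + cocycle D e l.prod

variable {S : Type*} [CommRing S] [Algebra k S] (D' : Fin N → Derivation k S S)

theorem cocycle_map (f : R →+* S) (hf : ∀ p x, f (D p x) = D' p (f x)) (g h : GL (Fin n) R) :
    cocycle D' (GeneralLinearGroup.map f g) (GeneralLinearGroup.map f h) = (cocycle D g h).map f := by
  have key : ∀ p (g : GL (Fin n) R), (GeneralLinearGroup.map f g : Matrix (Fin n) (Fin n) S).map (D' p) =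
      ((g : Matrix (Fin n) (Fin n) R).map (D p)).map f := by
    intro p g; ext i j; simp [hf]
  ext p q
  simp only [cocycle, of_apply, key, map_apply, ← map_inv]
  change trace ((_ : Matrix _ _ R).map f * _ * (_ * (_ : Matrix _ _ R).map f)) = _
  rw [← Matrix.map_mul, ← Matrix.map_mul, ← Matrix.map_mul, trace, trace, map_sum]
  rfl

/-- The form of a word is natural for homomorphisms of differential rings. -/
theorem wordForm_map (f : R →+* S) (hf : ∀ p x, f (D p x) = D' p (f x)) (l : List (GL (Fin n) R)) :
    wordForm D' (l.map (GeneralLinearGroup.map f)) = (wordForm D l).map f := by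
  induction l with
  | nil => ext; simp [wordForm]
  | cons e l ih =>
    rw [List.map_cons, wordForm, wordForm, ih, ← map_list_prod, cocycle_map D D' f hf,
      Matrix.map_add _ (map_add f)]

theorem wordForm_of_forall_eq_one (l : List (GL (Fin n) R)) (hl : ∀ e ∈ l, e = 1) :
    wordForm D l = 0 := by
  induction l with
  | nil => rfl
  | cons e l ih =>
    rw [wordForm, ih fun x hx => hl x (List.mem_cons_of_mem _ hx), hl e List.mem_cons_self,
      cocycle_one_left, add_zero]

end Cocycle

/-! ### The rank of a word form -/

section Rank
variable {k F : Type*} [CommRing k] [Field F] [Algebra k F] {n N : ℕ}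

theorem rank_add_le' (A B : Matrix (Fin N) (Fin N) F) : (A + B).rank ≤ A.rank + B.rank := by
  rw [rank, rank, rank, mulVecLin_add]
  calc _ ≤ Module.finrank F ↥(LinearMap.range A.mulVecLin ⊔ LinearMap.range B.mulVecLin) :=
        Submodule.finrank_mono (LinearMap.range_add_le _ _)
    _ ≤ _ := Submodule.finrank_add_le_finrank_add_finrank _ _

theorem rank_wordForm_le (D : Fin N → Derivation k F F) (l : List (GL (Fin n) F))
    (hl : ∀ e ∈ l, ∃ i j, ∃ hij : i ≠ j, ∃ c, e = elem i j hij c) :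
    (wordForm D l).rank ≤ l.length := by
  induction l with
  | nil => simp [wordForm]
  | cons e l ih =>
    obtain ⟨i, j, hij, c, rfl⟩ := hl e List.mem_cons_self
    rw [wordForm, List.length_cons, cocycle_elem_left]
    exact (rank_add_le' _ _).trans (add_le_add
      (ih fun x hx => hl x (List.mem_cons_of_mem _ hx)) (rank_vecMulVec_le _ _))

end Rank

section TestWord
variable {k R : Type*} [CommRing k] [CommRing R] [Algebra k R] {n N : ℕ}
/-- The word `∏ₚ eᵢⱼ(tₚ) eⱼᵢ(tₚ)`, with `p` running through the given list. -/
def testWord (i j : Fin n) (hij : i ≠ j) (t : Fin N → R) : List (Fin N) → List (GL (Fin n) R)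
  | [] => []
  | p :: l => elem i j hij (t p) :: elem j i hij.symm (t p) :: testWord i j hij t l

theorem testWord_prod_map (i j : Fin n) (hij : i ≠ j) (t : Fin N → R) (D : Derivation k R R)
    (l : List (Fin N)) (hl : ∀ p ∈ l, D (t p) = 0) :
    ((testWord i j hij t l).prod : Matrix (Fin n) (Fin n) R).map D = 0 := by
  induction l with
  | nil => exact map_one_derivation D
  | cons p l ih =>
    have hp := hl p List.mem_cons_self
    simp only [testWord, List.prod_cons, Units.val_mul, map_mul_derivation, elem_map, hp,
      ih fun x hx => hl x (List.mem_cons_of_mem _ hx)]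
    simp

/-- If the derivations are dual to the parameters, then the form of the test word is triangular with
ones on the diagonal: derivations not dual to a later parameter kill the remaining word. -/
theorem testWord_form (i j : Fin n) (hij : i ≠ j) (t : Fin N → R) (D : Fin N → Derivation k R R)
    (hD : ∀ p q, D p (t q) = if p = q then 1 else 0) (l : List (Fin N)) (hl : l.Pairwise (· < ·)) :
    (∀ p q, p ∉ l → wordForm D (testWord i j hij t l) p q = 0) ∧
    (∀ p q, q < p → wordForm D (testWord i j hij t l) p q = 0) ∧
    (∀ p ∈ l, wordForm D (testWord i j hij t l) p p = 1) := by
  induction l with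
  | nil => simp [testWord, wordForm]
  | cons a l ih =>
    rw [List.pairwise_cons] at hl
    obtain ⟨h1, h2, h3⟩ := ih hl.2
    have ha : a ∉ l := fun h => lt_irrefl _ (hl.1 a h)
    have off : ∀ p q, p ≠ a →
        wordForm D (testWord i j hij t (a :: l)) p q = wordForm D (testWord i j hij t l) p q := by
      intro p q hp
      simp [testWord, wordForm, cocycle_elem_left, vecMulVec_apply, hD, hp]
    have diag : ∀ q, q ≤ a →
        wordForm D (testWord i j hij t (a :: l)) a q = if q = a then 1 else 0 := by
      intro q hq
      have hz := testWord_prod_map i j hij t (D q) l fun p hp => by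
        rw [hD, if_neg (hq.trans_lt (hl.1 p hp)).ne]
      simp only [testWord, wordForm, cocycle_elem_left, vecMulVec_apply, hD, Matrix.add_apply, h1 a q ha,
        List.prod_cons, Units.val_mul, map_mul_derivation, hz, elem_map, _root_.mul_inv_rev]
      rw [Matrix.zero_mul, Matrix.mul_zero, add_zero, Matrix.mul_assoc,
        ← Matrix.mul_assoc (testWord i j hij t l).prod.val, ← Units.val_mul, mul_inv_cancel,
        Units.val_one, Matrix.one_mul, elem_inv]
      change _ + _ * (single j i _ * transvection j i (-t a) : Matrix (Fin n) (Fin n) R) j i = _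
      rw [transvection, mul_add, Matrix.mul_one, single_mul_single_of_ne _ _ _ _ hij]
      simp
    refine ⟨fun p q hp => ?_, fun p q hqp => ?_, fun p hp => ?_⟩
    · rw [List.mem_cons, not_or] at hp
      rw [off p q hp.1, h1 p q hp.2]
    · by_cases h : p = a
      · subst h; rw [diag q hqp.le, if_neg hqp.ne]
      · rw [off p q h, h2 p q hqp]
    · by_cases h : p = a
      · subst h; rw [diag p le_rfl, if_pos rfl]
      · rw [off p p h, h3 p ((List.mem_cons.1 hp).resolve_left h)]

theorem testWord_rank {F : Type*} [Field F] [Algebra k F] (i j : Fin n) (hij : i ≠ j) (t : Fin N → F)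
    (D : Fin N → Derivation k F F) (hD : ∀ p q, D p (t q) = if p = q then 1 else 0) :
    (wordForm D (testWord i j hij t (List.finRange N))).rank = N := by
  obtain ⟨-, h2, h3⟩ := testWord_form i j hij t D hD (List.finRange N) (List.pairwise_lt_finRange N)
  rw [rank_of_isUnit, Fintype.card_fin]
  rw [isUnit_iff_isUnit_det, det_of_isUpperTriangular fun p q hpq => h2 p q hpq]
  simp [h3]
end TestWord

/-! ### Central extensions from cocycles -/

section Extension

/-- A normalized 2-cocycle on `G` with values in `A`, for the trivial action. -/
structure TwoCocycle (G A : Type*) [Group G] [AddCommGroup A] where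
  toFun : G → G → A
  assoc : ∀ g h l, toFun g h + toFun (g * h) l = toFun h l + toFun g (h * l)
  one_left : ∀ g, toFun 1 g = 0
  one_right : ∀ g, toFun g 1 = 0

variable {G A : Type*} [Group G] [AddCommGroup A]

/-- The central extension of `G` by `A` defined by a 2-cocycle, with underlying set `G × A`. -/
@[ext]
structure TwoCocycle.Ext (z : TwoCocycle G A) where
  base : G
  fib : A

namespace TwoCocycle.Ext
variable {z : TwoCocycle G A}

instance : Mul z.Ext := ⟨fun x y => ⟨x.base * y.base, x.fib + y.fib + z.toFun x.base y.base⟩⟩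
instance : One z.Ext := ⟨⟨1, 0⟩⟩
instance : Inv z.Ext := ⟨fun x => ⟨x.base⁻¹, -x.fib - z.toFun x.base⁻¹ x.base⟩⟩

theorem mul_base (x y : z.Ext) : (x * y).base = x.base * y.base := rfl
theorem mul_fib (x y : z.Ext) : (x * y).fib = x.fib + y.fib + z.toFun x.base y.base := rfl
theorem one_base : (1 : z.Ext).base = 1 := rfl
theorem one_fib : (1 : z.Ext).fib = 0 := rfl
theorem inv_base (x : z.Ext) : (x⁻¹).base = x.base⁻¹ := rfl
theorem inv_fib (x : z.Ext) : (x⁻¹).fib = -x.fib - z.toFun x.base⁻¹ x.base := rfl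

instance : Group z.Ext := Group.ofLeftAxioms
  (fun x y w => by
    ext
    · simp only [mul_base, mul_assoc]
    · simp only [mul_fib, mul_base]
      have := z.assoc x.base y.base w.base
      rw [← sub_eq_zero] at this ⊢
      rw [← this]; abel)
  (fun x => by
    ext
    · simp only [mul_base, one_base, one_mul]
    · simp only [mul_fib, one_base, one_fib, z.one_left, zero_add, add_zero])
  (fun x => by
    ext
    · simp only [mul_base, one_base, inv_base, inv_mul_cancel]
    · simp only [mul_fib, one_fib, inv_fib, inv_base]; abel)

/-- The canonical section `g ↦ (g, 0)`, which is multiplicative only up to the cocycle. -/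
def sec (g : G) : z.Ext := ⟨g, 0⟩

theorem sec_mul_of {g h : G} (hz : z.toFun g h = 0) : (sec g * sec h : z.Ext) = sec (g * h) := by
  ext
  · rfl
  · simp only [mul_fib, sec, hz, add_zero]

theorem sec_one : (sec 1 : z.Ext) = 1 := rfl

/-- Since `x⁻¹ y` is central when `x` and `y` have the same base, its fibre component is the
difference of those of `y` and `x`. -/
theorem fib_eq_of_same_base {x y : z.Ext} (hb : x.base = y.base) (h : (x⁻¹ * y).fib = 0) :
    x.fib = y.fib := by
  have hx : x * (x⁻¹ * y) = y := mul_inv_cancel_left x y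
  have hb' : (x⁻¹ * y).base = 1 := by rw [mul_base, inv_base, hb, inv_mul_cancel]
  have := congrArg TwoCocycle.Ext.fib hx
  rwa [mul_fib, h, hb', z.one_right, add_zero, add_zero] at this

end TwoCocycle.Ext
end Extension

/-! ### Logarithmic forms and the Bruhat decomposition of the extension -/

section BN
variable {k K : Type*} [CommRing k] [Field K] [Algebra k K] {n N : ℕ}
  (D : Fin N → Derivation k K K)

/-- The additive group generated by the matrices `(D_p(a)/a · D_q(b)/b)` for `a`, `b` in the field. The
values `a = 0` and `b = 0` give the zero matrix, as division by zero is zero. -/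
def logForms : AddSubgroup (Matrix (Fin N) (Fin N) K) :=
  AddSubgroup.closure {M | ∃ a b : K,
    M = vecMulVec (fun p => D p a / a) (fun q => D q b / b)}

variable (n) in
/-- The trace cocycle reduced modulo logarithmic forms. -/
def logCocycle : TwoCocycle (GL (Fin n) K) (Matrix (Fin N) (Fin N) K ⧸ logForms D) where
  toFun g h := QuotientAddGroup.mk (cocycle D g h)
  assoc g h l := by
    rw [← QuotientAddGroup.mk_add, ← QuotientAddGroup.mk_add, cocycle_assoc]
  one_left g := by rw [cocycle_one_left, QuotientAddGroup.mk_zero]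
  one_right g := by rw [cocycle_one_right, QuotientAddGroup.mk_zero]

theorem logCocycle_eq_zero {g h : GL (Fin n) K} (H : cocycle D g h ∈ logForms D) :
    (logCocycle n D).toFun g h = 0 := (QuotientAddGroup.eq_zero_iff _).mpr H

/-- Membership in the Borel subgroup of upper triangular matrices. -/
def Upper (g : GL (Fin n) K) : Prop :=
  ∀ i j : Fin n, j < i → (g : Matrix (Fin n) (Fin n) K) i j = 0

theorem Upper.mul {g h : GL (Fin n) K} (hg : Upper g) (hh : Upper h) : Upper (g * h) :=
  fun _ _ hij => BlockTriangular.mul (b := id) (M := g.val) (N := h.val)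
    (fun a b => hg a b) (fun a b => hh a b) hij

theorem Upper.inv {g : GL (Fin n) K} (hg : Upper g) : Upper g⁻¹ := by
  intro i j hij
  rw [coe_units_inv]
  let _ := g.invertible
  exact blockTriangular_inv_of_blockTriangular (b := id) (M := g.val) (fun a b => hg a b) hij

theorem upper_mul_diag {A B : Matrix (Fin n) (Fin n) K} (hA : ∀ i j, j < i → A i j = 0)
    (hB : ∀ i j, j < i → B i j = 0) (i : Fin n) : (A * B) i i = A i i * B i i := by
  rw [mul_apply]
  refine Finset.sum_eq_single i (fun j _ hj => ?_) (by simp)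
  rcases lt_or_gt_of_ne hj with h | h
  · rw [hA i j h, zero_mul]
  · rw [hB j i h, mul_zero]

theorem Upper.diag_ne_zero {g : GL (Fin n) K} (hg : Upper g) (i : Fin n) : g.val i i ≠ 0 := by
  intro h
  have := upper_mul_diag hg hg.inv i
  rw [g.mul_inv, h, zero_mul, one_apply_eq] at this
  exact one_ne_zero this

theorem Upper.inv_diag {g : GL (Fin n) K} (hg : Upper g) (i : Fin n) :
    (g⁻¹).val i i = (g.val i i)⁻¹ := by
  have := upper_mul_diag hg hg.inv i
  rw [g.mul_inv, one_apply_eq] at this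
  exact eq_inv_of_mul_eq_one_right this.symm

/-- On upper triangular matrices the trace only sees the diagonal entries, so the cocycle is a sum of
logarithmic forms. -/
theorem Upper.cocycle_mem {g h : GL (Fin n) K} (hg : Upper g) (hh : Upper h) :
    cocycle D g h ∈ logForms D := by
  have hm : ∀ {b : GL (Fin n) K} (p), Upper b → ∀ i j, j < i → (b.val.map (D p)) i j = 0 := by
    intro b p hb i j hij
    rw [map_apply, hb i j hij, map_zero]
  have : cocycle D g h = ∑ i, vecMulVec (fun p => D p (g.val i i) / g.val i i)
      (fun q => D q (h.val i i) / h.val i i) := by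
    ext p q
    rw [Matrix.sum_apply, cocycle, of_apply, trace]
    refine Finset.sum_congr rfl fun i _ => ?_
    have u1 : ∀ i j, j < i → ((g⁻¹).val * g.val.map (D p)) i j = 0 := fun i j hij =>
      BlockTriangular.mul (b := id) (fun a b => hg.inv a b) (fun a b => hm p hg a b) hij
    have u2 : ∀ i j, j < i → (h.val.map (D q) * (h⁻¹).val) i j = 0 := fun i j hij =>
      BlockTriangular.mul (b := id) (fun a b => hm q hh a b) (fun a b => hh.inv a b) hij
    rw [diag_apply, upper_mul_diag u1 u2, upper_mul_diag hg.inv (hm p hg),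
      upper_mul_diag (hm q hh) hh.inv, hg.inv_diag, hh.inv_diag, vecMulVec_apply, map_apply, map_apply]
    ring
  rw [this]
  exact sum_mem fun i _ => AddSubgroup.subset_closure ⟨_, _, rfl⟩

theorem upper_elem {i j : Fin n} (hij : i < j) (c : K) : Upper (elem i j hij.ne c) := by
  intro a b hab
  change transvection i j c a b = 0
  rw [transvection, Matrix.add_apply, one_apply_ne hab.ne', single_apply_of_ne, add_zero]
  rintro ⟨rfl, rfl⟩
  exact lt_asymm hij hab

/-- The permutation matrix sending the basis vector `eⱼ` to `e_{σ j}`. -/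
def permGL : Equiv.Perm (Fin n) →* GL (Fin n) K where
  toFun σ :=
    { val := (σ⁻¹).permMatrix K
      inv := σ.permMatrix K
      val_inv := by rw [← permMatrix_mul, mul_inv_cancel, permMatrix_one]
      inv_val := by rw [← permMatrix_mul, inv_mul_cancel, permMatrix_one] }
  map_one' := Units.ext (by simp)
  map_mul' σ τ := Units.ext (by
    change (σ * τ)⁻¹.permMatrix K = σ⁻¹.permMatrix K * τ⁻¹.permMatrix K
    rw [_root_.mul_inv_rev, permMatrix_mul])

theorem permGL_mul_apply (σ : Equiv.Perm (Fin n)) (g : GL (Fin n) K) (a b : Fin n) :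
    (permGL σ * g).val a b = g.val (σ⁻¹ a) b := by
  change ((σ⁻¹).permMatrix K * g.val) a b = _
  rw [Equiv.Perm.permMatrix, PEquiv.toMatrix_toPEquiv_mul]; rfl

theorem mul_permGL_apply (σ : Equiv.Perm (Fin n)) (g : GL (Fin n) K) (a b : Fin n) :
    (g * permGL σ).val a b = g.val a (σ b) := by
  change (g.val * (σ⁻¹).permMatrix K) a b = _
  rw [Equiv.Perm.permMatrix, PEquiv.mul_toMatrix_toPEquiv]; rfl

theorem permGL_map (σ : Equiv.Perm (Fin n)) (d : Derivation k K K) :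
    (permGL σ : GL (Fin n) K).val.map d = 0 := by
  ext a b
  have := mul_permGL_apply σ (1 : GL (Fin n) K) a b
  rw [one_mul] at this
  rw [map_apply, this, Units.val_one, one_apply]
  split_ifs <;> simp

theorem permGL_mul_elem (σ : Equiv.Perm (Fin n)) (i j : Fin n) (hij : i ≠ j) (c : K) :
    permGL σ * elem i j hij c = elem (σ i) (σ j) (σ.injective.ne hij) c * permGL σ := by
  ext a b
  rw [permGL_mul_apply, mul_permGL_apply]
  change transvection i j c _ _ = transvection (σ i) (σ j) c _ _
  have h1 : (1 : Matrix (Fin n) (Fin n) K) (σ⁻¹ a) b = (1 : Matrix (Fin n) (Fin n) K) a (σ b) := by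
    rw [one_apply, one_apply]; simp only [Equiv.Perm.inv_eq_iff_eq]
  have h2 : i = σ⁻¹ a ↔ σ i = a := by rw [Equiv.Perm.eq_inv_iff_eq]
  rw [transvection, transvection, Matrix.add_apply, Matrix.add_apply, h1, single_apply, single_apply]
  simp only [h2, σ.injective.eq_iff]

open TwoCocycle.Ext

theorem sec_permGL_mul (σ : Equiv.Perm (Fin n)) (g : GL (Fin n) K) :
    (sec (permGL σ) * sec g : (logCocycle n D).Ext) = sec (permGL σ * g) :=
  sec_mul_of (logCocycle_eq_zero D (by
    rw [cocycle_of_left D _ _ fun p => permGL_map σ (D p)]; exact zero_mem _))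

theorem sec_mul_permGL (σ : Equiv.Perm (Fin n)) (g : GL (Fin n) K) :
    (sec g * sec (permGL σ) : (logCocycle n D).Ext) = sec (g * permGL σ) :=
  sec_mul_of (logCocycle_eq_zero D (by
    rw [cocycle_of_right D _ _ fun p => permGL_map σ (D p)]; exact zero_mem _))

theorem sec_upper_mul {g h : GL (Fin n) K} (hg : Upper g) (hh : Upper h) :
    (sec g * sec h : (logCocycle n D).Ext) = sec (g * h) :=
  sec_mul_of (logCocycle_eq_zero D (hg.cocycle_mem D hh))

theorem cocycle_elem_same (i j : Fin n) (hij : i ≠ j) (c d : K) :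
    cocycle D (elem i j hij c) (elem i j hij d) = 0 := by
  rw [cocycle_elem_left]
  ext p q
  rw [vecMulVec_apply, elem_map, elem_inv]
  change _ * (single i j _ * transvection i j (-d) : Matrix (Fin n) (Fin n) K) j i = _
  rw [transvection, mul_add, Matrix.mul_one, single_mul_single_of_ne _ _ _ _ hij.symm, add_zero,
    single_apply_of_ne _ _ _ _ _ (by simp [hij]), mul_zero, Matrix.zero_apply]

theorem sec_elem_same (i j : Fin n) (hij : i ≠ j) (c d : K) :
    (sec (elem i j hij c) * sec (elem i j hij d) : (logCocycle n D).Ext) =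
      sec (elem i j hij (c + d)) := by
  rw [← elem_mul]
  exact sec_mul_of (logCocycle_eq_zero D (by rw [cocycle_elem_same]; exact zero_mem _))

theorem cocycle_elem_opp_mem (i j : Fin n) (hij : i ≠ j) (c : K) :
    cocycle D (elem j i hij.symm c) (elem i j hij (-c⁻¹)) ∈ logForms D := by
  have : cocycle D (elem j i hij.symm c) (elem i j hij (-c⁻¹)) =
      vecMulVec (fun p => D p c / c) (fun q => D q c / c) := by
    rw [cocycle_elem_left]
    ext p q
    rw [vecMulVec_apply, vecMulVec_apply, elem_map, elem_inv]
    change _ * (single i j _ * transvection i j (- -c⁻¹) : Matrix (Fin n) (Fin n) K) i j = _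
    rw [transvection, mul_add, Matrix.mul_one, single_mul_single_of_ne _ _ _ _ hij.symm, add_zero,
      single_apply_same, map_neg, Derivation.leibniz_inv, smul_eq_mul]
    ring
  rw [this]
  exact AddSubgroup.subset_closure ⟨_, _, rfl⟩

/-- For adjacent indices, the relation writing a lower elementary matrix as an element of `B s U` lifts to the
extension without correction term. -/
theorem sec_elem_opp {i j : Fin n} (hij : i < j) (hadj : ∀ a, i < a → j ≤ a) {c : K} (hc : c ≠ 0) :
    ∃ b : GL (Fin n) K, Upper b ∧ (sec (elem j i hij.ne' c) : (logCocycle n D).Ext) =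
      sec b * sec (permGL (Equiv.swap i j)) * sec (elem i j hij.ne c⁻¹) := by
  set s := Equiv.swap i j
  have hss : (permGL s * permGL s : GL (Fin n) K) = 1 := by
    rw [← map_mul, Equiv.swap_mul_self, map_one]
  refine ⟨elem j i hij.ne' c * elem i j hij.ne (-c⁻¹) * permGL s, ?_, ?_⟩
  · intro p q hqp
    rw [mul_permGL_apply]
    change (transvection j i c * transvection i j (-c⁻¹) : Matrix (Fin n) (Fin n) K) p (s q) = 0
    have hM : (transvection j i c * transvection i j (-c⁻¹) : Matrix (Fin n) (Fin n) K) =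
        1 + single j i c + single i j (-c⁻¹) + single j j (-1) := by
      rw [transvection, transvection, add_mul, mul_add, mul_add, single_mul_single_same,
        mul_neg, mul_inv_cancel₀ hc]
      simp only [Matrix.mul_one, Matrix.one_mul]
      abel
    rw [hM]
    simp only [Matrix.add_apply, one_apply, single_apply]
    by_cases hqi : q = i
    · subst hqi
      rw [Equiv.swap_apply_left]
      have h1 : q ≠ p := hqp.ne
      by_cases hp : p = j
      · subst hp; simp [h1]
      · simp [h1, hp, Ne.symm hp, hij.ne]
    by_cases hqj : q = j
    · subst hqj
      rw [Equiv.swap_apply_right]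
      have h1 : p ≠ i := (hij.trans hqp).ne'
      simp [h1, hqp.ne, hij.ne']
    · rw [Equiv.swap_apply_of_ne_of_ne hqi hqj]
      simp [Ne.symm hqi, Ne.symm hqj, hqp.ne']
  · rw [sec_mul_permGL, mul_assoc (_ * _), hss, mul_one,
      ← sec_mul_of (logCocycle_eq_zero D (cocycle_elem_opp_mem D i j hij.ne c)), mul_assoc,
      sec_elem_same, neg_add_cancel, elem_zero, sec_one, mul_one]

/-- The union of the lifted Bruhat cells: products of canonical lifts of an upper triangular matrix, a
permutation matrix and an upper triangular matrix. -/
def bruhatSet : Set (logCocycle n D).Ext :=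
  {x | ∃ (b : GL (Fin n) K) (σ : Equiv.Perm (Fin n)) (b' : GL (Fin n) K), Upper b ∧ Upper b' ∧
    x = sec b * sec (permGL σ) * sec b'}

theorem upper_mul_mem {b : GL (Fin n) K} (hb : Upper b) {x : (logCocycle n D).Ext}
    (hx : x ∈ bruhatSet D) : sec b * x ∈ bruhatSet D := by
  obtain ⟨b₁, σ, b₂, h₁, h₂, rfl⟩ := hx
  refine ⟨b * b₁, σ, b₂, hb.mul h₁, h₂, ?_⟩
  rw [← sec_upper_mul D hb h₁]; group

theorem sec_permGL_mul_sec (σ τ : Equiv.Perm (Fin n)) :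
    (sec (permGL σ) * sec (permGL τ) : (logCocycle n D).Ext) = sec (permGL (σ * τ)) := by
  rw [sec_permGL_mul, map_mul]

theorem upper_one : Upper (1 : GL (Fin n) K) := fun _ _ hij => one_apply_ne hij.ne'

theorem perm_upper_mem (σ : Equiv.Perm (Fin n)) {b : GL (Fin n) K} (hb : Upper b) :
    (sec (permGL σ) * sec b : (logCocycle n D).Ext) ∈ bruhatSet D :=
  ⟨1, σ, b, upper_one, hb, by rw [sec_one, one_mul]⟩

theorem conj_elem (σ : Equiv.Perm (Fin n)) (i j : Fin n) (hij : i ≠ j) (c : K) :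
    (sec (permGL σ) * sec (elem i j hij c) : (logCocycle n D).Ext) =
      sec (elem (σ i) (σ j) (σ.injective.ne hij) c) * sec (permGL σ) := by
  rw [sec_permGL_mul, permGL_mul_elem, sec_mul_permGL]

theorem conj_elem' (σ : Equiv.Perm (Fin n)) (i j : Fin n) (hij : i ≠ j) (c : K) :
    (sec (elem i j hij c) * sec (permGL σ) : (logCocycle n D).Ext) =
      sec (permGL σ) * sec (elem (σ⁻¹ i) (σ⁻¹ j) (σ⁻¹.injective.ne hij) c) := by
  rw [conj_elem]
  simp

theorem swap_elem_mem {i j : Fin n} (hij : i < j) (hadj : ∀ a, i < a → j ≤ a) (c : K)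
    (σ : Equiv.Perm (Fin n)) {b : GL (Fin n) K} (hb : Upper b) :
    (sec (permGL (Equiv.swap i j)) * (sec (elem i j hij.ne c) * (sec (permGL σ) * sec b)) :
      (logCocycle n D).Ext) ∈ bruhatSet D := by
  -- If `σ⁻¹` keeps the root `(i, j)` positive, then the elementary factor passes across `σ`.
  have pos : ∀ (τ σ : Equiv.Perm (Fin n)) (c : K), σ⁻¹ i < σ⁻¹ j →
      (sec (permGL τ) * (sec (elem i j hij.ne c) * (sec (permGL σ) * sec b)) :
        (logCocycle n D).Ext) ∈ bruhatSet D := by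
    intro τ σ c hσ
    rw [← mul_assoc (sec (elem i j hij.ne c)), conj_elem', mul_assoc,
      sec_upper_mul D (upper_elem hσ c) hb, ← mul_assoc, sec_permGL_mul_sec]
    exact perm_upper_mem D _ ((upper_elem hσ c).mul hb)
  by_cases hσ : σ⁻¹ i < σ⁻¹ j
  · exact pos _ σ c hσ
  have hlt : σ⁻¹ j < σ⁻¹ i := lt_of_le_of_ne (not_lt.mp hσ) (σ⁻¹.injective.ne hij.ne')
  by_cases hc : c = 0
  · subst hc
    rw [elem_zero, sec_one, one_mul, ← mul_assoc, sec_permGL_mul_sec]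
    exact perm_upper_mem D _ hb
  obtain ⟨b₀, hb₀, h₀⟩ := sec_elem_opp D hij hadj hc
  have e : (sec (permGL (Equiv.swap i j)) * sec (elem i j hij.ne c) : (logCocycle n D).Ext) =
      sec (elem j i hij.ne' c) * sec (permGL (Equiv.swap i j)) := by
    rw [conj_elem]; simp
  rw [← mul_assoc, e, mul_assoc, ← mul_assoc (sec (permGL (Equiv.swap i j))), sec_permGL_mul_sec,
    h₀, mul_assoc, mul_assoc]
  refine upper_mul_mem D hb₀ (pos _ _ _ ?_)
  simpa using hlt

/-- The union of the cells is stable under simple reflections. The upper triangular factor splits as a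
part normalized by the reflection times an elementary matrix. -/
theorem swap_mul_mem {i j : Fin n} (hij : i < j) (hadj : ∀ a, i < a → j ≤ a)
    {x : (logCocycle n D).Ext} (hx : x ∈ bruhatSet D) :
    sec (permGL (Equiv.swap i j)) * x ∈ bruhatSet D := by
  obtain ⟨b₁, σ, b₂, h₁, h₂, rfl⟩ := hx
  set s := Equiv.swap i j with hs
  set c := b₁.val i j / b₁.val i i with hc
  have hx := upper_elem hij c
  have hx' := upper_elem hij (-c)
  set b₀ := b₁ * elem i j hij.ne (-c) with hb₀
  have h₀ : Upper b₀ := h₁.mul hx'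
  have hb₁ : b₁ = b₀ * elem i j hij.ne c := by
    rw [hb₀, mul_assoc, elem_mul, neg_add_cancel, elem_zero, mul_one]
  have h₀ij : b₀.val i j = 0 := by
    change (b₁.val * transvection i j (-c)) i j = 0
    rw [mul_transvection_apply_same, hc]
    field_simp [h₁.diag_ne_zero i]
    ring
  have hss : (permGL s * permGL s : GL (Fin n) K) = 1 := by
    rw [← map_mul, Equiv.swap_mul_self, map_one]
  have hconj : Upper (permGL s * b₀ * permGL s) := by
    intro p q hqp
    rw [mul_permGL_apply, permGL_mul_apply, hs, Equiv.swap_inv]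
    by_cases h : p = j ∧ q = i
    · rw [h.1, h.2, Equiv.swap_apply_right, Equiv.swap_apply_left, h₀ij]
    · apply h₀
      rw [not_and_or] at h
      simp only [Equiv.swap_apply_def]
      have := hadj p
      have := hadj q
      split_ifs <;> simp only [Fin.lt_def, Fin.le_def, Fin.ext_iff] at * <;> omega
  have e : (sec (permGL s) * sec b₀ : (logCocycle n D).Ext) =
      sec (permGL s * b₀ * permGL s) * sec (permGL s) := by
    rw [sec_permGL_mul, sec_mul_permGL, mul_assoc (permGL s * b₀), hss, mul_one]
  have : (sec (permGL s) * (sec b₁ * sec (permGL σ) * sec b₂) : (logCocycle n D).Ext) =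
      sec (permGL s * b₀ * permGL s) *
        (sec (permGL s) * (sec (elem i j hij.ne c) * (sec (permGL σ) * sec b₂))) := by
    rw [hb₁, ← sec_upper_mul D h₀ hx, ← mul_assoc (sec (permGL s * b₀ * permGL s)), ← e]
    simp only [mul_assoc]
  rw [this]
  exact upper_mul_mem D hconj (swap_elem_mem D hij hadj c σ h₂)

theorem perm_mul_mem (σ : Equiv.Perm (Fin n)) {x : (logCocycle n D).Ext} (hx : x ∈ bruhatSet D) :
    sec (permGL σ) * x ∈ bruhatSet D := by
  cases n with
  | zero =>
    rw [Subsingleton.elim σ 1, map_one, sec_one, one_mul]; exact hx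
  | succ n =>
    have hσ : σ ∈ Submonoid.closure
        (Set.range fun i : Fin n => Equiv.swap i.castSucc i.succ) := by
      rw [Equiv.Perm.mclosure_swap_castSucc_succ]; trivial
    induction hσ using Submonoid.closure_induction generalizing x with
    | mem τ hτ =>
      obtain ⟨i, rfl⟩ := hτ
      exact swap_mul_mem D Fin.castSucc_lt_succ (fun a ha => Fin.castSucc_lt_iff_succ_le.mp ha) hx
    | one => rwa [map_one, sec_one, one_mul]
    | mul σ τ _ _ h₁ h₂ =>
      rw [← sec_permGL_mul_sec, mul_assoc]; exact h₁ (h₂ hx)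

theorem elem_mul_mem (i j : Fin n) (hij : i ≠ j) (c : K) {x : (logCocycle n D).Ext}
    (hx : x ∈ bruhatSet D) : sec (elem i j hij c) * x ∈ bruhatSet D := by
  rcases lt_or_gt_of_ne hij with h | h
  · exact upper_mul_mem D (upper_elem h c) hx
  · set s := Equiv.swap i j with hs
    have hss : (sec (permGL s) * sec (permGL s) : (logCocycle n D).Ext) = 1 := by
      rw [sec_permGL_mul_sec, hs, Equiv.swap_mul_self, map_one, sec_one]
    have e : (sec (elem i j hij c) : (logCocycle n D).Ext) =
        sec (permGL s) * sec (elem j i hij.symm c) * sec (permGL s) := by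
      rw [conj_elem, mul_assoc, hss, mul_one]; simp [hs]
    rw [e, mul_assoc, mul_assoc]
    exact perm_mul_mem D _ (upper_mul_mem D (upper_elem h c) (perm_mul_mem D _ hx))

theorem one_mem_bruhatSet : (1 : (logCocycle n D).Ext) ∈ bruhatSet D :=
  ⟨1, 1, 1, upper_one, upper_one, by simp [sec_one]⟩

/-- The union of the cells meets the centre `A` only in the identity. -/
theorem fib_eq_zero_of_mem {x : (logCocycle n D).Ext} (hx : x ∈ bruhatSet D) (h1 : x.base = 1) :
    x.fib = 0 := by
  obtain ⟨b, σ, b', hb, hb', rfl⟩ := hx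
  rw [sec_mul_permGL] at h1 ⊢
  have h1 : b * permGL σ * b' = 1 := h1
  have hu : Upper (b * permGL σ) := by
    rw [mul_eq_one_iff_eq_inv.mp h1]; exact hb'.inv
  have hprod := sec_upper_mul D hu hb'
  rw [hprod]
  rfl

/-- Elementary matrices, as elements of `GL_n`. -/
def IsElem {R : Type*} [CommRing R] (e : GL (Fin n) R) : Prop :=
  ∃ i j, ∃ hij : i ≠ j, ∃ c, e = elem i j hij c

theorem prod_sec (l : List (GL (Fin n) K)) :
    ((l.map sec).prod : (logCocycle n D).Ext) =
      ⟨l.prod, QuotientAddGroup.mk (wordForm D l)⟩ := by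
  induction l with
  | nil => rfl
  | cons e l ih =>
    rw [List.map_cons, List.prod_cons, ih]
    ext
    · rfl
    · change (0 : _ ⧸ _) + QuotientAddGroup.mk (wordForm D l) + QuotientAddGroup.mk _ = _
      rw [zero_add]; rfl

/-- Modulo logarithmic forms, the form of a word in elementary matrices depends only on the product of
the word: the canonical lifts generate a subgroup contained in the union of the lifted cells. -/
theorem wordForm_sub_mem (l l' : List (GL (Fin n) K)) (hl : ∀ e ∈ l, IsElem e)
    (hl' : ∀ e ∈ l', IsElem e) (h : l.prod = l'.prod) :
    wordForm D l - wordForm D l' ∈ logForms D := by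
  let Γ : Subgroup (logCocycle n D).Ext := Subgroup.closure {x | ∃ e, IsElem e ∧ x = sec e}
  have hΓ : ∀ x ∈ Γ, x ∈ bruhatSet D := by
    intro x hx
    induction hx using Subgroup.closure_induction_left with
    | one => exact one_mem_bruhatSet D
    | mul_left x hx y _ ih =>
      obtain ⟨_, ⟨i, j, hij, c, rfl⟩, rfl⟩ := hx
      exact elem_mul_mem D i j hij c ih
    | inv_mul_cancel x hx y _ ih =>
      obtain ⟨_, ⟨i, j, hij, c, rfl⟩, rfl⟩ := hx
      have : (sec (elem i j hij c) : (logCocycle n D).Ext)⁻¹ = sec (elem i j hij (-c)) := by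
        rw [inv_eq_iff_mul_eq_one, sec_elem_same, add_neg_cancel, elem_zero, sec_one]
      rw [this]
      exact elem_mul_mem D i j hij _ ih
  have hmem : ∀ l : List (GL (Fin n) K), (∀ e ∈ l, IsElem e) →
      ((l.map sec).prod : (logCocycle n D).Ext) ∈ Γ := by
    intro l hl
    refine Subgroup.list_prod_mem _ fun x hx => ?_
    obtain ⟨e, he, rfl⟩ := List.mem_map.mp hx
    exact Subgroup.subset_closure ⟨e, hl e he, rfl⟩
  have key := hΓ _ (Γ.mul_mem (Γ.inv_mem (hmem l' hl')) (hmem l hl))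
  rw [prod_sec, prod_sec] at key
  have := fib_eq_of_same_base (by exact h.symm) (fib_eq_zero_of_mem D key (by
    rw [mul_base, inv_base, h, inv_mul_cancel]))
  have : (QuotientAddGroup.mk (wordForm D l') : _ ⧸ logForms D) = QuotientAddGroup.mk (wordForm D l) :=
    this
  rw [QuotientAddGroup.eq] at this
  rwa [sub_eq_neg_add]
end BN

/-! ### Words over `ℂ[X]` -/

section Assembly
open Polynomial

theorem logForms_apply_mem {k K : Type*} [CommRing k] [Field K] [Algebra k K] {N : ℕ}
    (D : Fin N → Derivation k K K) (S : Subring K) (hS : ∀ p a, D p a / a ∈ S)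
    {M : Matrix (Fin N) (Fin N) K} (hM : M ∈ logForms D) (p q : Fin N) : M p q ∈ S := by
  induction hM using AddSubgroup.closure_induction with
  | mem M h =>
    obtain ⟨a, b, rfl⟩ := h
    exact S.mul_mem (hS p a) (hS q b)
  | zero => exact S.zero_mem
  | add x y _ _ hx hy => exact S.add_mem hx hy
  | neg x _ hx => exact S.neg_mem hx

theorem IsElem.map {R S : Type*} [CommRing R] [CommRing S] {n : ℕ} (f : R →+* S)
    {e : GL (Fin n) R} (he : IsElem e) : IsElem (GeneralLinearGroup.map f e) := by
  obtain ⟨i, j, hij, c, rfl⟩ := he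
  exact ⟨i, j, hij, f c, map_elem f i j hij c⟩

variable {k : Type*} [CommRing k] [Algebra k ℂ] {n N : ℕ}

/-- For two words over `ℂ[X]` with the same product, the difference of the forms has entries that are
polynomials regular at infinity, hence constants. -/
theorem wordForm_sub_eval (d : Fin N → Derivation k ℂ ℂ) (l l' : List (GL (Fin n) ℂ[X]))
    (hl : ∀ e ∈ l, IsElem e) (hl' : ∀ e ∈ l', IsElem e) (h : l.prod = l'.prod) (x y : ℂ) :
    (wordForm (fun p => coeffDer (d p)) l - wordForm (fun p => coeffDer (d p)) l').map
        (evalRingHom x) =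
      (wordForm (fun p => coeffDer (d p)) l - wordForm (fun p => coeffDer (d p)) l').map
        (evalRingHom y) := by
  choose D hD hreg using fun p => ratFunc_extend (d p)
  let φ := algebraMap ℂ[X] (RatFunc ℂ)
  have hmap := wordForm_map (n := n) (fun p => coeffDer (d p)) D φ (fun p f => (hD p f).symm)
  have hel : ∀ w : List (GL (Fin n) ℂ[X]), (∀ e ∈ w, IsElem e) →
      ∀ e ∈ w.map (GeneralLinearGroup.map φ), IsElem e := by
    intro w hw e he₀
    obtain ⟨e, he, rfl⟩ := List.mem_map.mp he₀
    exact (hw e he).map φ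
  have key := wordForm_sub_mem D _ _ (hel l hl) (hel l' hl')
    (by rw [← map_list_prod, ← map_list_prod, h])
  rw [hmap, hmap] at key
  ext p q
  have := logForms_apply_mem D regInfty hreg key p q
  rw [Matrix.sub_apply, map_apply, map_apply, ← map_sub] at this
  have hdeg := natDegree_eq_zero_of_mem this
  rw [map_apply, map_apply, Matrix.sub_apply, eq_C_of_natDegree_eq_zero hdeg]
  simp

theorem wordForm_eval (d : Fin N → Derivation k ℂ ℂ) {x : ℂ} (hx : ∀ p, d p x = 0)
    (l : List (GL (Fin n) ℂ[X])) :
    (wordForm (fun p => coeffDer (d p)) l).map (evalRingHom x) =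
      wordForm d (l.map (GeneralLinearGroup.map (evalRingHom x))) :=
  (wordForm_map _ d (evalRingHom x) (fun p f => eval_coeffDer (d p) (hx p) f) l).symm

theorem testWord_map {R S : Type*} [CommRing R] [CommRing S] (f : R →+* S) (i j : Fin n)
    (hij : i ≠ j) (t : Fin N → R) (l : List (Fin N)) :
    (testWord i j hij t l).map (GeneralLinearGroup.map f) =
      testWord i j hij (fun p => f (t p)) l := by
  induction l with
  | nil => rfl
  | cons p l ih => simp only [testWord, List.map_cons, map_elem, ih]

theorem isElem_of_mem_testWord {R : Type*} [CommRing R] (i j : Fin n)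
    (hij : i ≠ j) (t : Fin N → R) (l : List (Fin N)) :
    ∀ e ∈ testWord i j hij t l, IsElem e := by
  induction l with
  | nil => simp [testWord]
  | cons p l ih =>
    intro e he
    simp only [testWord, List.mem_cons] at he
    rcases he with rfl | rfl | he
    · exact ⟨_, _, _, _, rfl⟩
    · exact ⟨_, _, _, _, rfl⟩
    · exact ih e he

/-- Any word in elementary matrices representing `∏ₚ eᵢⱼ(tₚ X) eⱼᵢ(tₚ X)` has length at least `N / 2`. The
form of the latter word has rank `N` at `X = 1` and vanishes at `X = 0`, and it varies between these
points in the same way as the form of the given word. -/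
theorem le_two_mul_length (i j : Fin n) (hij : i ≠ j) (t : Fin N → ℂ)
    (d : Fin N → Derivation k ℂ ℂ) (hd : ∀ p q, d p (t q) = if p = q then 1 else 0)
    (l : List (GL (Fin n) ℂ[X])) (hl : ∀ e ∈ l, IsElem e)
    (h : l.prod = (testWord i j hij (fun p => C (t p) * X) (List.finRange N)).prod) :
    N ≤ 2 * l.length := by
  have h0 : ∀ p, d p (0 : ℂ) = 0 := fun p => map_zero _
  have h1 : ∀ p, d p (1 : ℂ) = 0 := fun p => (d p).map_one_eq_zero
  have key := wordForm_sub_eval d _ _ (isElem_of_mem_testWord i j hij _ _) hl h.symm 1 0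
  rw [Matrix.map_sub _ (map_sub _), Matrix.map_sub _ (map_sub _), wordForm_eval d h1, wordForm_eval d h1,
    wordForm_eval d h0, wordForm_eval d h0, testWord_map, testWord_map] at key
  simp only [coe_evalRingHom, eval_mul, eval_C, eval_X, mul_one, mul_zero] at key
  have hz : wordForm d (testWord i j hij (fun _ : Fin N => (0 : ℂ)) (List.finRange N)) = 0 := by
    apply wordForm_of_forall_eq_one
    generalize List.finRange N = m
    induction m with
    | nil => simp [testWord]
    | cons p m ih => simpa [testWord, elem_zero] using ih
  rw [hz, zero_sub, sub_eq_iff_eq_add, add_comm, ← sub_eq_add_neg] at key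
  have hr := testWord_rank i j hij t d hd
  have hb : ∀ x : ℂ, (wordForm d (l.map (GeneralLinearGroup.map (evalRingHom x)))).rank ≤
      l.length := fun x => by
    refine (rank_wordForm_le d _ ?_).trans_eq (List.length_map _)
    intro e he₀
    obtain ⟨e, he, rfl⟩ := List.mem_map.mp he₀
    exact (hl e he).map _
  rw [key, sub_eq_add_neg] at hr
  have := rank_add_le' (wordForm d (l.map (GeneralLinearGroup.map (evalRingHom (1 : ℂ)))))
    (-wordForm d (l.map (GeneralLinearGroup.map (evalRingHom (0 : ℂ)))))
  have hneg : ∀ A : Matrix (Fin N) (Fin N) ℂ, (-A).rank = A.rank := fun A => by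
    have : (-A).mulVecLin = -A.mulVecLin := LinearMap.ext fun v => neg_mulVec v A
    rw [rank, rank, this, LinearMap.range_neg]
  rw [hr, hneg] at this
  have := hb 0
  have := hb 1
  omega

theorem exists_toGL_testWord {R : Type*} [CommRing R] (i j : Fin n) (hij : i ≠ j)
    (t : Fin N → R) (l : List (Fin N)) :
    ∃ M : SpecialLinearGroup (Fin n) R,
      SpecialLinearGroup.toGL M = (testWord i j hij t l).prod := by
  have hdet : (testWord i j hij t l).prod.val.det = 1 := by
    induction l with
    | nil => simp [testWord]
    | cons p l ih =>
      simp only [testWord, List.prod_cons, Units.val_mul, det_mul, ih, mul_one]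
      change (transvection i j _).det * (transvection j i _).det = 1
      rw [det_transvection_of_ne i j hij, det_transvection_of_ne j i hij.symm, mul_one]
  exact ⟨⟨_, hdet⟩, Units.ext rfl⟩

end Assembly

end Matrices

end ElementaryWords

end

/-- (van der Kallen) For every `n ≥ 2`, the group `SL_n(ℂ[X])` is not boundedly
generated by the elementary matrices: there is no positive integer `ν` such that every
matrix in `SL_n(ℂ[X])` is a product of at most `ν` elementary matrices. -/
theorem sl_n_complex_polynomial_not_boundedly_elementary_generated
    (n : ℕ) (hn : 2 ≤ n) :
    ¬ ∃ ν : ℕ, 0 < ν ∧ ∀ M : Matrix.SpecialLinearGroup (Fin n) (Polynomial ℂ),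
      ∃ L : List (Matrix.SpecialLinearGroup (Fin n) (Polynomial ℂ)),
        L.length ≤ ν ∧ (∀ E ∈ L, IsElementary E) ∧ L.prod = M := by
  rintro ⟨ν, -, H⟩
  obtain ⟨t, d, hd⟩ := ElementaryWords.exists_dual_derivations (2 * ν + 1)
  have hij : (⟨0, by omega⟩ : Fin n) ≠ ⟨1, by omega⟩ := by simp
  obtain ⟨M, hM⟩ := ElementaryWords.exists_toGL_testWord _ _ hij
    (fun p => Polynomial.C (t p) * Polynomial.X) (List.finRange (2 * ν + 1))
  obtain ⟨L, hlen, hel, rfl⟩ := H M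
  rw [map_list_prod] at hM
  have := ElementaryWords.le_two_mul_length _ _ hij t d hd _ (fun e he => by
    obtain ⟨E, hE, rfl⟩ := List.mem_map.mp he
    obtain ⟨i, j, c, h, hc⟩ := hel E hE
    exact ⟨i, j, h, c, Units.ext hc⟩) hM
  rw [List.length_map] at this
  omega
end

section
/- Let F be a finite field. Then SL_2(F[X]) is not boundedly generated by the elementary matrices: there is no positive integer ν such that every matrix in SL_2(F[X]) is a product of at most ν elementary matrices. -/
open Polynomial

namespace BoundedElementary

variable {F : Type*} [Field F]

open Classical in
/-- The number of division steps in the Euclidean algorithm on `(a, b)`, dividing `a` by `b`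
first; it is `0` when `b = 0`. -/
noncomputable def euclidSteps (a b : F[X]) : ℕ :=
  if h : b = 0 then 0 else 1 + euclidSteps b (a % b)
termination_by b.degree
decreasing_by exact EuclideanDomain.mod_lt a h

lemma euclidSteps_zero (a : F[X]) : euclidSteps a 0 = 0 := by
  rw [euclidSteps]; simp

lemma euclidSteps_of_ne {a b : F[X]} (h : b ≠ 0) :
    euclidSteps a b = 1 + euclidSteps b (a % b) := by
  rw [euclidSteps]; simp [h]

lemma mod_eq_of_eq {a b q r : F[X]} (h : a = q * b + r) (hr : r.degree < b.degree) :
    a % b = r := by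
  have hb : b ≠ 0 := by rintro rfl; simp at hr
  rw [h, Polynomial.add_mod, (Polynomial.mod_eq_self_iff hb).2 hr]
  simp

lemma euclidSteps_add_mul (a b c : F[X]) : euclidSteps (a + c * b) b = euclidSteps a b := by
  by_cases hb : b = 0
  · simp [hb, euclidSteps_zero]
  · have h : (a + c * b) % b = a % b := by
      refine mod_eq_of_eq (q := a / b + c) ?_ (EuclideanDomain.mod_lt a hb)
      linear_combination -(EuclideanDomain.div_add_mod a b)
    rw [euclidSteps_of_ne hb, euclidSteps_of_ne hb, h]

/-- Both entries may be rescaled by independent nonzero constants: the remainders of the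
Euclidean algorithm are then rescaled by constants as well. -/
lemma euclidSteps_C_mul (a b : F[X]) {u v : F} (hu : u ≠ 0) (hv : v ≠ 0) :
    euclidSteps (C u * a) (C v * b) = euclidSteps a b := by
  induction a, b using euclidSteps.induct generalizing u v with
  | case1 a => simp [euclidSteps_zero]
  | case2 a b hb ih =>
    have hvC : C v ≠ (0 : F[X]) := by simpa using hv
    have hvv : C v * C v⁻¹ = (1 : F[X]) := by rw [← C_mul, mul_inv_cancel₀ hv, C_1]
    have h : (C u * a) % (C v * b) = C u * (a % b) := by
      refine mod_eq_of_eq (q := C u * C v⁻¹ * (a / b)) ?_ ?_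
      · linear_combination
          -C u * (EuclideanDomain.div_add_mod a b) - C u * (a / b) * b * hvv
      · rw [degree_C_mul hu, degree_C_mul hv]
        exact EuclideanDomain.mod_lt a hb
    rw [euclidSteps_of_ne (mul_ne_zero hvC hb), euclidSteps_of_ne hb, h, ih hv hu]

lemma euclidSteps_swap_le (a b : F[X]) : euclidSteps b a ≤ euclidSteps a b + 1 := by
  by_cases ha : a = 0
  · simp [ha, euclidSteps_zero]
  by_cases hb : b = 0
  · simp [hb, euclidSteps_zero, euclidSteps_of_ne ha]
  rcases lt_trichotomy a.degree b.degree with h | h | h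
  · rw [euclidSteps_of_ne hb, (Polynomial.mod_eq_self_iff hb).2 h]
    omega
  · -- With `a = u * b + r` for a constant `u`, the remainder of `b` modulo `a` is `-u⁻¹ * r`.
    have hr : (a % b).degree < b.degree := EuclideanDomain.mod_lt a hb
    have hq : (a / b).degree = 0 := by
      have := degree_add_div hb h.ge
      rw [h, degree_eq_natDegree hb] at this
      have hq0 : a / b ≠ 0 := by
        intro h0
        have := (Polynomial.div_eq_zero_iff hb).1 h0
        exact absurd h this.ne
      rw [degree_eq_natDegree hq0] at this ⊢
      norm_cast at this ⊢
      omega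
    obtain ⟨u, hu⟩ : ∃ u, a / b = C u := ⟨_, eq_C_of_degree_eq_zero hq⟩
    have hu0 : u ≠ 0 := by
      rintro rfl
      simp [hu] at hq
    have hdiv : b * C u + a % b = a := by
      rw [← hu]; exact EuclideanDomain.div_add_mod a b
    generalize a % b = r at *
    have huu : C u * C u⁻¹ = (1 : F[X]) := by rw [← C_mul, mul_inv_cancel₀ hu0, C_1]
    have hn : -u⁻¹ ≠ 0 := neg_ne_zero.2 (inv_ne_zero hu0)
    have h1 : b % a = C (-u⁻¹) * r := by
      refine mod_eq_of_eq (q := C u⁻¹) ?_ ?_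
      · rw [C_neg]
        linear_combination C u⁻¹ * hdiv - b * huu
      · rw [degree_C_mul hn, h]
        exact hr
    have h2 : a % b = r := mod_eq_of_eq (q := C u) (by rw [← hdiv]; ring) hr
    have h3 : euclidSteps a (C (-u⁻¹) * r) = euclidSteps b r := by
      have e1 := euclidSteps_C_mul a r one_ne_zero hn
      have e2 := euclidSteps_add_mul (C u * b) r 1
      have e3 := euclidSteps_C_mul b r hu0 one_ne_zero
      have e4 : C u * b + 1 * r = a := by rw [← hdiv]; ring
      rw [e4] at e2
      simp only [C_1, one_mul] at e1 e3
      rw [e1, e2, e3]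
    rw [euclidSteps_of_ne ha, euclidSteps_of_ne hb, h1, h2, h3]
    omega
  · rw [euclidSteps_of_ne ha, (Polynomial.mod_eq_self_iff ha).2 h]
    omega

lemma euclidSteps_mul_le (M E : Matrix.SpecialLinearGroup (Fin 2) F[X]) (hE : IsElementary E) :
    euclidSteps ((M * E) 0 0) ((M * E) 0 1) ≤ euclidSteps (M 0 0) (M 0 1) + 2 := by
  obtain ⟨i, j, c, hij, h⟩ := hE
  have e : ∀ k, (M * E) 0 k = M 0 0 * Matrix.transvection i j c 0 k
      + M 0 1 * Matrix.transvection i j c 1 k := by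
    intro k
    rw [← h]
    simp [Matrix.mul_apply, Fin.sum_univ_two]
  rw [e, e]
  fin_cases i <;> fin_cases j <;>
    simp [Matrix.transvection] at hij ⊢
  · -- The row becomes `(a, b + c * a)`: swap, add a multiple of the second entry, swap back.
    have h1 := euclidSteps_swap_le (M 0 1 + c * M 0 0) (M 0 0)
    have h2 := euclidSteps_swap_le (M 0 0) (M 0 1)
    rw [euclidSteps_add_mul] at h1
    rw [add_comm (M 0 0 * c), mul_comm _ c]
    omega
  · rw [mul_comm _ c, euclidSteps_add_mul]
    omega

lemma euclidSteps_prod_le (L : List (Matrix.SpecialLinearGroup (Fin 2) F[X]))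
    (hL : ∀ E ∈ L, IsElementary E) :
    euclidSteps (L.prod 0 0) (L.prod 0 1) ≤ 2 * L.length := by
  induction L using List.reverseRecOn with
  | nil => simp [euclidSteps_zero]
  | append_singleton L E ih =>
    have h1 := ih fun E hE => hL E (by simp [hE])
    have h2 := euclidSteps_mul_le L.prod E (hL E (by simp))
    simp only [List.prod_append, List.prod_singleton, List.length_append, List.length_singleton]
    omega

/-- Multiplying by `[[X, 1], [-1, 0]]` turns a first row `(a, b)` into `(a * X - b, a)`; when
`deg b < deg a`, the first remainder of the latter is `-b`, so exactly one step is added. -/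
lemma exists_euclidSteps_eq (n : ℕ) : ∃ M : Matrix.SpecialLinearGroup (Fin 2) F[X],
    (M 0 1).degree < (M 0 0).degree ∧ euclidSteps (M 0 0) (M 0 1) = n := by
  induction n with
  | zero => exact ⟨1, by simp, by simp [euclidSteps_zero]⟩
  | succ n ih =>
    obtain ⟨M, hd, hs⟩ := ih
    let E : Matrix.SpecialLinearGroup (Fin 2) F[X] :=
      ⟨!![X, 1; -1, 0], by simp [Matrix.det_fin_two]⟩
    have e0 : (M * E) 0 0 = M 0 0 * X - M 0 1 := by
      rw [Matrix.SpecialLinearGroup.coe_mul, Matrix.mul_apply, Fin.sum_univ_two]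
      simp [E, sub_eq_add_neg]
    have e1 : (M * E) 0 1 = M 0 0 := by
      rw [Matrix.SpecialLinearGroup.coe_mul, Matrix.mul_apply, Fin.sum_univ_two]
      simp [E]
    have ha : M 0 0 ≠ 0 := by
      intro h
      simp [h] at hd
    have hX : (M 0 0).degree < (M 0 0 * X).degree := by
      rw [degree_mul_X, degree_eq_natDegree ha]
      norm_cast
      omega
    refine ⟨M * E, ?_, ?_⟩
    · rw [e0, e1, degree_sub_eq_left_of_degree_lt (hd.trans hX)]
      exact hX
    · have h : (M 0 0 * X - M 0 1) % M 0 0 = C (-1) * M 0 1 := by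
        refine mod_eq_of_eq (q := X) (by rw [C_neg, C_1]; ring) ?_
        rwa [degree_C_mul (neg_ne_zero.2 one_ne_zero)]
      have h' := euclidSteps_C_mul (M 0 0) (M 0 1) one_ne_zero
        (neg_ne_zero.2 (one_ne_zero (α := F)))
      rw [C_1, one_mul] at h'
      rw [e0, e1, euclidSteps_of_ne ha, h, h', hs, add_comm]

end BoundedElementary

/-- Let `F` be a finite field.  Then `SL_2(F[X])` is not boundedly generated by the
elementary matrices: there is no positive integer `ν` such that every matrix in
`SL_2(F[X])` is a product of at most `ν` elementary matrices. -/
theorem sl_two_polynomial_finite_field_not_boundedly_elementary_generated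
    (F : Type*) [Field F] [Fintype F] :
    ¬ ∃ ν : ℕ, 0 < ν ∧ ∀ M : Matrix.SpecialLinearGroup (Fin 2) (Polynomial F),
      ∃ L : List (Matrix.SpecialLinearGroup (Fin 2) (Polynomial F)),
        L.length ≤ ν ∧ (∀ E ∈ L, IsElementary E) ∧ L.prod = M := by
  rintro ⟨ν, -, h⟩
  obtain ⟨M, -, hM⟩ := BoundedElementary.exists_euclidSteps_eq (F := F) (2 * ν + 1)
  obtain ⟨L, hlen, hL, rfl⟩ := h M
  have := BoundedElementary.euclidSteps_prod_le L hL
  omega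
end

section
/- (Kornblum) Let F be a finite field and let a, b ∈ F[X] be relatively prime polynomials with a ≠ 0. Then there are infinitely many irreducible polynomials p ∈ F[X] with p ≡ b (mod a), i.e., the set { p ∈ F[X] : p is irreducible and a divides p − b } is infinite. -/
/-!
Let `q = |F|`. For a character `χ` of `F[X] / (a)` consider the `L`-series
`L(T, χ) = ∑ χ(f) T ^ deg f`, over monic `f`, as a formal power series. The identity
`deg f = ∑ deg p`, over the prime powers `p ^ k ∣ f`, gives `T L' = Λ L`, where
`Λ(T, χ) = ∑ deg p · χ(p ^ k) T ^ (k deg p)` (`X_mul_derivative_seriesL`). Monic polynomials of large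
degree are equidistributed modulo `a`, so `L(T, χ)` is a polynomial for `χ ≠ 1`, while
`(1 - qT) L(T, 1)` is a polynomial not vanishing at `1/q`.

If `L(1/q, χ) = 0` for some `χ ≠ 1`, then `∏ L(T, χ)` is a polynomial, because the zero cancels the
pole of `L(T, 1)`. Its logarithmic derivative has nonnegative coefficients, which forces infinitely
many positive coefficients on the product, a contradiction. This treats real and complex characters
alike (`eval_ne_zero_of_eq_seriesL`).

Hence the combination `∑ χ(b)⁻¹ Λ(T, χ)`, which counts prime powers congruent to `b`, has a pole at
`T = 1/q`, coming from `χ = 1` alone. With only finitely many monic irreducibles congruent to `b`,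
its `n`-th coefficient would count proper powers only and be `O(n² q ^ (n/2))`, so the series would
converge at `1/q` (`infinite_of_isUnit`).
-/

namespace Kornblum
open Polynomial UniqueFactorizationMonoid
open Finset.HasAntidiagonal
open scoped Classical ComplexOrder

/-- The monic polynomials of degree `n`, parametrized by their lower coefficients. -/
noncomputable def monicOfDegree (F : Type*) [Field F] [Fintype F] (n : ℕ) : Finset F[X] :=
  Finset.univ.image fun v : Fin n → F => X ^ n + ((degreeLTEquiv F n).symm v : F[X])

variable {F : Type*} [Field F]

/-! ### Monic polynomials and prime powers -/

/-- The pairs `(p, k)` with `p` monic irreducible, `k ≥ 1` and `p ^ k ∣ f`, for `f ≠ 0`. -/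
noncomputable def primePowerDivisors (f : F[X]) : Finset (F[X] × ℕ) :=
  (normalizedFactors f).toFinset.biUnion fun p =>
    (Finset.Icc 1 ((normalizedFactors f).count p)).image fun k => (p, k)

theorem mem_primePowerDivisors {f : F[X]} (hf : f ≠ 0) {x : F[X] × ℕ} :
    x ∈ primePowerDivisors f ↔
      Irreducible x.1 ∧ x.1.Monic ∧ 1 ≤ x.2 ∧ x.1 ^ x.2 ∣ f := by
  obtain ⟨p, k⟩ := x
  have key : Irreducible p → p.Monic → (p ^ k ∣ f ↔ k ≤ (normalizedFactors f).count p) := by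
    intro hp hm
    rw [pow_dvd_iff_le_emultiplicity, emultiplicity_eq_count_normalizedFactors hp hf,
      hm.normalize_eq_self]
    simp
  simp only [primePowerDivisors, Finset.mem_biUnion, Finset.mem_image, Finset.mem_Icc,
    Multiset.mem_toFinset, Prod.mk.injEq, Polynomial.mem_normalizedFactors_iff hf]
  constructor
  · rintro ⟨_, ⟨h1, h2, h3⟩, k', ⟨h4, h5⟩, rfl, rfl⟩
    exact ⟨h1, h2, h4, (key h1 h2).2 h5⟩
  · rintro ⟨h1, h2, h3, h4⟩
    exact ⟨p, ⟨h1, h2, (dvd_pow_self p (by omega)).trans h4⟩, k, ⟨h3, (key h1 h2).1 h4⟩, rfl, rfl⟩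

theorem sum_primePowerDivisors {f : F[X]} (hf : f.Monic) :
    ∑ x ∈ primePowerDivisors f, x.1.natDegree = f.natDegree := by
  rw [primePowerDivisors, Finset.sum_biUnion]
  · have : ∀ p : F[X], ∑ x ∈ (Finset.Icc 1 ((normalizedFactors f).count p)).image
        (fun k => (p, k)), x.1.natDegree = (normalizedFactors f).count p • p.natDegree := by
      intro p
      rw [Finset.sum_image (by intro a _ b _ h; simpa using h)]
      simp
    simp only [this]
    rw [← Finset.sum_multiset_map_count, ← natDegree_multiset_prod]
    · congr 1
      have := prod_normalizedFactors_eq (a := f) hf.ne_zero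
      rw [this, hf.normalize_eq_self]
    · exact zero_notMem_normalizedFactors f
  · intro p _ q _ hpq
    rw [Function.onFun, Finset.disjoint_left]
    intro x hx hy
    simp only [Finset.mem_image] at hx hy
    obtain ⟨k, _, rfl⟩ := hx
    obtain ⟨l, _, h⟩ := hy
    exact hpq (Prod.ext_iff.1 h).1.symm

variable [Fintype F]

theorem mem_monicOfDegree {n : ℕ} {f : F[X]} : f ∈ monicOfDegree F n ↔ f.Monic ∧ f.natDegree = n := by
  simp only [monicOfDegree, Finset.mem_image, Finset.mem_univ, true_and]
  constructor
  · rintro ⟨v, rfl⟩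
    have h := mem_degreeLT.1 ((degreeLTEquiv F n).symm v).2
    refine ⟨monic_X_pow_add h, ?_⟩
    rw [natDegree_add_eq_left_of_degree_lt] <;> simp [h]
  · rintro ⟨hf, rfl⟩
    have h : f - X ^ f.natDegree ∈ degreeLT F f.natDegree := by
      rw [mem_degreeLT, ← degree_eq_natDegree hf.ne_zero]
      apply degree_sub_lt_left _ hf.ne_zero
      · simp [hf.leadingCoeff]
      · rw [degree_X_pow, degree_eq_natDegree hf.ne_zero]
    refine ⟨degreeLTEquiv F _ ⟨_, h⟩, ?_⟩
    simp

theorem sum_monicOfDegree {M : Type*} [AddCommMonoid M] (n : ℕ) (g : F[X] → M) :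
    ∑ f ∈ monicOfDegree F n, g f = ∑ h : Fin n → F, g (X ^ n + ((degreeLTEquiv F n).symm h : F[X])) := by
  rw [monicOfDegree, Finset.sum_image]
  intro v _ w _ h
  simpa using h

theorem card_monicOfDegree (n : ℕ) : (monicOfDegree F n).card = Fintype.card F ^ n := by
  rw [Finset.card_eq_sum_ones, sum_monicOfDegree]; simp

/-- The pairs `(p, k)` with `p` monic irreducible, `k ≥ 1` and `p ^ k` of degree `n`. -/
noncomputable def primePowers (F : Type*) [Field F] [Fintype F] (n : ℕ) : Finset (F[X] × ℕ) :=
  (((Finset.range (n + 1)).biUnion (monicOfDegree F)) ×ˢ Finset.Icc 1 n).filter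
    fun x => Irreducible x.1 ∧ x.2 * x.1.natDegree = n

theorem mem_primePowers {n : ℕ} {x : F[X] × ℕ} : x ∈ primePowers F n ↔
    Irreducible x.1 ∧ x.1.Monic ∧ 1 ≤ x.2 ∧ x.2 * x.1.natDegree = n := by
  simp only [primePowers, Finset.mem_filter, Finset.mem_product, Finset.mem_biUnion,
    Finset.mem_range, mem_monicOfDegree, Finset.mem_Icc]
  constructor
  · rintro ⟨⟨⟨_, _, h, _⟩, h1, _⟩, h2, h3⟩
    exact ⟨h2, h, h1, h3⟩
  · rintro ⟨h, hm, hk, rfl⟩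
    have := h.natDegree_pos
    refine ⟨⟨⟨_, ?_, hm, rfl⟩, hk, ?_⟩, h, rfl⟩
    · nlinarith
    · nlinarith

section L

/-! ### L-series and their logarithmic derivatives -/

variable {R : Type*} [CommRing R] (ψ : F[X] →+* R) (χ : MulChar R ℂ)

/-- The `n`-th coefficient of the `L`-series of `χ`. -/
noncomputable def coeffL (n : ℕ) : ℂ := ∑ f ∈ monicOfDegree F n, χ (ψ f)

/-- The `n`-th coefficient of the logarithmic derivative `T L'/L`: the sum of `deg p · χ(p ^ k)` over
prime powers of degree `n`. -/
noncomputable def coeffLogDeriv (n : ℕ) : ℂ :=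
  ∑ x ∈ primePowers F n, (x.1.natDegree : ℂ) * χ (ψ x.1 ^ x.2)

theorem coeffL_zero : coeffL ψ χ 0 = 1 := by
  have h : monicOfDegree F 0 = {1} := by
    ext f
    simp only [mem_monicOfDegree, Finset.mem_singleton]
    exact ⟨fun h => h.1.natDegree_eq_zero.1 h.2, by rintro rfl; simp⟩
  simp [coeffL, h]

theorem coeffLogDeriv_zero : coeffLogDeriv ψ χ 0 = 0 := by
  rw [coeffLogDeriv, Finset.sum_eq_zero]
  intro x hx
  obtain ⟨h1, -, h2, h3⟩ := mem_primePowers.1 hx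
  have := h1.natDegree_pos
  nlinarith

/-- The identity `T L' = Λ L` on coefficients: both sides sum `deg p · χ(f)` over the monic `f` of
degree `n` and the prime powers `p ^ k ∣ f`, the right-hand side after writing `f = p ^ k g`. -/
theorem mul_coeffL (n : ℕ) : (n : ℂ) * coeffL ψ χ n =
    ∑ ij ∈ antidiagonal n, coeffLogDeriv ψ χ ij.1 * coeffL ψ χ ij.2 := by
  have e1 : (n : ℂ) * coeffL ψ χ n =
      ∑ s ∈ (monicOfDegree F n).sigma fun f => primePowerDivisors f, (s.2.1.natDegree : ℂ) * χ (ψ s.1) := by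
    rw [Finset.sum_sigma, coeffL, Finset.mul_sum]
    refine Finset.sum_congr rfl fun f hf => ?_
    obtain ⟨hm, hn⟩ := mem_monicOfDegree.1 hf
    simp only
    rw [← Finset.sum_mul, ← Nat.cast_sum, sum_primePowerDivisors hm, hn]
  have e2 : ∑ ij ∈ antidiagonal n, coeffLogDeriv ψ χ ij.1 * coeffL ψ χ ij.2 =
      ∑ t ∈ (antidiagonal n).sigma fun ij => primePowers F ij.1 ×ˢ monicOfDegree F ij.2,
        (t.2.1.1.natDegree : ℂ) * χ (ψ t.2.1.1 ^ t.2.1.2) * χ (ψ t.2.2) := by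
    rw [Finset.sum_sigma]
    refine Finset.sum_congr rfl fun ij _ => ?_
    rw [coeffLogDeriv, coeffL, Finset.sum_mul_sum, Finset.sum_product]
  rw [e1, e2]
  clear e1 e2
  refine Finset.sum_bij'
    (fun s _ => ⟨(s.2.2 * s.2.1.natDegree, n - s.2.2 * s.2.1.natDegree),
      (s.2, s.1 /ₘ s.2.1 ^ s.2.2)⟩)
    (fun t _ => ⟨t.2.1.1 ^ t.2.1.2 * t.2.2, t.2.1⟩) ?_ ?_ ?_ ?_ ?_
  · rintro ⟨f, p, k⟩ hs
    simp only [Finset.mem_sigma, mem_monicOfDegree] at hs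
    obtain ⟨⟨hm, rfl⟩, h⟩ := hs
    obtain ⟨h1, h2, h3, g, rfl⟩ := (mem_primePowerDivisors hm.ne_zero).1 h
    have hg : g.Monic := (h2.pow k).of_mul_monic_left hm
    have hd : (p ^ k * g).natDegree = k * p.natDegree + g.natDegree := by
      rw [(h2.pow k).natDegree_mul hg, h2.natDegree_pow]
    simp only at h1 h2 h3
    simp only [Finset.mem_sigma, mem_antidiagonal, Finset.mem_product, mem_primePowers,
      mem_monicOfDegree, mul_divByMonic_cancel_left _ (h2.pow k)]
    refine ⟨by omega, ⟨h1, h2, h3, trivial⟩, hg, by omega⟩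
  · rintro ⟨⟨i, j⟩, ⟨p, k⟩, g⟩ ht
    simp only [Finset.mem_sigma, mem_antidiagonal, Finset.mem_product, mem_primePowers,
      mem_monicOfDegree] at ht
    obtain ⟨hn, ⟨h1, h2, h3, rfl⟩, hg, rfl⟩ := ht
    have hm : (p ^ k * g).Monic := (h2.pow k).mul hg
    simp only [Finset.mem_sigma, mem_monicOfDegree]
    refine ⟨⟨hm, ?_⟩, (mem_primePowerDivisors hm.ne_zero).2 ⟨h1, h2, h3, dvd_mul_right _ _⟩⟩
    rw [(h2.pow k).natDegree_mul hg, h2.natDegree_pow, hn]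
  · rintro ⟨f, p, k⟩ hs
    simp only [Finset.mem_sigma, mem_monicOfDegree] at hs
    obtain ⟨⟨hm, rfl⟩, h⟩ := hs
    obtain ⟨h1, h2, h3, g, rfl⟩ := (mem_primePowerDivisors hm.ne_zero).1 h
    simp only at h2
    simp [mul_divByMonic_cancel_left _ (h2.pow k)]
  · rintro ⟨⟨i, j⟩, ⟨p, k⟩, g⟩ ht
    simp only [Finset.mem_sigma, mem_antidiagonal, Finset.mem_product, mem_primePowers,
      mem_monicOfDegree] at ht
    obtain ⟨hn, ⟨h1, h2, h3, rfl⟩, hg, rfl⟩ := ht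
    subst hn
    simp [mul_divByMonic_cancel_left _ (h2.pow k)]
  · rintro ⟨f, p, k⟩ hs
    simp only [Finset.mem_sigma, mem_monicOfDegree] at hs
    obtain ⟨⟨hm, rfl⟩, h⟩ := hs
    obtain ⟨h1, h2, h3, g, rfl⟩ := (mem_primePowerDivisors hm.ne_zero).1 h
    simp only at h2
    simp only [mul_divByMonic_cancel_left _ (h2.pow k), map_mul, map_pow, mul_assoc]

/-- The hypothesis `hψ`, met by reduction modulo a polynomial of degree `d`, makes the monic
polynomials of degree `n ≥ d` equidistributed over `R`: they form a translate of the additive group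
of polynomials of degree `< n`, on which `ψ` is a surjective homomorphism. -/
theorem coeffL_of_le [Fintype R] {d : ℕ}
    (hψ : ∀ n, d ≤ n → ∀ r : R, ∃ f : F[X], f.degree < n ∧ ψ f = r) {n : ℕ} (hn : d ≤ n) :
    coeffL ψ χ n = (Fintype.card F : ℂ) ^ n / Fintype.card R * ∑ r, χ r := by
  let φ : (Fin n → F) →+ R := (ψ : F[X] →+ R).comp
    (((degreeLT F n).subtype.comp (degreeLTEquiv F n).symm.toLinearMap).toAddMonoidHom)
  have hφ : ∀ h, φ h = ψ ((degreeLTEquiv F n).symm h : F[X]) := fun h => rfl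
  have hsurj : ∀ r, r ∈ Set.range φ := by
    intro r
    obtain ⟨f, hf, rfl⟩ := hψ n hn r
    refine ⟨degreeLTEquiv F n ⟨f, mem_degreeLT.2 hf⟩, ?_⟩
    rw [hφ, LinearEquiv.symm_apply_apply]
  have hK : ∀ r, (Finset.univ.filter fun h => φ h = r).card =
      (Finset.univ.filter fun h => φ h = 0).card :=
    fun r => AddMonoidHom.card_fiber_eq_of_mem_range φ (hsurj r) (hsurj 0)
  have hfib : ∀ g : R → ℂ, ∑ h, g (φ h) =
      (Finset.univ.filter fun h => φ h = 0).card * ∑ r, g r := by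
    intro g
    rw [← Finset.sum_fiberwise' Finset.univ φ g, Finset.mul_sum]
    refine Finset.sum_congr rfl fun r _ => ?_
    rw [Finset.sum_const, hK, nsmul_eq_mul]
  have hcard : ((Finset.univ.filter fun h => φ h = 0).card : ℂ) =
      (Fintype.card F : ℂ) ^ n / Fintype.card R := by
    have h1 := hfib 1
    have h2 : (Fintype.card R : ℂ) ≠ 0 := by simp
    rw [eq_div_iff h2]
    simpa using h1.symm
  rw [coeffL, sum_monicOfDegree, ← hcard]
  simp only [map_add, ← hφ]
  rw [hfib fun r => χ (ψ (X ^ n) + r)]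
  congr 1
  exact Equiv.sum_comp (Equiv.addLeft (ψ (X ^ n))) χ

/-- The `L`-series of `χ`, as a formal power series in `T`. -/
noncomputable def seriesL : PowerSeries ℂ := PowerSeries.mk (coeffL ψ χ)

/-- The logarithmic derivative `T L'/L` of the `L`-series of `χ`, through its coefficients. -/
noncomputable def seriesLogDeriv : PowerSeries ℂ := PowerSeries.mk (coeffLogDeriv ψ χ)

theorem X_mul_derivative_seriesL : PowerSeries.X * PowerSeries.derivative ℂ (seriesL ψ χ) =
    seriesLogDeriv ψ χ * seriesL ψ χ := by
  ext n
  rw [PowerSeries.coeff_mul _ (seriesLogDeriv ψ χ)]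
  simp only [seriesL, seriesLogDeriv, PowerSeries.coeff_mk]
  rw [← mul_coeffL]
  cases n with
  | zero => simp
  | succ n => rw [PowerSeries.coeff_succ_X_mul, PowerSeries.coeff_derivative]; simp [mul_comm]

theorem exists_polynomial_eq_seriesL [Fintype R] {d : ℕ}
    (hψ : ∀ n, d ≤ n → ∀ r : R, ∃ f : F[X], f.degree < n ∧ ψ f = r) (hχ : χ ≠ 1) :
    ∃ P : ℂ[X], (P : PowerSeries ℂ) = seriesL ψ χ := by
  refine ⟨PowerSeries.trunc d (seriesL ψ χ), ?_⟩
  ext n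
  rw [coeff_coe, PowerSeries.coeff_trunc]
  split_ifs with h
  · rfl
  · rw [seriesL, PowerSeries.coeff_mk, coeffL_of_le ψ χ hψ (not_lt.1 h),
      MulChar.sum_eq_zero_of_ne_one hχ, mul_zero]

/-- The principal `L`-series is `E / (1 - qT)` with `E` a polynomial not vanishing at `1/q`: it has
a genuine simple pole there. -/
theorem exists_polynomial_eq_seriesL_one [Fintype R] {d : ℕ}
    (hψ : ∀ n, d ≤ n → ∀ r : R, ∃ f : F[X], f.degree < n ∧ ψ f = r) :
    ∃ E : ℂ[X], (E : PowerSeries ℂ) =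
      ((1 - C (Fintype.card F : ℂ) * X : ℂ[X]) : PowerSeries ℂ) * seriesL ψ 1 ∧
      E.eval (Fintype.card F : ℂ)⁻¹ ≠ 0 := by
  set q : ℂ := (Fintype.card F : ℂ) with hq
  have hq0 : q ≠ 0 := by simp [hq]
  set A : ℂ := coeffL ψ 1 d with hA
  have hA0 : A ≠ 0 := by
    rw [hA, coeffL_of_le ψ 1 hψ le_rfl, MulChar.sum_one_eq_card_units]
    have : Nonempty Rˣ := ⟨1⟩
    simp
  have hstep : ∀ n, d ≤ n → coeffL ψ 1 (n + 1) = q * coeffL ψ 1 n := by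
    intro n hn
    rw [coeffL_of_le ψ 1 hψ hn, coeffL_of_le ψ 1 hψ (hn.trans n.le_succ), ← hq, pow_succ]
    ring
  refine ⟨(1 - C q * X) * PowerSeries.trunc d (seriesL ψ 1) + C A * X ^ d, ?_, ?_⟩
  · rw [coe_add, coe_mul, ← eq_sub_iff_add_eq', ← mul_sub]
    have : ((1 - C q * X : ℂ[X]) : PowerSeries ℂ) = 1 - PowerSeries.C q * PowerSeries.X := by simp
    rw [this, sub_mul, one_mul, mul_assoc]
    ext n
    rw [map_sub, PowerSeries.coeff_C_mul]
    cases n with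
    | zero =>
      rw [PowerSeries.coeff_zero_X_mul]
      simp only [coeff_coe, map_sub, PowerSeries.coeff_trunc, coeff_C_mul, coeff_X_pow, seriesL,
        PowerSeries.coeff_mk]
      rcases Nat.eq_zero_or_pos d with rfl | hd
      · simp [hA]
      · simp [hd, hd.ne]
    | succ n =>
      rw [PowerSeries.coeff_succ_X_mul]
      simp only [coeff_coe, map_sub, PowerSeries.coeff_trunc, coeff_C_mul, coeff_X_pow, seriesL,
        PowerSeries.coeff_mk]
      rcases lt_trichotomy (n + 1) d with h | h | h
      · simp [h, h.ne, (by omega : n < d)]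
      · simp [h, (by omega : n < d), hA]
      · rw [if_neg (by omega : ¬ n + 1 < d), if_neg (by omega : ¬ n < d)]
        simp [h.ne', hstep n (by omega)]
  · simp [hq0, hA0]

/-! ### Nonvanishing at 1/q -/

/-- A power series `Z` with constant term `1` whose logarithmic derivative `S = T Z'/Z` has
nonnegative coefficients, one of them positive, has infinitely many positive coefficients.
This is read off the recursion `n Zₙ = ∑ Sᵢ Zₙ₋ᵢ`. -/
theorem coeff_pos_of_logDeriv {Z S : PowerSeries ℂ}
    (h : PowerSeries.X * PowerSeries.derivative ℂ Z = S * Z)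
    (h0 : PowerSeries.coeff 0 Z = 1) (hS : ∀ n, 0 ≤ PowerSeries.coeff n S)
    {m : ℕ} (hm0 : 0 < m) (hm : 0 < PowerSeries.coeff m S) (j : ℕ) :
    0 < PowerSeries.coeff (j * m) Z := by
  have hrec : ∀ n, PowerSeries.coeff n Z * n = ∑ ij ∈ antidiagonal n,
      PowerSeries.coeff ij.1 S * PowerSeries.coeff ij.2 Z := by
    intro n
    rw [← PowerSeries.coeff_mul, ← h]
    cases n with
    | zero => simp
    | succ n => rw [PowerSeries.coeff_succ_X_mul, PowerSeries.coeff_derivative]; simp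
  have hS0 : PowerSeries.coeff 0 S = 0 := by
    have := hrec 0
    simpa [-PowerSeries.coeff_zero_eq_constantCoeff, h0] using this.symm
  have hdiv : ∀ n : ℕ, 0 < n → PowerSeries.coeff n Z = ((n : ℝ)⁻¹ : ℝ) * ∑ ij ∈ antidiagonal n,
      PowerSeries.coeff ij.1 S * PowerSeries.coeff ij.2 Z := by
    intro n hn
    have : (n : ℂ) ≠ 0 := by exact_mod_cast hn.ne'
    rw [← hrec]
    push_cast
    field_simp
  have hinv : ∀ n : ℕ, 0 < n → (0 : ℂ) < ((n : ℝ)⁻¹ : ℝ) := by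
    intro n hn
    rw [Complex.zero_lt_real]
    positivity
  have hZ : ∀ n, 0 ≤ PowerSeries.coeff n Z := by
    intro n
    induction n using Nat.strong_induction_on with
    | _ n ih =>
      rcases Nat.eq_zero_or_pos n with rfl | hn
      · rw [h0]; exact zero_le_one
      · rw [hdiv n hn]
        refine mul_nonneg (hinv n hn).le (Finset.sum_nonneg fun ij hij => ?_)
        rw [mem_antidiagonal] at hij
        rcases Nat.eq_zero_or_pos ij.1 with hi | hi
        · rw [hi, hS0, zero_mul]
        · exact mul_nonneg (hS _) (ih _ (by omega))
  induction j with
  | zero => rw [zero_mul, h0]; exact zero_lt_one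
  | succ j ih =>
    have hn : 0 < (j + 1) * m := by positivity
    rw [hdiv _ hn]
    refine mul_pos (hinv _ hn) ((mul_pos hm ih).trans_le ?_)
    refine Finset.single_le_sum
      (f := fun ij : ℕ × ℕ => PowerSeries.coeff ij.1 S * PowerSeries.coeff ij.2 Z)
      (a := (m, j * m)) (fun ij _ => mul_nonneg (hS _) (hZ _)) ?_
    rw [mem_antidiagonal]
    ring

/-- Orthogonality of characters; for a non-unit `r` both sides vanish. -/
theorem sum_mulChar [Fintype R] [Fintype (MulChar R ℂ)] (r : R) :
    ∑ χ : MulChar R ℂ, χ r = if r = 1 then (Fintype.card (MulChar R ℂ) : ℂ) else 0 := by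
  split_ifs with hr
  · simp [hr]
  · have : NeZero (Monoid.exponent Rˣ) := ⟨Monoid.exponent_ne_zero_of_finite⟩
    obtain ⟨χ, hχ⟩ := MulChar.exists_apply_ne_one_of_hasEnoughRootsOfUnity R ℂ hr
    refine eq_zero_of_mul_eq_self_left hχ ?_
    simp only [Finset.mul_sum, ← MulChar.mul_apply]
    exact Fintype.sum_bijective _ (Group.mulLeft_bijective χ) _ _ fun χ' ↦ rfl

theorem X_mul_derivative_prod {ι : Type*} (s : Finset ι) (L S : ι → PowerSeries ℂ)
    (h : ∀ i, PowerSeries.X * PowerSeries.derivative ℂ (L i) = S i * L i) :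
    PowerSeries.X * PowerSeries.derivative ℂ (∏ i ∈ s, L i) = (∑ i ∈ s, S i) * ∏ i ∈ s, L i := by
  induction s using Finset.induction_on with
  | empty => simp
  | insert i s hi ih =>
    rw [Finset.prod_insert hi, Finset.sum_insert hi, Derivation.leibniz]
    simp only [smul_eq_mul]
    linear_combination L i * ih + (∏ i ∈ s, L i) * h i

variable {ψ χ} in
/-- `L(1/q, χ) ≠ 0` for every nontrivial `χ`. Otherwise the product of all `L`-series would be a
polynomial, the zero cancelling the pole of the principal series; but its logarithmic derivative is
a nonnegative combination of prime powers congruent to `1`, so infinitely many of its coefficients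
are positive. -/
theorem eval_ne_zero_of_eq_seriesL [Fintype R] {d : ℕ}
    (hψ : ∀ n, d ≤ n → ∀ r : R, ∃ f : F[X], f.degree < n ∧ ψ f = r)
    (hp : ∃ p : F[X], Irreducible p ∧ p.Monic ∧ IsUnit (ψ p))
    (hχ : χ ≠ 1) {P : ℂ[X]} (hP : (P : PowerSeries ℂ) = seriesL ψ χ) :
    P.eval (Fintype.card F : ℂ)⁻¹ ≠ 0 := by
  intro hzero
  set q : ℂ := (Fintype.card F : ℂ) with hq
  have hq0 : q ≠ 0 := by simp [hq]
  have : Fintype (MulChar R ℂ) := Fintype.ofFinite _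
  -- The simple zero of `P` cancels the pole of the principal series.
  obtain ⟨M, hM⟩ : (1 - C q * X) ∣ P := by
    obtain ⟨M, rfl⟩ := dvd_iff_isRoot.2 hzero
    refine ⟨C (-q⁻¹) * M, ?_⟩
    have : C q * C q⁻¹ = (1 : ℂ[X]) := by rw [← C_mul, mul_inv_cancel₀ hq0, C_1]
    rw [C_neg]
    linear_combination -X * M * this
  obtain ⟨E, hE, -⟩ := exists_polynomial_eq_seriesL_one ψ hψ
  choose Q hQ using fun (η : {η : MulChar R ℂ // η ≠ 1}) =>
    exists_polynomial_eq_seriesL ψ η.1 hψ η.2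
  set Z : PowerSeries ℂ := ∏ η : MulChar R ℂ, seriesL ψ η with hZdef
  have hZ : ∃ T : ℂ[X], (T : PowerSeries ℂ) = Z := by
    refine ⟨E * M * ∏ η ∈ (Finset.univ.erase 1).erase χ,
      if h : η ≠ 1 then Q ⟨η, h⟩ else 0, ?_⟩
    rw [hZdef, ← Finset.mul_prod_erase _ _ (Finset.mem_univ 1),
      ← Finset.mul_prod_erase _ _ (Finset.mem_erase.2 ⟨hχ, Finset.mem_univ χ⟩), ← hP, hM,
      coe_mul, coe_mul, coe_mul, hE]
    have : ((∏ η ∈ (Finset.univ.erase 1).erase χ, if h : η ≠ 1 then Q ⟨η, h⟩ else 0 : ℂ[X]) :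
        PowerSeries ℂ) = ∏ η ∈ (Finset.univ.erase 1).erase χ, seriesL ψ η := by
      rw [← coeToPowerSeries.ringHom_apply, map_prod]
      refine Finset.prod_congr rfl fun η hη => ?_
      have h1 : η ≠ 1 := (Finset.mem_erase.1 (Finset.mem_erase.1 hη).2).1
      rw [dif_pos h1, coeToPowerSeries.ringHom_apply, hQ]
    rw [this]
    ring
  obtain ⟨T, hT⟩ := hZ
  obtain ⟨p, hpi, hpm, hpu⟩ := hp
  have hcoeff : ∀ n, PowerSeries.coeff n (∑ η : MulChar R ℂ, seriesLogDeriv ψ η) =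
      ∑ x ∈ primePowers F n, (x.1.natDegree : ℂ) *
        if ψ x.1 ^ x.2 = 1 then (Fintype.card (MulChar R ℂ) : ℂ) else 0 := by
    intro n
    simp only [map_sum, seriesLogDeriv, PowerSeries.coeff_mk, coeffLogDeriv]
    rw [Finset.sum_comm]
    simp only [← Finset.mul_sum, sum_mulChar]
  have hterm : ∀ x : F[X] × ℕ, (0 : ℂ) ≤ (x.1.natDegree : ℂ) *
        if ψ x.1 ^ x.2 = 1 then (Fintype.card (MulChar R ℂ) : ℂ) else 0 := by
    intro x
    split_ifs
    · exact_mod_cast Nat.zero_le _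
    · simp
  set k := Fintype.card Rˣ with hk
  have hk0 : 0 < k := Fintype.card_pos
  have hm0 : 0 < k * p.natDegree := Nat.mul_pos hk0 hpi.natDegree_pos
  have key := coeff_pos_of_logDeriv (Z := Z) (S := ∑ η : MulChar R ℂ, seriesLogDeriv ψ η)
    (X_mul_derivative_prod _ _ _ fun η => X_mul_derivative_seriesL ψ η)
    (by simp [hZdef, map_prod, seriesL, coeffL_zero])
    (fun n => by rw [hcoeff]; exact Finset.sum_nonneg fun x _ => hterm x)
    hm0
    (by
      rw [hcoeff]
      refine lt_of_lt_of_le ?_ (Finset.single_le_sum (fun x _ => hterm x)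
        (mem_primePowers.2 ⟨hpi, hpm, hk0, rfl⟩ : (p, k) ∈ primePowers F _))
      have : ψ p ^ k = 1 := by
        rw [← hpu.unit_spec, ← Units.val_pow_eq_pow_val, hk, pow_card_eq_one, Units.val_one]
      rw [if_pos this]
      exact_mod_cast Nat.mul_pos hpi.natDegree_pos (Fintype.card_pos (α := MulChar R ℂ)))
    (T.natDegree + 1)
  rw [← hT, coeff_coe, coeff_eq_zero_of_natDegree_lt (by nlinarith)] at key
  exact lt_irrefl _ key

/-! ### Behaviour at 1/q and the count of primes in a class -/

/-- `S` is a rational function `W / (V (1 - qT))` with `V(1/q) ≠ 0` and `W(1/q) = r V(1/q)`; that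
is, `(1 - qT) S` is regular at `T = 1/q` with value `r`. -/
def HasResidue (q : ℂ) (S : PowerSeries ℂ) (r : ℂ) : Prop :=
  ∃ V W : ℂ[X], V.eval q⁻¹ ≠ 0 ∧ ((V * (1 - C q * X) : ℂ[X]) : PowerSeries ℂ) * S = W ∧
    W.eval q⁻¹ = r * V.eval q⁻¹

theorem HasResidue.add {q : ℂ} {S S' : PowerSeries ℂ} {r r' : ℂ} (h : HasResidue q S r)
    (h' : HasResidue q S' r') : HasResidue q (S + S') (r + r') := by
  obtain ⟨V, W, hV, hW, he⟩ := h
  obtain ⟨V', W', hV', hW', he'⟩ := h'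
  refine ⟨V * V', V' * W + V * W', ?_, ?_, ?_⟩
  · rw [eval_mul]; exact mul_ne_zero hV hV'
  · simp only [coe_add, coe_mul] at *
    linear_combination (V' : PowerSeries ℂ) * hW + (V : PowerSeries ℂ) * hW'
  · simp only [eval_add, eval_mul, he, he']; ring

theorem HasResidue.const_mul {q : ℂ} {S : PowerSeries ℂ} {r : ℂ} (h : HasResidue q S r) (c : ℂ) :
    HasResidue q (PowerSeries.C c * S) (c * r) := by
  obtain ⟨V, W, hV, hW, he⟩ := h
  refine ⟨V, C c * W, hV, ?_, ?_⟩
  · rw [coe_mul (C c), coe_C, ← hW]; ring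
  · rw [eval_mul, eval_C, he]; ring

theorem HasResidue.sum {q : ℂ} {ι : Type*} (s : Finset ι) (S : ι → PowerSeries ℂ) (r : ι → ℂ)
    (h : ∀ i, HasResidue q (S i) (r i)) : HasResidue q (∑ i ∈ s, S i) (∑ i ∈ s, r i) := by
  induction s using Finset.induction_on with
  | empty => exact ⟨1, 0, by simp, by simp, by simp⟩
  | insert i s hi ih =>
    rw [Finset.sum_insert hi, Finset.sum_insert hi]
    exact (h i).add ih

theorem tsum_coeff_mul_pow (W : ℂ[X]) (z : ℂ) :
    ∑' n, W.coeff n * z ^ n = W.eval z := by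
  rw [eval_eq_sum_range, tsum_eq_sum]
  intro n hn
  rw [coeff_eq_zero_of_natDegree_lt (by simpa using hn), zero_mul]

/-- A series converging absolutely at `1/q` has no pole there. -/
theorem HasResidue.eq_zero {q : ℂ} (hq : q ≠ 0) {S : PowerSeries ℂ} {r : ℂ} (h : HasResidue q S r)
    (hS : Summable fun n => ‖PowerSeries.coeff n S * q⁻¹ ^ n‖) : r = 0 := by
  obtain ⟨V, W, hV, hW, he⟩ := h
  set U := V * (1 - C q * X) with hU
  have hU0 : U.eval q⁻¹ = 0 := by simp [hU, hq]
  have hUs : Summable fun n => ‖U.coeff n * q⁻¹ ^ n‖ := by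
    refine summable_of_ne_finset_zero (s := Finset.range (U.natDegree + 1)) fun n hn => ?_
    rw [coeff_eq_zero_of_natDegree_lt (by simpa using hn), zero_mul, norm_zero]
  have key := tsum_mul_tsum_eq_tsum_sum_antidiagonal_of_summable_norm hUs hS
  have hconv : ∀ n, ∑ kl ∈ antidiagonal n,
      (U.coeff kl.1 * q⁻¹ ^ kl.1) * (PowerSeries.coeff kl.2 S * q⁻¹ ^ kl.2) =
      W.coeff n * q⁻¹ ^ n := by
    intro n
    rw [← coeff_coe, ← hW, PowerSeries.coeff_mul, Finset.sum_mul]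
    refine Finset.sum_congr rfl fun kl hkl => ?_
    rw [← mem_antidiagonal.1 hkl, pow_add, coeff_coe]
    ring
  simp only [hconv] at key
  rw [tsum_coeff_mul_pow, tsum_coeff_mul_pow, hU0, zero_mul, he] at key
  exact (mul_eq_zero.1 key.symm).resolve_right hV

/-- The nonvanishing at `1/q` of the nontrivial `L`-series confines the pole of `T L'/L` at `1/q` to
the trivial character. -/
theorem hasResidue_seriesLogDeriv [Fintype R] {d : ℕ}
    (hψ : ∀ n, d ≤ n → ∀ r : R, ∃ f : F[X], f.degree < n ∧ ψ f = r)
    (hp : ∃ p : F[X], Irreducible p ∧ p.Monic ∧ IsUnit (ψ p)) :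
    HasResidue (Fintype.card F : ℂ) (seriesLogDeriv ψ χ) (if χ = 1 then 1 else 0) := by
  have hq0 : (Fintype.card F : ℂ) ≠ 0 := by simp
  have hD := X_mul_derivative_seriesL ψ χ
  split_ifs with hχ
  · subst hχ
    obtain ⟨E, hE, hE0⟩ := exists_polynomial_eq_seriesL_one ψ hψ
    set q : ℂ := (Fintype.card F : ℂ) with hq
    refine ⟨E, (1 - C q * X) * (X * derivative E) + C q * X * E, hE0, ?_, ?_⟩
    · have hE' : PowerSeries.derivative ℂ (E : PowerSeries ℂ) = derivative E :=
        PowerSeries.derivative_coe E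
      have hl : ((1 - C q * X : ℂ[X]) : PowerSeries ℂ) = 1 - PowerSeries.C q * PowerSeries.X := by
        simp
      have hd : PowerSeries.derivative ℂ (E : PowerSeries ℂ) =
          (1 - PowerSeries.C q * PowerSeries.X) * PowerSeries.derivative ℂ (seriesL ψ 1)
            - PowerSeries.C q * seriesL ψ 1 := by
        rw [hE, hl, Derivation.leibniz, map_sub, Derivation.leibniz]
        simp only [smul_eq_mul, PowerSeries.derivative_X, PowerSeries.derivative_C,
          PowerSeries.derivative_one]
        ring
      rw [coe_add, coe_mul, coe_mul, coe_mul, ← hE', hd, coe_mul (C q * X), hE, hl]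
      simp only [coe_mul, coe_C, coe_X]
      linear_combination -(1 - PowerSeries.C q * PowerSeries.X) ^ 2 * hD
    · simp [hq0]
  · obtain ⟨P, hP⟩ := exists_polynomial_eq_seriesL ψ χ hψ hχ
    refine ⟨P, (1 - C (Fintype.card F : ℂ) * X) * (X * derivative P),
      eval_ne_zero_of_eq_seriesL hψ hp hχ hP, ?_, ?_⟩
    · rw [coe_mul, coe_mul, coe_mul, ← PowerSeries.derivative_coe, coe_X, hP, hD]
      ring
    · simp [hq0]

/-- Proper prime powers are rare: `p ^ k` with `k ≥ 2` and degree `n` is determined by `k` and a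
monic polynomial of degree `n / k ≤ n / 2`. -/
theorem card_filter_primePowers_le (n : ℕ) :
    ((primePowers F n).filter fun x => 2 ≤ x.2).card ≤ n * Fintype.card F ^ (n / 2) := by
  have hsub : ((primePowers F n).filter fun x => 2 ≤ x.2) ⊆
      (Finset.Icc 2 n).biUnion fun k => (monicOfDegree F (n / k)).image fun p => (p, k) := by
    rintro ⟨p, k⟩ hx
    obtain ⟨hx, hk⟩ := Finset.mem_filter.1 hx
    obtain ⟨hp, hm, -, h⟩ := mem_primePowers.1 hx
    simp only at hk h hp hm
    have := hp.natDegree_pos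
    simp only [Finset.mem_biUnion, Finset.mem_image, Finset.mem_Icc, mem_monicOfDegree, Prod.mk.injEq]
    refine ⟨k, ⟨hk, by nlinarith⟩, p, ⟨hm, ?_⟩, rfl, rfl⟩
    rw [← h, Nat.mul_div_cancel_left _ (by omega)]
  refine (Finset.card_le_card hsub).trans (Finset.card_biUnion_le.trans ?_)
  calc ∑ k ∈ Finset.Icc 2 n, ((monicOfDegree F (n / k)).image fun p => (p, k)).card
      ≤ ∑ k ∈ Finset.Icc 2 n, Fintype.card F ^ (n / 2) := by
        refine Finset.sum_le_sum fun k hk => Finset.card_image_le.trans ?_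
        rw [card_monicOfDegree]
        exact Nat.pow_le_pow_right Fintype.card_pos
          (Nat.div_le_div_left (Finset.mem_Icc.1 hk).1 (by norm_num))
    _ ≤ n * Fintype.card F ^ (n / 2) := by
        rw [Finset.sum_const, smul_eq_mul, Nat.card_Icc]
        exact Nat.mul_le_mul_right _ (by omega)

/-- The theorem for a surjection `ψ` onto a finite ring that identifies the residue classes: every
unit is the image of infinitely many monic irreducible polynomials. -/
theorem infinite_of_isUnit [Fintype R] {d : ℕ}
    (hψ : ∀ n, d ≤ n → ∀ r : R, ∃ f : F[X], f.degree < n ∧ ψ f = r)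
    (hp : ∃ p : F[X], Irreducible p ∧ p.Monic ∧ IsUnit (ψ p)) (u : Rˣ) :
    {p : F[X] | Irreducible p ∧ p.Monic ∧ ψ p = u}.Infinite := by
  intro hfin
  have : Fintype (MulChar R ℂ) := Fintype.ofFinite _
  set q : ℂ := (Fintype.card F : ℂ) with hq
  have hq0 : q ≠ 0 := by simp [hq]
  have hq1 : (1 : ℝ) < Fintype.card F := by exact_mod_cast Fintype.one_lt_card
  set S : PowerSeries ℂ := ∑ η : MulChar R ℂ,
    PowerSeries.C (η (u⁻¹ : Rˣ)) * seriesLogDeriv ψ η with hS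
  have hres : HasResidue q S 1 := by
    have := HasResidue.sum (q := q) Finset.univ
      (fun η : MulChar R ℂ => PowerSeries.C (η (u⁻¹ : Rˣ)) * seriesLogDeriv ψ η) _
      fun η => (hasResidue_seriesLogDeriv ψ η hψ hp).const_mul _
    convert this using 1
    simp
  -- It remains to see that finiteness would make `S`, a count of prime powers congruent to `u`,
  -- converge absolutely at `1/q`.
  refine one_ne_zero (hres.eq_zero hq0 ?_)
  have hcoeff : ∀ n, PowerSeries.coeff n S = ∑ x ∈ primePowers F n, (x.1.natDegree : ℂ) *
        if ψ x.1 ^ x.2 = u then (Fintype.card (MulChar R ℂ) : ℂ) else 0 := by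
    intro n
    simp only [hS, map_sum, PowerSeries.coeff_C_mul, seriesLogDeriv, PowerSeries.coeff_mk,
      coeffLogDeriv, Finset.mul_sum]
    rw [Finset.sum_comm]
    refine Finset.sum_congr rfl fun x _ => ?_
    have h1 : (ψ x.1 ^ x.2 = u) ↔ ((u⁻¹ : Rˣ) : R) * ψ x.1 ^ x.2 = 1 := by
      rw [Units.inv_mul_eq_one, eq_comm]
    rw [if_congr h1 rfl rfl, ← sum_mulChar, Finset.mul_sum]
    refine Finset.sum_congr rfl fun η _ => ?_
    rw [map_mul]
    ring
  set m : ℝ := (Fintype.card (MulChar R ℂ) : ℝ) with hm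
  set s : ℝ := √(Fintype.card F) with hs
  have hs1 : 1 < s := by rw [hs]; exact Real.lt_sqrt_of_sq_lt (by simpa using hq1)
  have hs2 : s ^ 2 = Fintype.card F := Real.sq_sqrt (by positivity)
  have hsum : Summable fun n : ℕ => m * ((n : ℝ) ^ 2 * s⁻¹ ^ n) := by
    refine (summable_pow_mul_geometric_of_norm_lt_one 2 ?_).mul_left m
    rw [Real.norm_of_nonneg (by positivity)]
    exact inv_lt_one_of_one_lt₀ hs1
  refine Summable.of_norm_bounded_eventually_nat hsum ?_
  obtain ⟨B, hB⟩ := (hfin.image natDegree).bddAbove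
  -- Beyond the largest degree `B` of the irreducibles congruent to `u`, only proper powers count.
  filter_upwards [Filter.eventually_gt_atTop B] with n hn
  have hbound : ‖PowerSeries.coeff n S‖ ≤ m * (n ^ 2 * s ^ n) := by
    rw [hcoeff, ← Finset.sum_filter_of_ne (p := fun x => 2 ≤ x.2)]
    · have hpow : ((Fintype.card F ^ (n / 2) : ℕ) : ℝ) ≤ s ^ n := by
        push_cast
        rw [← hs2, ← pow_mul]
        exact pow_le_pow_right₀ hs1.le (Nat.mul_div_le n 2)
      calc _ ≤ ∑ x ∈ (primePowers F n).filter fun x => 2 ≤ x.2, (n : ℝ) * m := by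
            refine norm_sum_le_of_le _ fun x hx => ?_
            obtain ⟨hxi, -, hk, hx'⟩ := mem_primePowers.1 (Finset.mem_filter.1 hx).1
            rw [norm_mul, Complex.norm_natCast]
            refine mul_le_mul ?_ ?_ (norm_nonneg _) (Nat.cast_nonneg _)
            · exact_mod_cast (by nlinarith : x.1.natDegree ≤ n)
            · split_ifs
              · rw [Complex.norm_natCast]
              · rw [norm_zero]; positivity
        _ = (((primePowers F n).filter fun x => 2 ≤ x.2).card : ℝ) * (n * m) := by
            rw [Finset.sum_const, nsmul_eq_mul]
        _ ≤ ((n * Fintype.card F ^ (n / 2) : ℕ) : ℝ) * (n * m) := by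
            refine mul_le_mul_of_nonneg_right ?_ (by positivity)
            exact_mod_cast card_filter_primePowers_le n
        _ ≤ (n * s ^ n) * (n * m) := by
            rw [Nat.cast_mul]
            gcongr
        _ = m * (n ^ 2 * s ^ n) := by ring
    · rintro ⟨p, k⟩ hx hne
      obtain ⟨hi, hmon, hk, hdeg⟩ := mem_primePowers.1 hx
      by_contra hk2
      simp only at hi hmon hk hdeg hk2 hne
      obtain rfl : k = 1 := by omega
      rw [pow_one] at hne
      have hu : ψ p = u := by
        by_contra h
        simp [h] at hne
      have := hB ⟨p, ⟨hi, hmon, hu⟩, rfl⟩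
      omega
  rw [norm_norm, norm_mul, norm_pow, norm_inv, hq, Complex.norm_natCast, ← hs2]
  calc _ ≤ m * (n ^ 2 * s ^ n) * (s ^ 2)⁻¹ ^ n := by gcongr
    _ = m * (n ^ 2 * s⁻¹ ^ n) := by
      have h1 : s ^ n * s⁻¹ ^ n = 1 := by
        rw [← mul_pow, mul_inv_cancel₀ (by positivity), one_pow]
      rw [← inv_pow, ← pow_mul, mul_comm 2 n, pow_mul, sq (s⁻¹ ^ n)]
      linear_combination m * n ^ 2 * s⁻¹ ^ n * h1

end L
end Kornblum


/-- (Kornblum) Let `F` be a finite field and let `a, b ∈ F[X]` be relatively prime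
polynomials with `a ≠ 0`.  Then there are infinitely many irreducible polynomials
`p ∈ F[X]` with `p ≡ b (mod a)`. -/
theorem kornblum_dirichlet_for_polynomials
    (F : Type*) [Field F] [Fintype F] (a b : Polynomial F)
    (hab : IsCoprime a b) (ha : a ≠ 0) :
    {p : Polynomial F | Irreducible p ∧ a ∣ (p - b)}.Infinite := by
  open Polynomial in
  let ψ : F[X] →+* F[X] ⧸ Ideal.span {a} := Ideal.Quotient.mk _
  have hψa : ψ a = 0 := Ideal.Quotient.eq_zero_iff_mem.2 (Ideal.mem_span_singleton_self a)
  have hrep : ∀ n, a.natDegree ≤ n → ∀ r, ∃ f : F[X], f.degree < n ∧ ψ f = r := by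
    intro n hn r
    obtain ⟨f, rfl⟩ := Ideal.Quotient.mk_surjective r
    refine ⟨f % a, (EuclideanDomain.mod_lt f ha).trans_le ?_, ?_⟩
    · exact degree_le_natDegree.trans (by exact_mod_cast hn)
    · have h := congrArg ψ (EuclideanDomain.div_add_mod f a)
      rwa [map_add, map_mul, hψa, zero_mul, zero_add] at h
  have hfinite : Finite (F[X] ⧸ Ideal.span {a}) := by
    refine Finite.of_surjective (fun v : Fin a.natDegree → F =>
      ψ ((degreeLTEquiv F a.natDegree).symm v : F[X])) fun r => ?_
    obtain ⟨f, hf, rfl⟩ := hrep _ le_rfl r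
    exact ⟨degreeLTEquiv F _ ⟨f, mem_degreeLT.2 hf⟩, by simp⟩
  have : Fintype (F[X] ⧸ Ideal.span {a}) := Fintype.ofFinite _
  -- Any irreducible factor of `1 + a * X` is invertible modulo `a`.
  have hprime : ∃ p : F[X], Irreducible p ∧ p.Monic ∧ IsUnit (ψ p) := by
    have hdeg : 0 < (a * X + 1).natDegree := by
      rw [← C_1, natDegree_add_C, natDegree_mul_X ha]; omega
    obtain ⟨p, hm, hi, c, hc⟩ := exists_monic_irreducible_factor (a * X + 1)
      fun h => hdeg.ne' (natDegree_eq_zero_of_isUnit h)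
    refine ⟨p, hi, hm, IsUnit.of_mul_eq_one (ψ c) ?_⟩
    rw [← map_mul, ← hc, map_add, map_mul, hψa, zero_mul, zero_add, map_one]
  have hb : IsUnit (ψ b) := by
    obtain ⟨x, y, hxy⟩ := hab
    refine IsUnit.of_mul_eq_one (ψ y) ?_
    have := congrArg ψ hxy
    rwa [map_add, map_mul, map_mul, hψa, mul_zero, zero_add, map_one, mul_comm] at this
  refine (Kornblum.infinite_of_isUnit ψ hrep hprime hb.unit).mono ?_
  rintro p ⟨hi, -, hpb⟩
  exact ⟨hi, Ideal.mem_span_singleton.1 (Ideal.Quotient.eq.1 hpb)⟩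
end
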